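/- Let d ∈ {1,2,3} and ν > 0. Let h₀ : ℝ^d → ℝ be 2π-periodic in each coordinate with ∫_{[−π,π]^d} h₀ dx = 0 and Σ_{k ∈ ℤ^d} (1+|k|^d)|ĥ₀(k)|² < ∞ (i.e. h₀ ∈ H^{d/2}(𝕋^d) with mean zero). Then there exists h : [0,∞) × ℝ^d → ℝ, 2π-periodic in each spatial coordinate, such that h(t,·) is C^∞ for every t > 0, h is a classical solution of ∂_t h = ∇·((|∇h|² − 1)∇h) − νΔ²h on (0,∞) × ℝ^d, ‖h(t,·) − h₀‖_{H^{d/2}} → 0 as t → 0⁺, and ∫_{[−π,π]^d} h(t,·) dx = 0 for every t > 0. -/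

import Mathlib

open Real MeasureTheory Set Filter
open scoped ENNReal

noncomputable section

/-- `ℝ^d` with the Euclidean norm. -/
abbrev Ed (d : ℕ) := EuclideanSpace ℝ (Fin d)

/-- The fundamental domain `[-π,π]^d` of the torus `𝕋^d = ℝ^d/2πℤ^d`. -/
def Qd (d : ℕ) : Set (Ed d) := {x | ∀ i, |x i| ≤ Real.pi}

/-- The partial derivative `∂_{x_j} f` of `f : ℝ^d → ℝ`. -/
noncomputable def pd {d : ℕ} (f : Ed d → ℝ) (j : Fin d) (x : Ed d) : ℝ :=
  fderiv ℝ f x (EuclideanSpace.single j 1)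

/-- `|∇f|²`, the squared Euclidean norm of the spatial gradient. -/
noncomputable def gradSq {d : ℕ} (f : Ed d → ℝ) (x : Ed d) : ℝ := ∑ j, pd f j x ^ 2

/-- `|∇f|`, the Euclidean norm of the spatial gradient. -/
noncomputable def gradNorm {d : ℕ} (f : Ed d → ℝ) (x : Ed d) : ℝ := Real.sqrt (gradSq f x)

/-- The Laplacian `Δf = Σ_j ∂_{x_j}∂_{x_j} f`. -/
noncomputable def lapl {d : ℕ} (f : Ed d → ℝ) (x : Ed d) : ℝ := ∑ j, pd (pd f j) j x

/-- The slope-selection divergence term `∇·((|∇f|²−1)∇f) = Σ_j ∂_{x_j}((|∇f|²−1)∂_{x_j}f)`. -/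
noncomputable def slopeDiv {d : ℕ} (f : Ed d → ℝ) (x : Ed d) : ℝ :=
  ∑ j, pd (fun y => (gradSq f y - 1) * pd f j y) j x

/-- `f` is `2π`-periodic in each coordinate. -/
def PeriodicSpace {d : ℕ} (f : Ed d → ℝ) : Prop :=
  ∀ (j : Fin d) (x : Ed d), f (x + (2 * Real.pi) • EuclideanSpace.single j 1) = f x

/-- The Fourier coefficient `f̂(k) = ∫_{[−π,π]^d} f(x) e^{−i k·x} dx` of a
`2π`-periodic function `f : ℝ^d → ℝ`, for `k ∈ ℤ^d`. -/
noncomputable def fcoefR {d : ℕ} (f : Ed d → ℝ) (k : Fin d → ℤ) : ℂ :=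
  ∫ x in Qd d, (f x : ℂ) * Complex.exp (-(Complex.I * ∑ i, (k i : ℂ) * (x i : ℂ)))

/-- The Sobolev weight `1 + |k|^d` (with `|k|` the Euclidean norm of `k ∈ ℤ^d`). -/
noncomputable def sobWeight {d : ℕ} (k : Fin d → ℤ) : ℝ :=
  1 + Real.sqrt (∑ i, ((k i : ℝ)) ^ 2) ^ d

/-- The `H^{d/2}(𝕋^d)` norm `(Σ_k (1+|k|^d)|f̂(k)|²)^{1/2}`. -/
noncomputable def hnormR {d : ℕ} (f : Ed d → ℝ) : ℝ :=
  Real.sqrt (∑' k : Fin d → ℤ, sobWeight k * ‖fcoefR f k‖ ^ 2)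

set_option linter.unusedSimpArgs false
set_option linter.unusedVariables false
local notation "cj" => starRingEnd ℂ
abbrev KK (d : ℕ) := Fin d → ℤ

def vv {d : ℕ} (k : KK d) : Ed d := WithLp.toLp 2 fun i => (k i : ℝ)
def kn {d : ℕ} (k : KK d) : ℝ := ‖vv k‖
def kdot {d : ℕ} (k l : KK d) : ℝ := ∑ i, (k i : ℝ) * (l i : ℝ)
def rr {d : ℕ} (k : KK d) : ℝ := Real.sqrt (Real.sqrt (kn k))
def ee {d : ℕ} (k : KK d) (x : Ed d) : ℂ := Complex.exp (Complex.I * ∑ i, (k i : ℂ) * (x i : ℂ))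

section basics
variable {d : ℕ}

lemma kn_nonneg (k : KK d) : 0 ≤ kn k := norm_nonneg _
lemma vv_add (k l : KK d) : vv (k + l) = vv k + vv l := by
  ext i; simp [vv]
lemma vv_sub (k l : KK d) : vv (k - l) = vv k - vv l := by
  ext i; simp [vv]
lemma vv_neg (k : KK d) : vv (-k) = -vv k := by
  ext i; simp [vv]
lemma kn_add_le (k l : KK d) : kn (k + l) ≤ kn k + kn l := by
  unfold kn; rw [vv_add]; exact norm_add_le _ _
lemma kn_sub_le (k l : KK d) : kn (k - l) ≤ kn k + kn l := by
  unfold kn; rw [vv_sub]; exact norm_sub_le _ _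
lemma kn_neg (k : KK d) : kn (-k) = kn k := by
  unfold kn; rw [vv_neg]; exact norm_neg _
lemma kn_eq (k : KK d) : kn k = Real.sqrt (∑ i, (k i : ℝ) ^ 2) := by
  unfold kn vv; rw [EuclideanSpace.norm_eq]; simp
lemma kn_sq (k : KK d) : kn k ^ 2 = ∑ i, (k i : ℝ) ^ 2 := by
  rw [kn_eq, Real.sq_sqrt]; positivity
lemma sobWeight_eq (k : KK d) : sobWeight k = 1 + kn k ^ d := by
  rw [kn_eq]; rfl
lemma kdot_self (k : KK d) : kdot k k = kn k ^ 2 := by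
  rw [kn_sq, kdot]; congr 1; ext i; ring
lemma kdot_comm (k l : KK d) : kdot k l = kdot l k := by
  unfold kdot; congr 1; ext i; ring
lemma kdot_abs_le (k l : KK d) : |kdot k l| ≤ kn k * kn l := by
  have h := abs_real_inner_le_norm (vv k) (vv l)
  have : inner ℝ (vv k) (vv l) = kdot k l := by
    simp [vv, kdot, PiLp.inner_apply, mul_comm]
  rw [this] at h; exact h
lemma abs_le_kn (k : KK d) (i : Fin d) : |(k i : ℝ)| ≤ kn k := by
  have := PiLp.norm_apply_le (vv k) i
  simpa [vv, kn] using this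
lemma kn_zero : kn (0 : KK d) = 0 := by
  rw [kn_eq]; simp
lemma one_le_kn {k : KK d} (hk : k ≠ 0) : 1 ≤ kn k := by
  obtain ⟨i, hi⟩ := Function.ne_iff.mp hk
  refine le_trans ?_ (abs_le_kn k i)
  have : 1 ≤ |k i| := Int.one_le_abs hi
  exact_mod_cast this
lemma rr_nonneg (k : KK d) : 0 ≤ rr k := Real.sqrt_nonneg _
lemma rr_pow4 (k : KK d) : rr k ^ 4 = kn k := by
  unfold rr
  rw [show (4:ℕ) = 2 * 2 from rfl, pow_mul, Real.sq_sqrt (Real.sqrt_nonneg _),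
    Real.sq_sqrt (kn_nonneg k)]
lemma one_le_rr {k : KK d} (hk : k ≠ 0) : 1 ≤ rr k := by
  by_contra h
  push Not at h
  have := pow_lt_one₀ (rr_nonneg k) h (n := 4) (by norm_num)
  rw [rr_pow4] at this
  linarith [one_le_kn hk]
lemma rr_neg (k : KK d) : rr (-k) = rr k := by unfold rr; rw [kn_neg]
lemma rr_le_of_kn {k : KK d} {r : ℝ} (hr : 0 ≤ r) (h : kn k ≤ r ^ 4) : rr k ≤ r := by
  rw [← rr_pow4] at h
  exact le_of_pow_le_pow_left₀ (by norm_num) hr h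

lemma ee_norm (k : KK d) (x : Ed d) : ‖ee k x‖ = 1 := by
  unfold ee
  have : (∑ i, (k i : ℂ) * (x i : ℂ)) = ((∑ i, (k i : ℝ) * (x i : ℝ) : ℝ) : ℂ) := by
    push_cast; rfl
  rw [this, mul_comm, Complex.norm_exp_ofReal_mul_I]
lemma ee_add (k l : KK d) (x : Ed d) : ee (k + l) x = ee k x * ee l x := by
  unfold ee
  rw [← Complex.exp_add, ← mul_add, ← Finset.sum_add_distrib]
  congr 2; apply Finset.sum_congr rfl; intro i _; simp; ring
lemma ee_neg (k : KK d) (x : Ed d) : ee (-k) x = (starRingEnd ℂ) (ee k x) := by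
  unfold ee
  rw [← Complex.exp_conj]
  congr 1; simp
lemma ee_sub (k l : KK d) (x : Ed d) : ee (k - l) x = ee k x * (starRingEnd ℂ) (ee l x) := by
  rw [sub_eq_add_neg, ee_add, ee_neg]
lemma ee_zero (x : Ed d) : ee (0 : KK d) x = 1 := by simp [ee]
lemma ee_continuous (k : KK d) : Continuous (ee k) := by
  unfold ee; fun_prop

lemma Qd_eq : Qd d = (WithLp.ofLp) ⁻¹' (Set.univ.pi fun _ => Set.Icc (-π) π) := by
  ext x; simp [Qd, abs_le, Pi.le_def, forall_and]
lemma Qd_compact : IsCompact (Qd d) := by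
  rw [Qd_eq]
  have := (isCompact_univ_pi (fun _ : Fin d => isCompact_Icc (a := -π) (b := π)))
  exact (EuclideanSpace.equiv (Fin d) ℝ).toHomeomorph.isCompact_preimage.mpr this
lemma Qd_meas : MeasurableSet (Qd d) := Qd_compact.measurableSet

lemma cont_int {f : Ed d → ℂ} (hf : Continuous f) : IntegrableOn f (Qd d) :=
  hf.continuousOn.integrableOn_compact Qd_compact
lemma cont_intR {f : Ed d → ℝ} (hf : Continuous f) : IntegrableOn f (Qd d) :=
  hf.continuousOn.integrableOn_compact Qd_compact

lemma int_ee1 (n : ℤ) : ∫ x in Set.Icc (-π) π, Complex.exp (Complex.I * ((n : ℂ) * (x : ℂ)))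
    = if n = 0 then ((2 * π : ℝ) : ℂ) else 0 := by
  rw [integral_Icc_eq_integral_Ioc, ← intervalIntegral.integral_of_le (by linarith [Real.pi_pos])]
  split_ifs with h
  · subst h; simp; ring
  · have hc : Complex.I * (n : ℂ) ≠ 0 := by simp [h]
    have := integral_exp_mul_complex (a := -π) (b := π) hc
    simp only [← mul_assoc]
    rw [this, div_eq_zero_iff]; left
    rw [sub_eq_zero, Complex.exp_eq_exp_iff_exists_int]
    refine ⟨n, ?_⟩
    push_cast; ring

lemma int_ee (k : KK d) : ∫ x in Qd d, ee k x = if k = 0 then (((2 * π) ^ d : ℝ) : ℂ) else 0 := by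
  have h1 : ∫ x in Qd d, ee k x = ∫ y in (Set.univ.pi fun _ : Fin d => Set.Icc (-π) π),
      ∏ i, Complex.exp (Complex.I * ((k i : ℂ) * (y i : ℂ))) := by
    rw [Qd_eq, ← (PiLp.volume_preserving_ofLp (Fin d)).setIntegral_preimage_emb
      (MeasurableEquiv.toLp 2 _).symm.measurableEmbedding]
    congr 1; ext x
    rw [ee, Finset.mul_sum, Complex.exp_sum]
  rw [h1, volume_pi, Measure.restrict_pi_pi]
  rw [integral_fintype_prod_eq_prod (fun i (y : ℝ) => Complex.exp (Complex.I * ((k i : ℂ) * (y : ℂ))))]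
  simp_rw [int_ee1]
  split_ifs with h
  · subst h; simp
  · obtain ⟨i, hi⟩ := Function.ne_iff.mp h
    exact Finset.prod_eq_zero (Finset.mem_univ i) (by simpa using hi)

/-! shells -/
def sh (k : KK d) : ℕ := Nat.log 2 ⌊rr k⌋₊
lemma sh_le {k : KK d} (hk : k ≠ 0) : (2:ℝ) ^ sh k ≤ rr k := by
  have h1 : ⌊rr k⌋₊ ≠ 0 := by
    have := Nat.le_floor (n := 1) (by exact_mod_cast one_le_rr hk); omega
  have := Nat.pow_log_le_self 2 h1
  calc (2:ℝ) ^ sh k = ((2 ^ sh k : ℕ) : ℝ) := by push_cast; rfl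
    _ ≤ (⌊rr k⌋₊ : ℝ) := by exact_mod_cast this
    _ ≤ rr k := Nat.floor_le (rr_nonneg k)
lemma lt_sh (k : KK d) : rr k < 2 ^ (sh k + 1) := by
  have h1 := Nat.lt_pow_succ_log_self (b := 2) (by norm_num) ⌊rr k⌋₊
  calc rr k < ⌊rr k⌋₊ + 1 := Nat.lt_floor_add_one _
    _ ≤ ((2 ^ (sh k + 1) : ℕ) : ℝ) := by exact_mod_cast h1
    _ = _ := by push_cast; rfl

lemma shell_card (F : Finset (KK d)) (i : ℕ) :
    (((F.filter fun k => sh k = i).card : ℕ) : ℝ) ≤ 48 ^ d * 2 ^ (4 * d * i) := by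
  have hsub : (F.filter fun k => sh k = i) ⊆
      Fintype.piFinset (fun _ : Fin d => Finset.Icc (-(16 ^ (i+1) : ℤ)) (16 ^ (i+1))) := by
    intro k hk
    simp only [Finset.mem_filter] at hk
    rw [Fintype.mem_piFinset]
    intro j
    have h1 := lt_sh k
    rw [hk.2] at h1
    have h2 : kn k ≤ (16:ℝ) ^ (i+1) := by
      rw [← rr_pow4]
      calc rr k ^ 4 ≤ (2 ^ (i+1)) ^ 4 := pow_le_pow_left₀ (rr_nonneg k) h1.le 4
        _ = 16 ^ (i+1) := by rw [← pow_mul, mul_comm, pow_mul]; norm_num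
    have h3 := (abs_le_kn k j).trans h2
    have h4 : |k j| ≤ 16 ^ (i+1) := by exact_mod_cast h3
    rw [Finset.mem_Icc]; exact abs_le.mp h4
  have h := Finset.card_le_card hsub
  rw [Fintype.card_piFinset] at h
  simp only [Int.card_Icc, Finset.prod_const, Finset.card_univ, Fintype.card_fin] at h
  have e : ((16:ℤ) ^ (i+1) + 1 - -16 ^ (i+1)).toNat = 2 * 16 ^ (i+1) + 1 := by
    have : ((16:ℤ) ^ (i+1) + 1 - -16 ^ (i+1)) = ((2 * 16 ^ (i+1) + 1 : ℕ) : ℤ) := by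
      push_cast; ring
    rw [this, Int.toNat_natCast]
  rw [e] at h
  calc (((F.filter fun k => sh k = i).card : ℕ) : ℝ) ≤ ((2 * 16 ^ (i+1) + 1 : ℕ) : ℝ) ^ d := by
        exact_mod_cast h
    _ ≤ (48 * 16 ^ i) ^ d := by
        apply pow_le_pow_left₀ (by positivity)
        push_cast
        have : (1:ℝ) ≤ 16 ^ i := one_le_pow₀ (by norm_num)
        rw [pow_succ]; linarith
    _ = _ := by
        rw [mul_pow, ← pow_mul, show (16:ℝ) = 2 ^ 4 by norm_num, ← pow_mul]
        ring_nf

lemma shell_sum (F : Finset (KK d)) (f : KK d → ℝ) (A : ℕ → ℝ) (I : ℕ)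
    (hA : ∀ i, 0 ≤ A i) (hI : ∀ k ∈ F, sh k < I) (hf : ∀ k ∈ F, f k ≤ A (sh k)) :
    ∑ k ∈ F, f k ≤ ∑ i ∈ Finset.range I, 48 ^ d * 2 ^ (4 * d * i) * A i := by
  rw [← Finset.sum_fiberwise_of_maps_to (g := sh) (t := Finset.range I)
    (fun k hk => Finset.mem_range.mpr (hI k hk))]
  apply Finset.sum_le_sum
  intro i _
  calc ∑ k ∈ F with sh k = i, f k ≤ ∑ k ∈ F with sh k = i, A i := by
        apply Finset.sum_le_sum
        intro k hk
        rw [Finset.mem_filter] at hk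
        rw [← hk.2]; exact hf k hk.1
    _ = ((F.filter fun k => sh k = i).card : ℝ) * A i := by simp
    _ ≤ _ := mul_le_mul_of_nonneg_right (shell_card F i) (hA i)

lemma exists_sh_bound (F : Finset (KK d)) : ∃ I, ∀ k ∈ F, sh k < I := by
  refine ⟨F.sup sh + 1, fun k hk => ?_⟩
  have := Finset.le_sup (f := sh) hk
  omega

lemma sum_rr14 (hd : d ≤ 3) (F : Finset (KK d)) (h0 : (0 : KK d) ∉ F) :
    ∑ k ∈ F, (rr k ^ 14)⁻¹ ≤ 2 * 48 ^ 3 := by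
  obtain ⟨I, hI⟩ := exists_sh_bound F
  refine (shell_sum F _ (fun i => ((2 ^ i) ^ 14)⁻¹) I (fun i => by positivity) hI ?_).trans ?_
  · intro k hk
    have hk0 : k ≠ 0 := fun h => h0 (h ▸ hk)
    apply inv_anti₀ (by positivity)
    exact pow_le_pow_left₀ (by positivity) (sh_le hk0) _
  · have : ∀ i ∈ Finset.range I, (48:ℝ) ^ d * 2 ^ (4 * d * i) * ((2 ^ i) ^ 14)⁻¹
        ≤ 48 ^ 3 * (1 / 2) ^ i := by
      intro i _
      rw [mul_assoc]
      apply mul_le_mul _ _ (by positivity) (by positivity)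
      · exact pow_le_pow_right₀ (by norm_num) hd
      · rw [← div_eq_mul_inv, div_le_iff₀ (by positivity), one_div, inv_pow,
          inv_mul_eq_div, le_div_iff₀ (by positivity), ← pow_add, ← pow_mul]
        apply pow_le_pow_right₀ (by norm_num)
        nlinarith
    refine (Finset.sum_le_sum this).trans ?_
    rw [← Finset.mul_sum, mul_comm]
    apply mul_le_mul_of_nonneg_right _ (by positivity)
    have := sum_geometric_two_le I
    simpa using this

lemma geomq_le (q : ℝ) (hq : 2 ≤ q) (j : ℕ) : ∑ i ∈ Finset.range (j+1), q ^ i ≤ 2 * q ^ j := by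
  induction j with
  | zero => simp
  | succ n ih =>
    rw [Finset.sum_range_succ]
    have : q ^ (n+1) = q * q ^ n := by ring
    have h2 : 0 ≤ q ^ n := by positivity
    nlinarith

lemma sum_rrJ (hd : d ≤ 3) (F : Finset (KK d)) (h0 : (0 : KK d) ∉ F) (j : ℕ)
    (hF : ∀ k ∈ F, rr k < 2 ^ (j+1)) :
    ∑ k ∈ F, rr k ^ 14 / rr k ^ (8 * d) ≤ 2 * 48 ^ 3 * 2 ^ 14 * 2 ^ (j * (14 - 4 * d)) := by
  have hI : ∀ k ∈ F, sh k < j + 1 := by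
    intro k hk
    have hk0 : k ≠ 0 := fun h => h0 (h ▸ hk)
    have := (sh_le hk0).trans_lt (hF k hk)
    exact (pow_lt_pow_iff_right₀ (by norm_num : (1:ℝ) < 2)).mp this
  refine (shell_sum F _ (fun i => (2 ^ (i+1)) ^ 14 / (2 ^ i) ^ (8 * d)) (j+1)
    (fun i => by positivity) hI ?_).trans ?_
  · intro k hk
    have hk0 : k ≠ 0 := fun h => h0 (h ▸ hk)
    apply div_le_div₀ (by positivity) _ (by positivity)
    · exact pow_le_pow_left₀ (by positivity) (sh_le hk0) _
    · exact pow_le_pow_left₀ (rr_nonneg k) (lt_sh k).le _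
  · have : ∀ i ∈ Finset.range (j+1), (48:ℝ) ^ d * 2 ^ (4 * d * i) * ((2 ^ (i+1)) ^ 14 / (2 ^ i) ^ (8 * d))
        ≤ 48 ^ 3 * 2 ^ 14 * (2 ^ (14 - 4 * d)) ^ i := by
      intro i _
      have e : (2:ℝ) ^ (4 * d * i) * ((2 ^ (i+1)) ^ 14 / (2 ^ i) ^ (8 * d))
          = 2 ^ 14 * (2 ^ (14 - 4 * d)) ^ i := by
        rw [← pow_mul, ← pow_mul, ← pow_mul, mul_div_assoc', div_eq_iff (by positivity), ← pow_add,
          ← pow_add, ← pow_add]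
        congr 1
        interval_cases d <;> omega
      rw [mul_assoc, e, mul_assoc]
      apply mul_le_mul_of_nonneg_right _ (by positivity)
      exact pow_le_pow_right₀ (by norm_num) hd
    refine (Finset.sum_le_sum this).trans ?_
    rw [← Finset.mul_sum]
    have hq : (2:ℝ) ≤ 2 ^ (14 - 4 * d) := by
      calc (2:ℝ) = 2 ^ 1 := by norm_num
        _ ≤ _ := pow_le_pow_right₀ (by norm_num) (by omega)
    have := geomq_le _ hq j
    rw [← pow_mul, mul_comm _ j] at this
    calc _ ≤ (48:ℝ) ^ 3 * 2 ^ 14 * (2 * 2 ^ (j * (14 - 4 * d))) :=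
          mul_le_mul_of_nonneg_left this (by positivity)
      _ = _ := by ring

end basics


def NL {d : ℕ} (S : Finset (KK d)) (c : KK d → ℂ) (k : KK d) : ℂ :=
  ∑ a ∈ S, ∑ b ∈ S, ∑ m ∈ S, if a - b + m = k then
    ((kdot a b * kdot m k : ℝ) : ℂ) * c a * cj (c b) * c m else 0
def gr {d : ℕ} (S : Finset (KK d)) (c : KK d → ℂ) (j : Fin d) (x : Ed d) : ℂ :=
  ∑ a ∈ S, Complex.I * (a j : ℂ) * c a * ee a x
def gn2 {d : ℕ} (S : Finset (KK d)) (c : KK d → ℂ) (x : Ed d) : ℝ :=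
  ∑ j, ‖gr S c j x‖ ^ 2
def pr {d : ℕ} (S : Finset (KK d)) (u v : KK d → ℂ) : ℝ :=
  (∑ k ∈ S, u k * cj (v k)).re
def Jf {d : ℕ} (S : Finset (KK d)) (c : KK d → ℂ) : ℝ := (1/4) * pr S (NL S c) c
def n2 {d : ℕ} (S : Finset (KK d)) (c : KK d → ℂ) : ℝ := ∑ k ∈ S, ‖c k‖ ^ 2
def n2w {d : ℕ} (S : Finset (KK d)) (p : ℕ) (c : KK d → ℂ) : ℝ := ∑ k ∈ S, kn k ^ p * ‖c k‖ ^ 2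

section NLsec
variable {d : ℕ} (S : Finset (KK d))

lemma gr_continuous (c : KK d → ℂ) (j : Fin d) : Continuous (gr S c j) := by
  unfold gr
  exact continuous_finsetSum _ fun a _ => continuous_const.mul (ee_continuous a)
lemma gn2_continuous (c : KK d → ℂ) : Continuous (gn2 S c) := by
  unfold gn2
  exact continuous_finsetSum _ fun a _ => ((gr_continuous S c a).norm.pow 2)
lemma gn2_nonneg (c : KK d → ℂ) (x : Ed d) : 0 ≤ gn2 S c x := by unfold gn2; positivity

lemma kdot_ofReal (a b : KK d) : ((kdot a b : ℝ) : ℂ) = ∑ i, (a i : ℂ) * (b i : ℂ) := by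
  unfold kdot; push_cast; rfl

lemma flux_eq (c z : KK d → ℂ) (x : Ed d) : ∑ j, gr S c j x * cj (gr S z j x)
    = ∑ m ∈ S, ∑ k ∈ S, (kdot m k : ℂ) * c m * cj (z k) * ee (m - k) x := by
  unfold gr
  simp_rw [map_sum, Finset.sum_mul_sum]
  rw [Finset.sum_comm]
  refine Finset.sum_congr rfl fun m _ => ?_
  rw [Finset.sum_comm]
  refine Finset.sum_congr rfl fun k _ => ?_
  rw [kdot_ofReal, ee_sub, Finset.sum_mul, Finset.sum_mul, Finset.sum_mul]
  refine Finset.sum_congr rfl fun j _ => ?_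
  simp only [map_mul, Complex.conj_I, map_intCast]
  linear_combination (-(m j : ℂ) * c m * ee m x * (k j : ℂ) * cj (z k) * cj (ee k x)) * Complex.I_sq

lemma gn2_flux (c : KK d → ℂ) (x : Ed d) : (gn2 S c x : ℂ) = ∑ j, gr S c j x * cj (gr S c j x) := by
  unfold gn2; push_cast
  refine Finset.sum_congr rfl fun j _ => ?_
  rw [Complex.mul_conj, Complex.normSq_eq_norm_sq]; push_cast; rfl

lemma bridge (c z : KK d → ℂ) :
    ∫ x in Qd d, (gn2 S c x : ℂ) * ∑ j, gr S c j x * cj (gr S z j x)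
     = (((2 * π) ^ d : ℝ) : ℂ) * ∑ k ∈ S, NL S c k * cj (z k) := by
  have h1 : ∀ x, (gn2 S c x : ℂ) * ∑ j, gr S c j x * cj (gr S z j x)
      = ∑ a ∈ S, ∑ b ∈ S, ∑ m ∈ S, ∑ k ∈ S,
        (((kdot a b * kdot m k : ℝ) : ℂ) * c a * cj (c b) * c m * cj (z k)) * ee (a - b + m - k) x := by
    intro x
    rw [gn2_flux, flux_eq, flux_eq, Finset.sum_mul]
    refine Finset.sum_congr rfl fun a _ => ?_
    rw [Finset.sum_mul]
    refine Finset.sum_congr rfl fun b _ => ?_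
    rw [Finset.mul_sum]
    refine Finset.sum_congr rfl fun m _ => ?_
    rw [Finset.mul_sum]
    refine Finset.sum_congr rfl fun k _ => ?_
    rw [show a - b + m - k = (a - b) + (m - k) by abel, ee_add]
    push_cast; ring
  simp_rw [h1]
  have ci : ∀ (C : ℂ) (k : KK d), IntegrableOn (fun x => C * ee k x) (Qd d) := fun C k =>
    cont_int (continuous_const.mul (ee_continuous k))
  rw [integral_finsetSum]
  swap
  · intro a _
    refine integrable_finsetSum _ fun b _ => integrable_finsetSum _ fun m _ =>
      integrable_finsetSum _ fun k _ => ci _ _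
  have h2 : ∀ a ∈ S, (∫ x in Qd d, ∑ b ∈ S, ∑ m ∈ S, ∑ k ∈ S,
        (((kdot a b * kdot m k : ℝ) : ℂ) * c a * cj (c b) * c m * cj (z k)) * ee (a - b + m - k) x)
      = ∑ b ∈ S, ∑ m ∈ S, ∑ k ∈ S, (((2 * π) ^ d : ℝ) : ℂ) * ((if a - b + m = k then
        ((kdot a b * kdot m k : ℝ) : ℂ) * c a * cj (c b) * c m else 0) * cj (z k)) := by
    intro a _
    rw [integral_finsetSum _ (fun b _ => integrable_finsetSum _ fun m _ =>
      integrable_finsetSum _ fun k _ => ci _ _)]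
    refine Finset.sum_congr rfl fun b _ => ?_
    rw [integral_finsetSum _ (fun m _ => integrable_finsetSum _ fun k _ => ci _ _)]
    refine Finset.sum_congr rfl fun m _ => ?_
    rw [integral_finsetSum _ (fun k _ => ci _ _)]
    refine Finset.sum_congr rfl fun k _ => ?_
    rw [integral_const_mul, int_ee]
    simp only [sub_eq_zero]
    split_ifs <;> ring
  rw [Finset.sum_congr rfl h2]
  simp_rw [← Finset.mul_sum]
  congr 1
  unfold NL
  simp_rw [Finset.sum_mul]
  rw [eq_comm, Finset.sum_comm]
  refine Finset.sum_congr rfl fun a _ => ?_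
  rw [Finset.sum_comm]
  refine Finset.sum_congr rfl fun b _ => ?_
  rw [Finset.sum_comm]

lemma bridgeR (c z : KK d → ℂ) :
    ∫ x in Qd d, gn2 S c x * (∑ j, gr S c j x * cj (gr S z j x)).re
     = (2 * π) ^ d * pr S (NL S c) z := by
  have h := congrArg Complex.re (bridge S c z)
  rw [Complex.re_ofReal_mul] at h
  unfold pr
  rw [← h]
  have hi : IntegrableOn (fun x => (gn2 S c x : ℂ) * ∑ j, gr S c j x * cj (gr S z j x)) (Qd d) := by
    apply cont_int
    apply (Complex.continuous_ofReal.comp (gn2_continuous S c)).mul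
    exact continuous_finsetSum _ fun j _ => (gr_continuous S c j).mul
      (Complex.continuous_conj.comp (gr_continuous S z j))
  have := integral_re hi
  simp only [RCLike.re_eq_complex_re] at this
  rw [← this]
  congr 1; ext x; rw [Complex.re_ofReal_mul]

lemma Jf_eq (c : KK d → ℂ) : Jf S c = (1/4) * ((2 * π) ^ d)⁻¹ * ∫ x in Qd d, gn2 S c x ^ 2 := by
  have h := bridgeR S c c
  have e : ∀ x, (∑ j, gr S c j x * cj (gr S c j x)).re = gn2 S c x := by
    intro x; rw [← gn2_flux, Complex.ofReal_re]
  simp_rw [e] at h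
  have e2 : ∫ x in Qd d, gn2 S c x ^ 2 = (2 * π) ^ d * pr S (NL S c) c := by
    rw [← h]; congr 1; ext x; ring
  rw [e2, Jf]
  have : (0:ℝ) < (2 * π) ^ d := by positivity
  field_simp

lemma Jf_nonneg (c : KK d → ℂ) : 0 ≤ Jf S c := by
  rw [Jf_eq]; apply mul_nonneg (by positivity)
  exact integral_nonneg fun x => by positivity

lemma gr_sub (c z : KK d → ℂ) (j : Fin d) (x : Ed d) :
    gr S (fun k => c k - z k) j x = gr S c j x - gr S z j x := by
  unfold gr; rw [← Finset.sum_sub_distrib]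
  exact Finset.sum_congr rfl fun a _ => by ring

lemma Jf_convex (a b : KK d → ℂ) :
    Jf S a + pr S (NL S a) (fun k => b k - a k) ≤ Jf S b := by
  rw [Jf_eq S a, Jf_eq S b]
  have hp : (0:ℝ) < (2 * π) ^ d := by positivity
  have h := bridgeR S a (fun k => b k - a k)
  have e : pr S (NL S a) (fun k => b k - a k) = ((2 * π) ^ d)⁻¹ *
    ∫ x in Qd d, gn2 S a x * (∑ j, gr S a j x * cj (gr S (fun k => b k - a k) j x)).re := by
    rw [h]; field_simp
  rw [e]
  have hc1 : IntegrableOn (fun x => gn2 S a x ^ 2) (Qd d) := cont_intR ((gn2_continuous S a).pow 2)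
  have hc2 : IntegrableOn (fun x => gn2 S b x ^ 2) (Qd d) := cont_intR ((gn2_continuous S b).pow 2)
  have hc3 : IntegrableOn (fun x => gn2 S a x * (∑ j, gr S a j x *
      cj (gr S (fun k => b k - a k) j x)).re) (Qd d) := by
    apply cont_intR
    apply (gn2_continuous S a).mul
    apply Complex.continuous_re.comp
    exact continuous_finsetSum _ fun j _ => (gr_continuous S a j).mul
      (Complex.continuous_conj.comp (gr_continuous S _ j))
  have key : ∫ x in Qd d, ((1/4) * gn2 S a x ^ 2 + gn2 S a x * (∑ j, gr S a j x *
      cj (gr S (fun k => b k - a k) j x)).re) ≤ ∫ x in Qd d, (1/4) * gn2 S b x ^ 2 := by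
    apply integral_mono ((hc1.const_mul _).add hc3) (hc2.const_mul _)
    intro x
    have e1 : (∑ j, gr S a j x * cj (gr S (fun k => b k - a k) j x)).re
        ≤ (gn2 S b x - gn2 S a x) / 2 := by
      rw [Complex.re_sum]
      unfold gn2
      rw [← Finset.sum_sub_distrib, Finset.sum_div]
      apply Finset.sum_le_sum
      intro j _
      rw [gr_sub]
      generalize gr S a j x = p
      generalize gr S b j x = q
      rw [← Complex.normSq_eq_norm_sq, ← Complex.normSq_eq_norm_sq, Complex.normSq_apply, Complex.normSq_apply]
      simp
      nlinarith [sq_nonneg (p.re - q.re), sq_nonneg (p.im - q.im)]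
    have h1 := gn2_nonneg S a x
    have h2 := mul_le_mul_of_nonneg_left e1 h1
    show (1/4) * gn2 S a x ^ 2 + gn2 S a x * _ ≤ (1/4) * gn2 S b x ^ 2
    nlinarith [sq_nonneg (gn2 S a x - gn2 S b x)]
  rw [integral_add (hc1.const_mul _) hc3, integral_const_mul, integral_const_mul] at key
  have := mul_le_mul_of_nonneg_left key (inv_nonneg.mpr hp.le)
  linarith

lemma NL_le (c : KK d → ℂ) {k : KK d} (hk : k ∈ S) : ‖NL S c k‖ ≤ kn k * (1 + 4 * Jf S c) := by
  classical
  have hp : (0:ℝ) < (2 * π) ^ d := by positivity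
  set z : KK d → ℂ := fun l => if l = k then 1 else 0 with hz
  have h := bridge S c z
  have e1 : ∑ l ∈ S, NL S c l * cj (z l) = NL S c k := by
    rw [Finset.sum_eq_single k]
    · simp [hz]
    · intro b _ hb; simp [hz, hb]
    · intro h; exact absurd hk h
  rw [e1] at h
  have e2 : ∀ j x, gr S z j x = Complex.I * (k j : ℂ) * ee k x := by
    intro j x
    unfold gr
    rw [Finset.sum_eq_single k]
    · simp [hz]
    · intro b _ hb; simp [hz, hb]
    · intro h; exact absurd hk h
  have hb : ∀ x ∈ Qd d, ‖(gn2 S c x : ℂ) * ∑ j, gr S c j x * cj (gr S z j x)‖ ≤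
      kn k * (1 + gn2 S c x ^ 2) := by
    intro x _
    have h1 := gn2_nonneg S c x
    have h2 : ‖∑ j, gr S c j x * cj (gr S z j x)‖ ≤ Real.sqrt (gn2 S c x) * kn k := by
      refine (norm_sum_le _ _).trans ?_
      rw [kn_eq, gn2]
      have : ∀ j, ‖gr S c j x * cj (gr S z j x)‖ = ‖gr S c j x‖ * |(k j : ℝ)| := by
        intro j; rw [e2]
        simp [ee_norm]
      simp_rw [this]
      have := Real.sum_mul_le_sqrt_mul_sqrt Finset.univ (fun j => ‖gr S c j x‖) (fun j => |(k j : ℝ)|)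
      simpa using this
    rw [norm_mul, Complex.norm_real, Real.norm_of_nonneg h1]
    have hk0 := kn_nonneg k
    have hs := Real.sq_sqrt h1
    have hs0 := Real.sqrt_nonneg (gn2 S c x)
    set s := Real.sqrt (gn2 S c x)
    calc gn2 S c x * _ ≤ gn2 S c x * (s * kn k) := mul_le_mul_of_nonneg_left h2 h1
      _ = kn k * (s * gn2 S c x) := by ring
      _ ≤ _ := by
        apply mul_le_mul_of_nonneg_left _ hk0
        rw [← hs]
        have : s * s ^ 2 ≤ 1 + s ^ 4 := by
          nlinarith [sq_nonneg (s^2 - s), sq_nonneg (s-1), sq_nonneg (s^2-1), sq_nonneg s]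
        nlinarith
  have hint : IntegrableOn (fun x => kn k * (1 + gn2 S c x ^ 2)) (Qd d) :=
    cont_intR (by have := gn2_continuous S c; fun_prop)
  have h3 := norm_integral_le_of_norm_le hint ((ae_restrict_iff' Qd_meas).mpr (Eventually.of_forall hb))
  rw [h, norm_mul, Complex.norm_real, Real.norm_of_nonneg hp.le, integral_const_mul] at h3
  have hone : ∫ x in Qd d, (1 : ℝ) = (2 * π) ^ d := by
    have := int_ee (d := d) 0
    simp only [ee_zero, if_true] at this
    have h4 : ((∫ x in Qd d, (1 : ℝ) : ℝ) : ℂ) = (((2 * π) ^ d : ℝ) : ℂ) := by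
      rw [← this]; exact (integral_ofReal (f := fun _ : Ed d => (1:ℝ)) (𝕜 := ℂ)).symm.trans (by simp)
    exact_mod_cast h4
  have hi2 : IntegrableOn (fun x => gn2 S c x ^ 2) (Qd d) := cont_intR ((gn2_continuous S c).pow 2)
  rw [integral_add (cont_intR continuous_const) hi2, hone] at h3
  rw [Jf_eq]
  have h5 : (2 * π) ^ d * ‖NL S c k‖ ≤ (2 * π) ^ d * (kn k * (1 + 4 * (1 / 4 * ((2 * π) ^ d)⁻¹ * ∫ x in Qd d, gn2 S c x ^ 2))) := by
    refine h3.trans (le_of_eq ?_)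
    field_simp
  exact le_of_mul_le_mul_left h5 hp

lemma single_sum_le (f : KK d → ℝ) (hf : ∀ k, 0 ≤ f k) (l : KK d) :
    (∑ k ∈ S, if l = k then f k else 0) ≤ f l := by
  rw [Finset.sum_ite_eq]; split_ifs; exacts [le_rfl, hf l]

lemma quad_le (u α γ : KK d → ℝ) (hu : ∀ k, 0 ≤ u k) (hα : ∀ k, 0 ≤ α k) (hγ : ∀ k, 0 ≤ γ k)
    (h : ∀ k ∈ S, u k ^ 2 ≤ α k * γ k) :
    ∑ k ∈ S, ∑ a ∈ S, ∑ b ∈ S, ∑ m ∈ S, (if a - b + m = k then u a * u b * u m * u k else 0)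
     ≤ (∑ k ∈ S, γ k ^ 2) * (∑ k ∈ S, α k) ^ 2 := by
  set G := ∑ k ∈ S, γ k ^ 2
  -- inner sums
  have hin : ∀ l : KK d, (∑ b ∈ S, ∑ k ∈ S, if l = b + k then γ b * γ k else 0) ≤ G := by
    intro l
    have h1 : (∑ b ∈ S, ∑ k ∈ S, if l = b + k then γ b * γ k else 0)
        ≤ (1/2) * (∑ b ∈ S, ∑ k ∈ S, if l - b = k then γ b ^ 2 else 0)
          + (1/2) * (∑ b ∈ S, ∑ k ∈ S, if l - k = b then γ k ^ 2 else 0) := by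
      rw [Finset.mul_sum, Finset.mul_sum, ← Finset.sum_add_distrib]
      refine Finset.sum_le_sum fun b _ => ?_
      rw [Finset.mul_sum, Finset.mul_sum, ← Finset.sum_add_distrib]
      refine Finset.sum_le_sum fun k _ => ?_
      have e1 : (l - b = k) ↔ (l = b + k) := by rw [sub_eq_iff_eq_add, add_comm]
      have e2 : (l - k = b) ↔ (l = b + k) := by rw [sub_eq_iff_eq_add]
      simp only [e1, e2]
      split_ifs
      · nlinarith [sq_nonneg (γ b - γ k)]
      · simp
    have h2 : ∀ b, (∑ k ∈ S, if l - b = k then γ b ^ 2 else 0) ≤ γ b ^ 2 := fun b =>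
      single_sum_le S (fun _ => γ b ^ 2) (fun _ => sq_nonneg _) (l - b)
    have h3 : (∑ b ∈ S, ∑ k ∈ S, if l - b = k then γ b ^ 2 else 0) ≤ G :=
      Finset.sum_le_sum fun b _ => h2 b
    rw [Finset.sum_comm (f := fun b k => if l - k = b then γ k ^ 2 else 0)] at h1
    linarith
  have hsum2 : (∑ k ∈ S, α k) ^ 2 = ∑ a ∈ S, ∑ m ∈ S, α a * α m := by
    rw [sq, Finset.sum_mul_sum]
  have hX : ∑ a ∈ S, ∑ m ∈ S, α a * α m * (∑ b ∈ S, ∑ k ∈ S, if a + m = b + k then γ b * γ k else 0)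
      ≤ G * (∑ k ∈ S, α k) ^ 2 := by
    rw [hsum2, Finset.mul_sum]
    refine Finset.sum_le_sum fun a _ => ?_
    rw [Finset.mul_sum]
    refine Finset.sum_le_sum fun m _ => ?_
    rw [mul_comm G]
    exact mul_le_mul_of_nonneg_left (hin _) (mul_nonneg (hα a) (hα m))
  have hterm : ∀ a ∈ S, ∀ b ∈ S, ∀ m ∈ S, ∀ k ∈ S, u a * u b * u m * u k ≤
      (1/2) * (α a * α m * (γ b * γ k)) + (1/2) * (α b * α k * (γ a * γ m)) := by
    intro a ha b hb m hm k hk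
    have h1 : (u a * u b * u m * u k) ^ 2 ≤ (α a * α m * (γ b * γ k)) * (α b * α k * (γ a * γ m)) := by
      calc (u a * u b * u m * u k) ^ 2 = (u a ^ 2 * u b ^ 2) * (u m ^ 2 * u k ^ 2) := by ring
        _ ≤ ((α a * γ a) * (α b * γ b)) * ((α m * γ m) * (α k * γ k)) := by
          have := h a ha; have := h b hb; have := h m hm; have := h k hk
          have p : ∀ k, 0 ≤ α k * γ k := fun k => mul_nonneg (hα k) (hγ k)
          gcongr
          · exact mul_nonneg (p _) (p _)
          · exact p _
          · exact p _
        _ = _ := by ring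
    have hP : 0 ≤ α a * α m * (γ b * γ k) := mul_nonneg (mul_nonneg (hα _) (hα _)) (mul_nonneg (hγ _) (hγ _))
    have hQ : 0 ≤ α b * α k * (γ a * γ m) := mul_nonneg (mul_nonneg (hα _) (hα _)) (mul_nonneg (hγ _) (hγ _))
    set P := α a * α m * (γ b * γ k)
    set Q := α b * α k * (γ a * γ m)
    apply le_of_sq_le_sq _ (by positivity) |> fun h => h
    nlinarith [sq_nonneg (P - Q)]
  have hY1 : ∑ k ∈ S, ∑ a ∈ S, ∑ b ∈ S, ∑ m ∈ S, (if a - b + m = k then α a * α m * (γ b * γ k) else 0)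
      = ∑ a ∈ S, ∑ m ∈ S, α a * α m * (∑ b ∈ S, ∑ k ∈ S, if a + m = b + k then γ b * γ k else 0) := by
    rw [Finset.sum_comm]
    refine Finset.sum_congr rfl fun a _ => ?_
    have : ∀ k ∈ S, ∑ b ∈ S, ∑ m ∈ S, (if a - b + m = k then α a * α m * (γ b * γ k) else 0)
      = ∑ m ∈ S, ∑ b ∈ S, (if a - b + m = k then α a * α m * (γ b * γ k) else 0) :=
      fun k _ => Finset.sum_comm
    rw [Finset.sum_congr rfl this, Finset.sum_comm]
    refine Finset.sum_congr rfl fun m _ => ?_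
    rw [Finset.sum_comm, Finset.mul_sum]
    refine Finset.sum_congr rfl fun b _ => ?_
    rw [Finset.mul_sum]
    refine Finset.sum_congr rfl fun k _ => ?_
    have e : (a - b + m = k) ↔ (a + m = b + k) := by
      constructor <;> intro h
      · rw [← h]; abel
      · rw [show a - b + m = a + m - b by abel, h]; abel
    simp only [e]; split_ifs <;> simp
  have hY2 : ∑ k ∈ S, ∑ a ∈ S, ∑ b ∈ S, ∑ m ∈ S, (if a - b + m = k then α b * α k * (γ a * γ m) else 0)
      = ∑ b ∈ S, ∑ k ∈ S, α b * α k * (∑ a ∈ S, ∑ m ∈ S, if b + k = a + m then γ a * γ m else 0) := by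
    have : ∀ k ∈ S, ∑ a ∈ S, ∑ b ∈ S, ∑ m ∈ S, (if a - b + m = k then α b * α k * (γ a * γ m) else 0)
      = ∑ b ∈ S, ∑ a ∈ S, ∑ m ∈ S, (if a - b + m = k then α b * α k * (γ a * γ m) else 0) :=
      fun k _ => Finset.sum_comm
    rw [Finset.sum_congr rfl this, Finset.sum_comm]
    refine Finset.sum_congr rfl fun b _ => ?_
    refine Finset.sum_congr rfl fun k _ => ?_
    rw [Finset.mul_sum]
    refine Finset.sum_congr rfl fun a _ => ?_
    rw [Finset.mul_sum]
    refine Finset.sum_congr rfl fun m _ => ?_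
    have e : (a - b + m = k) ↔ (b + k = a + m) := by
      constructor <;> intro h
      · rw [← h]; abel
      · rw [show a - b + m = a + m - b by abel, ← h]; abel
    simp only [e]; split_ifs <;> simp
  have hfin : ∑ k ∈ S, ∑ a ∈ S, ∑ b ∈ S, ∑ m ∈ S, (if a - b + m = k then u a * u b * u m * u k else 0)
      ≤ (1/2) * (∑ k ∈ S, ∑ a ∈ S, ∑ b ∈ S, ∑ m ∈ S, (if a - b + m = k then α a * α m * (γ b * γ k) else 0))
      + (1/2) * (∑ k ∈ S, ∑ a ∈ S, ∑ b ∈ S, ∑ m ∈ S, (if a - b + m = k then α b * α k * (γ a * γ m) else 0)) := by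
    simp_rw [Finset.mul_sum, ← Finset.sum_add_distrib]
    refine Finset.sum_le_sum fun k hk => Finset.sum_le_sum fun a ha => Finset.sum_le_sum fun b hb =>
      Finset.sum_le_sum fun m hm => ?_
    split_ifs
    · exact hterm a ha b hb m hm k hk
    · simp
  rw [hY1, hY2] at hfin
  linarith

lemma NL_tri (c : KK d → ℂ) (k : KK d) : ‖NL S c k‖ ≤ ∑ a ∈ S, ∑ b ∈ S, ∑ m ∈ S,
    if a - b + m = k then (kn a * ‖c a‖) * (kn b * ‖c b‖) * (kn m * ‖c m‖) * kn k else 0 := by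
  unfold NL
  refine (norm_sum_le _ _).trans (Finset.sum_le_sum fun a _ => ?_)
  refine (norm_sum_le _ _).trans (Finset.sum_le_sum fun b _ => ?_)
  refine (norm_sum_le _ _).trans (Finset.sum_le_sum fun m _ => ?_)
  split_ifs
  · simp only [norm_mul, Complex.norm_real, Real.norm_eq_abs, RCLike.norm_conj, abs_mul]
    calc |kdot a b| * |kdot m k| * ‖c a‖ * ‖c b‖ * ‖c m‖
        ≤ (kn a * kn b) * (kn m * kn k) * ‖c a‖ * ‖c b‖ * ‖c m‖ := by
          have := kdot_abs_le a b
          have := kdot_abs_le m k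
          have := kn_nonneg a; have := kn_nonneg b
          gcongr
      _ = _ := by ring
  · simp

lemma Jf_le (c : KK d → ℂ) (w : KK d → ℝ) (hw : ∀ k ∈ S, 0 < w k) :
    Jf S c ≤ (1/4) * ((∑ k ∈ S, (w k)⁻¹ ^ 2) * (∑ k ∈ S, kn k ^ 2 * ‖c k‖ ^ 2 * w k) ^ 2) := by
  unfold Jf
  apply mul_le_mul_of_nonneg_left _ (by norm_num)
  have hq := quad_le S (fun k => kn k * ‖c k‖) (fun k => kn k ^ 2 * ‖c k‖ ^ 2 * |w k|)
    (fun k => |w k|⁻¹) (fun k => mul_nonneg (kn_nonneg k) (norm_nonneg _)) (fun k => by positivity)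
    (fun k => by positivity) (fun k hk => by
      have := hw k hk
      rw [abs_of_pos this]; field_simp; exact le_rfl)
  have e : ∀ k ∈ S, |w k| = w k := fun k hk => abs_of_pos (hw k hk)
  have e1 : ∑ k ∈ S, |w k|⁻¹ ^ 2 = ∑ k ∈ S, (w k)⁻¹ ^ 2 := Finset.sum_congr rfl (fun k hk => by rw [e k hk])
  have e2 : ∑ k ∈ S, kn k ^ 2 * ‖c k‖ ^ 2 * |w k| = ∑ k ∈ S, kn k ^ 2 * ‖c k‖ ^ 2 * w k :=
    Finset.sum_congr rfl (fun k hk => by rw [e k hk])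
  rw [e1, e2] at hq
  refine le_trans ?_ hq
  unfold pr
  refine (Complex.re_le_norm _).trans ((norm_sum_le _ _).trans (Finset.sum_le_sum fun k _ => ?_))
  rw [norm_mul, RCLike.norm_conj]
  refine (mul_le_mul_of_nonneg_right (NL_tri S c k) (norm_nonneg _)).trans ?_
  simp_rw [Finset.sum_mul]
  refine Finset.sum_le_sum fun a _ => Finset.sum_le_sum fun b _ => Finset.sum_le_sum fun m _ => ?_
  split_ifs
  · apply le_of_eq; ring
  · simp

end NLsec

def rhs {d : ℕ} (S : Finset (KK d)) (ν : ℝ) (c : KK d → ℂ) (k : KK d) : ℂ :=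
  ((-(ν * kn k ^ 4) + kn k ^ 2 : ℝ) : ℂ) * c k - NL S c k

structure Sol {d : ℕ} (S : Finset (KK d)) (ν T : ℝ) (c : ℝ → KK d → ℂ) : Prop where
  supp : ∀ t, ∀ k, k ∉ S → c t k = 0
  der : ∀ t ∈ Set.Icc 0 T, ∀ k ∈ S, HasDerivAt (fun s => c s k) (rhs S ν (c t) k) t

section odesec

lemma global_ode {E : Type*} [NormedAddCommGroup E] [NormedSpace ℝ E] [CompleteSpace E] (g : E → E)
    (hg : ContDiff ℝ 1 g) (hs : HasCompactSupport g) (x0 : E) (T : ℝ) (hT : 0 ≤ T) :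
    ∃ α : ℝ → E, α 0 = x0 ∧ ∀ t ∈ Set.Icc 0 T, HasDerivAt α (g (α t)) t := by
  obtain ⟨C, hC⟩ := hg.lipschitzWith_of_hasCompactSupport hs (by norm_num)
  obtain ⟨L, hL⟩ := hs.exists_bound_of_continuous hg.continuous
  have hL0 : 0 ≤ L := (norm_nonneg _).trans (hL 0)
  lift L to NNReal using hL0
  let t0 : Set.Icc (-1 : ℝ) (T+1) := ⟨0, by constructor <;> linarith⟩
  have hP : IsPicardLindelof (fun _ : ℝ => g) t0 x0 (L * (⟨T, hT⟩ + 1)) 0 L C := by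
    refine ⟨fun t _ => hC.lipschitzOnWith, fun x _ => continuousOn_const, fun t _ x _ => hL x, ?_⟩
    have : max (T + 1 - (t0 : ℝ)) ((t0:ℝ) - (-1)) = T + 1 := by
      simp only [t0]; rw [max_eq_left] <;> linarith
    rw [this]
    have e : ((⟨T, hT⟩ + 1 : NNReal) : ℝ) = T + 1 := rfl
    rw [NNReal.coe_mul, e]; simp
  obtain ⟨α, h0, hα⟩ := hP.exists_eq_forall_mem_Icc_hasDerivWithinAt₀
  refine ⟨α, h0, fun t ht => ?_⟩
  refine (hα t ⟨by linarith [ht.1], by linarith [ht.2]⟩).hasDerivAt ?_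
  exact Icc_mem_nhds (by linarith [ht.1]) (by linarith [ht.2])

lemma gron {f f' : ℝ → ℝ} {T A B : ℝ} (hA : 0 ≤ A) (hB : 0 ≤ B)
    (hf : ∀ t ∈ Set.Icc 0 T, HasDerivAt f (f' t) t)
    (h : ∀ t ∈ Set.Icc 0 T, f' t ≤ A * f t + B) :
    ∀ t ∈ Set.Icc 0 T, f t ≤ Real.exp (A * t) * (f 0 + B * t) := by
  intro t ht
  have hd : ∀ s ∈ Set.Icc 0 T, HasDerivAt (fun s => Real.exp (-A * s) * f s - B * s)
      (Real.exp (-A * s) * (-A) * f s + Real.exp (-A * s) * f' s - B) s := by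
    intro s hs
    have h1 : HasDerivAt (fun s => Real.exp (-A * s)) (Real.exp (-A * s) * (-A)) s := by
      have := ((hasDerivAt_id s).const_mul (-A)).exp
      simpa using this
    have h2 := (h1.mul (hf s hs)).sub ((hasDerivAt_id s).const_mul B)
    simp only [mul_one] at h2
    exact h2
  have hanti : AntitoneOn (fun s => Real.exp (-A * s) * f s - B * s) (Set.Icc 0 T) := by
    apply antitoneOn_of_deriv_nonpos (convex_Icc 0 T)
    · exact fun s hs => (hd s hs).continuousAt.continuousWithinAt
    · exact fun s hs => (hd s (interior_subset hs)).differentiableAt.differentiableWithinAt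
    · intro s hs
      have hs' := interior_subset hs
      rw [(hd s hs').deriv]
      have h1 := h s hs'
      have h2 : Real.exp (-A * s) ≤ 1 := Real.exp_le_one_iff.mpr (by nlinarith [hs'.1])
      have h3 := Real.exp_pos (-A * s)
      nlinarith [mul_le_mul_of_nonneg_left h1 h3.le, mul_le_mul_of_nonneg_right h2 hB]
  have := hanti (show (0:ℝ) ∈ Set.Icc 0 T from ⟨le_rfl, ht.1.trans ht.2⟩) ht ht.1
  simp only [mul_zero, Real.exp_zero, one_mul, sub_zero] at this
  have h3 := Real.exp_pos (A * t)
  have h4 : Real.exp (A * t) * Real.exp (-A * t) = 1 := by rw [← Real.exp_add]; simp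
  have h5 : Real.exp (-A * t) * f t ≤ f 0 + B * t := by linarith
  calc f t = Real.exp (A * t) * (Real.exp (-A * t) * f t) := by rw [← mul_assoc, h4, one_mul]
    _ ≤ _ := mul_le_mul_of_nonneg_left h5 h3.le

variable {d : ℕ} (S : Finset (KK d))

lemma pr_eq (u v : KK d → ℂ) : pr S u v = ∑ k ∈ S, (u k * cj (v k)).re := by
  unfold pr; rw [Complex.re_sum]
lemma n2_nonneg (c : KK d → ℂ) : 0 ≤ n2 S c := by unfold n2; positivity
lemma n2w_nonneg (p : ℕ) (c : KK d → ℂ) : 0 ≤ n2w S p c := by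
  unfold n2w; exact Finset.sum_nonneg fun k _ => mul_nonneg (pow_nonneg (kn_nonneg k) _) (by positivity)

lemma n2_hasDeriv (c : ℝ → KK d → ℂ) (b p : KK d → ℂ) (t : ℝ)
    (h : ∀ k ∈ S, HasDerivAt (fun s => c s k) (p k) t) :
    HasDerivAt (fun s => n2 S (fun k => c s k - b k)) (2 * pr S p (fun k => c t k - b k)) t := by
  unfold n2
  rw [pr_eq, Finset.mul_sum]
  refine HasDerivAt.fun_sum fun k hk => ?_
  exact ((h k hk).sub_const (b k)).norm_sq

lemma re_mul_cj (z : ℂ) : (z * cj z).re = ‖z‖ ^ 2 := by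
  rw [Complex.mul_conj, Complex.ofReal_re, Complex.normSq_eq_norm_sq]

lemma pr_rhs (ν : ℝ) (c v : KK d → ℂ) : pr S (rhs S ν c) v =
    (∑ k ∈ S, (-(ν * kn k ^ 4) + kn k ^ 2) * (c k * cj (v k)).re) - pr S (NL S c) v := by
  rw [pr_eq, pr_eq, ← Finset.sum_sub_distrib]
  refine Finset.sum_congr rfl fun k _ => ?_
  rw [rhs, sub_mul, Complex.sub_re, mul_assoc, Complex.re_ofReal_mul]

lemma mult_le {ν : ℝ} (hν : 0 < ν) (x : ℝ) : -(ν * x ^ 4) + x ^ 2 ≤ 1 / (4 * ν) := by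
  rw [le_div_iff₀ (by positivity)]
  nlinarith [sq_nonneg (2 * ν * x ^ 2 - 1)]

lemma pr_rhs_self {ν : ℝ} (hν : 0 < ν) (c : KK d → ℂ) : pr S (rhs S ν c) c ≤ 1 / (4 * ν) * n2 S c := by
  rw [pr_rhs]
  have h1 := Jf_nonneg S c
  unfold Jf at h1
  have h2 : (∑ k ∈ S, (-(ν * kn k ^ 4) + kn k ^ 2) * (c k * cj (c k)).re) ≤ 1 / (4 * ν) * n2 S c := by
    unfold n2; rw [Finset.mul_sum]
    refine Finset.sum_le_sum fun k _ => ?_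
    rw [re_mul_cj]
    exact mul_le_mul_of_nonneg_right (mult_le hν _) (by positivity)
  linarith

open Classical in
def extS (v : S → ℂ) (k : KK d) : ℂ := if h : k ∈ S then v ⟨k, h⟩ else 0

lemma extS_contDiff (k : KK d) : ContDiff ℝ 1 (fun v : S → ℂ => extS S v k) := by
  unfold extS
  split_ifs with h
  · exact contDiff_apply ℝ ℂ _
  · exact contDiff_const

lemma NL_contDiff (k : KK d) : ContDiff ℝ 1 (fun v : S → ℂ => NL S (extS S v) k) := by
  unfold NL
  refine ContDiff.sum fun a _ => ContDiff.sum fun b _ => ContDiff.sum fun m _ => ?_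
  split_ifs
  · have h1 := extS_contDiff S a
    have h2 := extS_contDiff S b
    have h3 := extS_contDiff S m
    have h4 : ContDiff ℝ 1 (fun v : S → ℂ => cj (extS S v b)) :=
      Complex.conjCLE.contDiff.comp h2
    exact ((contDiff_const.mul h1).mul h4).mul h3
  · exact contDiff_const

lemma rhs_contDiff (ν : ℝ) : ContDiff ℝ 1 (fun (v : S → ℂ) (k : S) => rhs S ν (extS S v) k) := by
  rw [contDiff_pi]
  intro k
  unfold rhs
  exact (contDiff_const.mul (extS_contDiff S k)).sub (NL_contDiff S k)

lemma exists_sol {ν : ℝ} (hν : 0 < ν) (T : ℝ) (hT : 0 ≤ T) (a : KK d → ℂ) (ha : ∀ k, k ∉ S → a k = 0) :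
    ∃ c, Sol S ν T c ∧ c 0 = a := by
  set M := Real.exp (1 / (2 * ν) * T) * n2 S a with hM
  have hM0 : 0 ≤ M := mul_nonneg (Real.exp_pos _).le (n2_nonneg S a)
  let χ : ContDiffBump (0 : S → ℂ) := ⟨Real.sqrt M + 1, Real.sqrt M + 2, by positivity, by linarith⟩
  let g : (S → ℂ) → (S → ℂ) := fun v => χ v • fun k : S => rhs S ν (extS S v) k
  have hg : ContDiff ℝ 1 g := (χ.contDiff).smul (rhs_contDiff S ν)
  have hs : HasCompactSupport g := χ.hasCompactSupport.smul_right
  obtain ⟨α, h0, hα⟩ := global_ode g hg hs (fun k => a k) T hT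
  have hα' : ∀ t ∈ Set.Icc 0 T, ∀ k ∈ S, HasDerivAt (fun s => extS S (α s) k)
      ((χ (α t) : ℂ) * rhs S ν (extS S (α t)) k) t := by
    intro t ht k hk
    have h := (hasDerivAt_pi.mp (hα t ht)) ⟨k, hk⟩
    have e : (fun s => extS S (α s) k) = fun s => α s ⟨k, hk⟩ := by
      ext s; simp [extS, hk]
    have e2 : g (α t) ⟨k, hk⟩ = (χ (α t) : ℂ) * rhs S ν (extS S (α t)) k := by
      simp [g]
    rw [e2] at h
    rw [e]; exact h
  have hn : ∀ t ∈ Set.Icc 0 T, n2 S (extS S (α t)) ≤ M := by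
    have h1 : ∀ t ∈ Set.Icc 0 T, HasDerivAt (fun s => n2 S (fun k => extS S (α s) k - (0 : KK d → ℂ) k)) _ t :=
      fun t ht => n2_hasDeriv S (fun s => extS S (α s)) 0 _ t (hα' t ht)
    have h2 := gron (A := 1 / (2 * ν)) (B := 0) (by positivity) le_rfl h1 (by
      intro t ht
      simp only [Pi.zero_apply, sub_zero, add_zero]
      have e : pr S (fun k => (χ (α t) : ℂ) * rhs S ν (extS S (α t)) k) (extS S (α t))
          = χ (α t) * pr S (rhs S ν (extS S (α t))) (extS S (α t)) := by
        rw [pr_eq, pr_eq, Finset.mul_sum]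
        refine Finset.sum_congr rfl fun k _ => ?_
        rw [mul_assoc, Complex.re_ofReal_mul]
      rw [show (fun k => extS S (α t) k) = extS S (α t) from rfl]
      rw [e]
      have h3 := pr_rhs_self S hν (extS S (α t))
      have h4 : (χ (α t) : ℝ) ≤ 1 := χ.le_one
      have h5 : (0:ℝ) ≤ χ (α t) := χ.nonneg
      have h6 := n2_nonneg S (extS S (α t))
      have h7 : 0 ≤ 1 / (4 * ν) * n2 S (extS S (α t)) := by positivity
      have h8 : (1 / (2 * ν)) * n2 S (extS S (α t)) = 2 * (1 / (4 * ν) * n2 S (extS S (α t))) := by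
        field_simp; ring
      rw [h8]
      nlinarith [mul_le_mul_of_nonneg_left h3 h5, mul_le_mul_of_nonneg_right h4 h7])
    intro t ht
    have h3 := h2 t ht
    simp only [Pi.zero_apply, sub_zero, zero_mul, add_zero] at h3
    have e0 : n2 S (fun k => extS S (α 0) k) = n2 S a := by
      unfold n2
      refine Finset.sum_congr rfl fun k hk => ?_
      simp [extS, hk, h0]
    rw [e0] at h3
    refine h3.trans ?_
    apply mul_le_mul_of_nonneg_right _ (n2_nonneg S a)
    apply Real.exp_le_exp.mpr
    exact mul_le_mul_of_nonneg_left ht.2 (by positivity)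
  refine ⟨fun t => extS S (α t), ⟨fun t k hk => by simp [extS, hk], fun t ht k hk => ?_⟩, ?_⟩
  · have h1 : χ (α t) = 1 := by
      apply χ.one_of_mem_closedBall
      rw [mem_closedBall_zero_iff]
      show ‖α t‖ ≤ Real.sqrt M + 1
      refine (pi_norm_le_iff_of_nonneg (Real.sqrt_nonneg M)).mpr (fun k => ?_) |>.trans (by linarith)
      apply Real.le_sqrt_of_sq_le
      refine le_trans ?_ (hn t ht)
      unfold n2
      have := Finset.single_le_sum (f := fun k => ‖extS S (α t) k‖ ^ 2) (fun k _ => by positivity) k.2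
      refine le_trans (le_of_eq ?_) this
      simp [extS]
    have := hα' t ht k hk
    rw [h1] at this
    simpa using this
  · ext k
    by_cases hk : k ∈ S
    · simp [extS, hk, h0]
    · simp [extS, hk, ha k hk]
end odesec

def Phi {d : ℕ} (S : Finset (KK d)) (ν : ℝ) (c : KK d → ℂ) : ℝ := ν / 2 * n2w S 4 c + Jf S c
def En {d : ℕ} (S : Finset (KK d)) (ν : ℝ) (c : KK d → ℂ) : ℝ := Phi S ν c - (1/2) * n2w S 2 c
def kap (ν : ℝ) : ℝ := 9 / (2 * ν)

section est
variable {d : ℕ} {S : Finset (KK d)} {ν T : ℝ}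

lemma kap_pos (hν : 0 < ν) : 0 < kap ν := by unfold kap; positivity
lemma Phi_nonneg (hν : 0 < ν) (c : KK d → ℂ) : 0 ≤ Phi S ν c := by
  unfold Phi
  have := Jf_nonneg S c
  have := n2w_nonneg S 4 c
  positivity

lemma re_id1 (c b : ℂ) : (c * cj (c - b)).re = ‖c‖^2 - (c * cj b).re := by
  rw [map_sub, mul_sub, Complex.sub_re, re_mul_cj]
lemma re_abs (c b : ℂ) : |(c * cj b).re| ≤ (1/2) * ‖c‖^2 + (1/2) * ‖b‖^2 := by
  refine (Complex.abs_re_le_norm _).trans ?_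
  rw [norm_mul, RCLike.norm_conj]
  nlinarith [sq_nonneg (‖c‖ - ‖b‖)]

lemma evi (hν : 0 < ν) (c b : KK d → ℂ) : 2 * pr S (rhs S ν c) (fun k => c k - b k) ≤
    2 * Phi S ν b + n2w S 2 b - Phi S ν c + kap ν * n2 S c := by
  rw [pr_rhs]
  have h1 := Jf_convex S c b
  have h2 : pr S (NL S c) (fun k => b k - c k) = - pr S (NL S c) (fun k => c k - b k) := by
    rw [pr_eq, pr_eq, ← Finset.sum_neg_distrib]
    refine Finset.sum_congr rfl fun k _ => ?_
    simp only [map_sub, mul_sub, Complex.sub_re]; ring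
  have h3 : 2 * (∑ k ∈ S, (-(ν * kn k ^ 4) + kn k ^ 2) * (c k * cj (c k - b k)).re) ≤
      ν * n2w S 4 b + n2w S 2 b - (ν / 2) * n2w S 4 c + kap ν * n2 S c := by
    unfold n2w n2
    simp only [Finset.mul_sum]
    rw [← Finset.sum_add_distrib, ← Finset.sum_sub_distrib, ← Finset.sum_add_distrib]
    refine Finset.sum_le_sum fun k _ => ?_
    rw [re_id1]
    have h4 := abs_le.mp (re_abs (c k) (b k))
    set x := kn k ^ 2 with hx
    have hx0 : 0 ≤ x := by positivity
    have hx4 : kn k ^ 4 = x ^ 2 := by rw [hx]; ring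
    rw [hx4]
    set q := (c k * cj (b k)).re
    set A := ‖c k‖ ^ 2
    set B := ‖b k‖ ^ 2
    have hA : 0 ≤ A := by positivity
    have h5 : 3 * x ≤ ν / 2 * x ^ 2 + kap ν := by
      unfold kap
      rw [← sub_nonneg]
      have : ν / 2 * x ^ 2 + 9 / (2 * ν) - 3 * x = (ν * x - 3) ^ 2 / (2 * ν) := by field_simp; ring
      rw [this]; positivity
    have h6 := mul_le_mul_of_nonneg_right h5 hA
    have h7 : ν * x ^ 2 * q ≤ ν * x ^ 2 * (1 / 2 * A + 1 / 2 * B) :=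
      mul_le_mul_of_nonneg_left h4.2 (by positivity)
    have h8 : x * (-q) ≤ x * (1 / 2 * A + 1 / 2 * B) :=
      mul_le_mul_of_nonneg_left (by linarith [h4.1]) hx0
    nlinarith
  have h9 := Jf_nonneg S c
  unfold Phi
  linarith

lemma NL_zero : NL S (0 : KK d → ℂ) = 0 := by
  ext k; unfold NL; simp
lemma Phi_zero : Phi S ν (0 : KK d → ℂ) = 0 := by
  unfold Phi Jf n2w; rw [NL_zero]; simp [pr]
lemma n2w_zero (p : ℕ) : n2w S p (0 : KK d → ℂ) = 0 := by unfold n2w; simp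

lemma evi0 (hν : 0 < ν) (c : KK d → ℂ) : 2 * pr S (rhs S ν c) c ≤ - Phi S ν c + kap ν * n2 S c := by
  have := evi (S := S) hν c 0
  rw [Phi_zero, n2w_zero] at this
  simp only [Pi.zero_apply, sub_zero] at this
  linarith

lemma n2_der {c : ℝ → KK d → ℂ} (hc : Sol S ν T c) {t : ℝ} (ht : t ∈ Set.Icc 0 T) :
    HasDerivAt (fun s => n2 S (c s)) (2 * pr S (rhs S ν (c t)) (c t)) t := by
  have := n2_hasDeriv S c 0 _ t (hc.der t ht)
  simpa using this

lemma n2_le (hν : 0 < ν) {c : ℝ → KK d → ℂ} (hc : Sol S ν T c) {t : ℝ} (ht : t ∈ Set.Icc 0 T) :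
    n2 S (c t) ≤ Real.exp (kap ν * t) * n2 S (c 0) := by
  have := gron (kap_pos hν).le le_rfl (fun t ht => n2_der hc ht) (B := 0) (fun t ht => by
    have := evi0 (S := S) hν (c t)
    have := Phi_nonneg (S := S) hν (c t)
    linarith) t ht
  simpa using this

lemma n2_leT (hν : 0 < ν) {c : ℝ → KK d → ℂ} (hc : Sol S ν T c) {R : ℝ} (hR : n2 S (c 0) ≤ R)
    {t : ℝ} (ht : t ∈ Set.Icc 0 T) : n2 S (c t) ≤ Real.exp (kap ν * T) * R := by
  refine (n2_le hν hc ht).trans ?_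
  apply mul_le_mul _ hR (n2_nonneg S _) (Real.exp_pos _).le
  exact Real.exp_le_exp.mpr (mul_le_mul_of_nonneg_left ht.2 (kap_pos hν).le)

lemma contr (hν : 0 < ν) {c z : ℝ → KK d → ℂ} (hc : Sol S ν T c) (hz : Sol S ν T z) {t : ℝ}
    (ht : t ∈ Set.Icc 0 T) :
    n2 S (fun k => c t k - z t k) ≤ Real.exp (1 / (2 * ν) * t) * n2 S (fun k => c 0 k - z 0 k) := by
  have hd : ∀ t ∈ Set.Icc 0 T, HasDerivAt (fun s => n2 S (fun k => c s k - z s k))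
      (2 * pr S (fun k => rhs S ν (c t) k - rhs S ν (z t) k) (fun k => c t k - z t k)) t := by
    intro t ht
    have := n2_hasDeriv S (fun s k => c s k - z s k) 0 (fun k => rhs S ν (c t) k - rhs S ν (z t) k) t
      (fun k hk => (hc.der t ht k hk).sub (hz.der t ht k hk))
    simpa using this
  have := gron (A := 1 / (2 * ν)) (B := 0) (by positivity) le_rfl hd (fun t ht => ?_) t ht
  · simpa using this
  · have h1 := Jf_convex S (c t) (z t)
    have h2 := Jf_convex S (z t) (c t)
    have e : pr S (fun k => rhs S ν (c t) k - rhs S ν (z t) k) (fun k => c t k - z t k)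
      = ∑ k ∈ S, (-(ν * kn k ^ 4) + kn k ^ 2) * ‖c t k - z t k‖ ^ 2
        + pr S (NL S (c t)) (fun k => z t k - c t k) + pr S (NL S (z t)) (fun k => c t k - z t k) := by
      simp only [pr_eq]
      rw [← Finset.sum_add_distrib, ← Finset.sum_add_distrib]
      refine Finset.sum_congr rfl fun k _ => ?_
      rw [← re_mul_cj, ← Complex.re_ofReal_mul, ← Complex.add_re, ← Complex.add_re]
      congr 1
      simp only [rhs, map_sub]; ring
    rw [e]
    have h3 : ∑ k ∈ S, (-(ν * kn k ^ 4) + kn k ^ 2) * ‖c t k - z t k‖ ^ 2 ≤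
        1 / (4 * ν) * n2 S (fun k => c t k - z t k) := by
      unfold n2; rw [Finset.mul_sum]
      exact Finset.sum_le_sum fun k _ => mul_le_mul_of_nonneg_right (mult_le hν _) (by positivity)
    have h4 : (1 / (2 * ν)) * n2 S (fun k => c t k - z t k) = 2 * (1 / (4 * ν) * n2 S (fun k => c t k - z t k)) := by
      field_simp; ring
    linarith

lemma n2w_der {c : ℝ → KK d → ℂ} (p : ℕ) (q : KK d → ℂ) {t : ℝ}
    (h : ∀ k ∈ S, HasDerivAt (fun s => c s k) (q k) t) :
    HasDerivAt (fun s => n2w S p (c s)) (∑ k ∈ S, kn k ^ p * (2 * (q k * cj (c t k)).re)) t := by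
  unfold n2w
  exact HasDerivAt.fun_sum fun k hk => ((h k hk).norm_sq).const_mul (kn k ^ p)

lemma J_der {c : ℝ → KK d → ℂ} (q : KK d → ℂ) {t : ℝ}
    (h : ∀ k ∈ S, HasDerivAt (fun s => c s k) (q k) t) :
    HasDerivAt (fun s => Jf S (c s)) (pr S (NL S (c t)) q) t := by
  have hcj : ∀ k ∈ S, DifferentiableAt ℝ (fun s => cj (c s k)) t := fun k hk =>
    (Complex.conjCLE.differentiableAt).comp t (h k hk).differentiableAt
  have hdiff : DifferentiableAt ℝ (fun s => Jf S (c s)) t := by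
    unfold Jf pr
    apply DifferentiableAt.const_mul
    apply (Complex.reCLM.differentiableAt).comp t
    refine DifferentiableAt.fun_sum fun k hk => DifferentiableAt.mul ?_ (hcj k hk)
    unfold NL
    refine DifferentiableAt.fun_sum fun a ha => DifferentiableAt.fun_sum fun b hb =>
      DifferentiableAt.fun_sum fun m hm => ?_
    split_ifs
    · exact (((differentiableAt_const _).mul (h a ha).differentiableAt).mul (hcj b hb)).mul
        (h m hm).differentiableAt
    · exact differentiableAt_const _
  obtain ⟨D, hD⟩ : ∃ D, HasDerivAt (fun s => Jf S (c s)) D t := ⟨_, hdiff.hasDerivAt⟩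
  have hp : HasDerivAt (fun s => pr S (NL S (c t)) (fun k => c s k - c t k)) (pr S (NL S (c t)) q) t := by
    simp only [pr_eq]
    refine HasDerivAt.fun_sum fun k hk => ?_
    have h1 : HasDerivAt (fun s => cj (c s k - c t k)) (cj (q k)) t :=
      Complex.conjCLE.hasFDerivAt.comp_hasDerivAt t ((h k hk).sub_const (c t k))
    exact Complex.reCLM.hasFDerivAt.comp_hasDerivAt t (h1.const_mul (NL S (c t) k))
  have hmin : IsLocalMin (fun s => Jf S (c s) - pr S (NL S (c t)) (fun k => c s k - c t k)) t := by
    apply Filter.Eventually.of_forall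
    intro s
    have h1 := Jf_convex S (c t) (c s)
    have h2 : pr S (NL S (c t)) (fun k => c t k - c t k) = 0 := by simp [pr]
    simp only [h2]
    linarith
  have := hmin.hasDerivAt_eq_zero (hD.sub hp)
  rw [show pr S (NL S (c t)) q = D by linarith]
  exact hD

lemma En_der {c : ℝ → KK d → ℂ} (hc : Sol S ν T c) {t : ℝ} (ht : t ∈ Set.Icc 0 T) :
    HasDerivAt (fun s => En S ν (c s)) (- n2 S (rhs S ν (c t))) t := by
  have h4 := n2w_der 4 _ (hc.der t ht)
  have h2 := n2w_der 2 _ (hc.der t ht)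
  have hJ := J_der _ (hc.der t ht)
  have := ((h4.const_mul (ν / 2)).add hJ).sub (h2.const_mul (1/2))
  unfold En Phi
  refine HasDerivAt.congr_deriv this ?_
  symm
  rw [pr_eq, Finset.mul_sum, Finset.mul_sum, ← Finset.sum_add_distrib, ← Finset.sum_sub_distrib, n2,
    ← Finset.sum_neg_distrib]
  refine Finset.sum_congr rfl fun k _ => ?_
  rw [← re_mul_cj]
  have e : rhs S ν (c t) k * cj (rhs S ν (c t) k) = (((-(ν * kn k ^ 4) + kn k ^ 2 : ℝ) : ℂ) * (c t k * cj (rhs S ν (c t) k)))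
      - NL S (c t) k * cj (rhs S ν (c t) k) := by
    conv_lhs => rw [show rhs S ν (c t) k = ((-(ν * kn k ^ 4) + kn k ^ 2 : ℝ) : ℂ) * c t k - NL S (c t) k from rfl]
    unfold rhs; ring
  rw [e, Complex.sub_re, Complex.re_ofReal_mul]
  have e2 : (c t k * cj (rhs S ν (c t) k)).re = (rhs S ν (c t) k * cj (c t k)).re := by
    simp; ring
  rw [e2]; ring

lemma En_anti {c : ℝ → KK d → ℂ} (hc : Sol S ν T c) {t : ℝ} (ht : t ∈ Set.Icc 0 T) :
    En S ν (c t) ≤ En S ν (c 0) := by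
  have := gron le_rfl le_rfl (fun t ht => En_der hc ht) (A := 0) (B := 0) (fun t ht => by
    have := n2_nonneg S (rhs S ν (c t)); linarith) t ht
  simpa using this

lemma Phi_le_En (hν : 0 < ν) (c : KK d → ℂ) : Phi S ν c ≤ 2 * En S ν c + 1 / (2 * ν) * n2 S c := by
  unfold En Phi
  have h1 := Jf_nonneg S c
  have h2 : n2w S 2 c ≤ ν / 2 * n2w S 4 c + 1 / (2 * ν) * n2 S c := by
    unfold n2w n2
    rw [Finset.mul_sum, Finset.mul_sum, ← Finset.sum_add_distrib]
    refine Finset.sum_le_sum fun k _ => ?_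
    have h5 : kn k ^ 2 ≤ ν / 2 * kn k ^ 4 + 1 / (2 * ν) := by
      rw [← sub_nonneg]
      have : ν / 2 * kn k ^ 4 + 1 / (2 * ν) - kn k ^ 2 = (ν * kn k ^ 2 - 1) ^ 2 / (2 * ν) := by
        field_simp; ring
      rw [this]; positivity
    have := mul_le_mul_of_nonneg_right h5 (show 0 ≤ ‖c k‖ ^ 2 by positivity)
    linarith
  linarith

lemma En_le_Phi (c : KK d → ℂ) : En S ν c ≤ Phi S ν c := by
  unfold En; linarith [n2w_nonneg S 2 c]

lemma Phi_le0 (hν : 0 < ν) {c : ℝ → KK d → ℂ} (hc : Sol S ν T c) {t : ℝ} (ht : t ∈ Set.Icc 0 T) :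
    Phi S ν (c t) ≤ 2 * Phi S ν (c 0) + 1 / (2 * ν) * (Real.exp (kap ν * T) * n2 S (c 0)) := by
  have h1 := Phi_le_En (S := S) hν (c t)
  have h2 := En_anti hc ht
  have h3 := En_le_Phi (S := S) (ν := ν) (c 0)
  have h4 := mul_le_mul_of_nonneg_left (n2_leT hν hc le_rfl ht) (show 0 ≤ 1 / (2 * ν) by positivity)
  linarith

lemma Phi_bound (hν : 0 < ν) {c : ℝ → KK d → ℂ} (hc : Sol S ν T c) {R : ℝ} (hR : n2 S (c 0) ≤ R)
    {t0 t : ℝ} (h0 : 0 < t0) (ht : t ∈ Set.Icc t0 T) :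
    Phi S ν (c t) ≤ 2 * ((R + kap ν * (Real.exp (kap ν * T) * R) * T) / t0)
      + 1 / (2 * ν) * (Real.exp (kap ν * T) * R) := by
  have htm : t ∈ Set.Icc 0 T := ⟨h0.le.trans ht.1, ht.2⟩
  have hR0 : 0 ≤ R := (n2_nonneg S _).trans hR
  have hκ := kap_pos hν
  set B := kap ν * (Real.exp (kap ν * T) * R)
  have hB : 0 ≤ B := by positivity
  have hd : ∀ t ∈ Set.Icc 0 T, HasDerivAt (fun s => s * En S ν (c s) + n2 S (c s))
      (1 * En S ν (c t) + t * (- n2 S (rhs S ν (c t))) + 2 * pr S (rhs S ν (c t)) (c t)) t :=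
    fun t ht => ((hasDerivAt_id t).mul (En_der hc ht)).add (n2_der hc ht)
  have h1 := gron (A := 0) le_rfl hB hd (fun s hs => by
    have h2 := evi0 (S := S) hν (c s)
    have h3 := En_le_Phi (S := S) (ν := ν) (c s)
    have h4 := mul_nonneg hs.1 (n2_nonneg S (rhs S ν (c s)))
    have h5 := mul_le_mul_of_nonneg_left (n2_leT hν hc hR hs) hκ.le
    linarith) t htm
  simp only [zero_mul, Real.exp_zero, one_mul, zero_add] at h1
  have h2 := Phi_le_En (S := S) hν (c t)
  have h4 := mul_le_mul_of_nonneg_left (n2_leT hν hc hR htm) (show 0 ≤ 1 / (2 * ν) by positivity)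
  have h5 := n2_nonneg S (c t)
  have htp : 0 < t := h0.trans_le ht.1
  have h6 : En S ν (c t) ≤ (R + B * T) / t0 := by
    rcases le_or_gt (En S ν (c t)) 0 with hE | hE
    · refine hE.trans ?_
      have : 0 ≤ T := htm.1.trans htm.2
      positivity
    · rw [le_div_iff₀ h0]
      have a1 := mul_le_mul_of_nonneg_left ht.1 hE.le
      have a2 := mul_le_mul_of_nonneg_left ht.2 hB
      nlinarith
  linarith

lemma cont0 (hν : 0 < ν) {c : ℝ → KK d → ℂ} (hc : Sol S ν T c) {R : ℝ} (hR : n2 S (c 0) ≤ R)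
    (b : KK d → ℂ) {t : ℝ} (ht : t ∈ Set.Icc 0 T) :
    n2 S (fun k => c t k - b k) ≤ n2 S (fun k => c 0 k - b k)
      + (2 * Phi S ν b + n2w S 2 b + kap ν * (Real.exp (kap ν * T) * R)) * t := by
  have hR0 : 0 ≤ R := (n2_nonneg S _).trans hR
  have hκ := kap_pos hν
  have hB : 0 ≤ 2 * Phi S ν b + n2w S 2 b + kap ν * (Real.exp (kap ν * T) * R) := by
    have := Phi_nonneg (S := S) hν b
    have := n2w_nonneg S 2 b
    positivity
  have h1 := gron (A := 0) le_rfl hB (fun t ht => n2_hasDeriv S c b _ t (hc.der t ht)) (fun s hs => by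
    have h2 := evi (S := S) hν (c s) b
    have h3 := Phi_nonneg (S := S) hν (c s)
    have h5 := mul_le_mul_of_nonneg_left (n2_leT hν hc hR hs) hκ.le
    linarith) t ht
  simpa using h1

lemma kdot_neg_neg (a b : KK d) : kdot (-a) (-b) = kdot a b := by
  unfold kdot; simp

lemma NL_refl (hS : ∀ k ∈ S, -k ∈ S) (c : KK d → ℂ) (k : KK d) :
    NL S (fun l => cj (c (-l))) k = cj (NL S c (-k)) := by
  have hre : ∀ f : KK d → ℂ, ∑ a ∈ S, f a = ∑ a ∈ S, f (-a) := fun f =>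
    Finset.sum_nbij' (fun a => -a) (fun a => -a) hS hS (fun a _ => neg_neg a) (fun a _ => neg_neg a)
      (fun a _ => by rw [neg_neg])
  unfold NL
  rw [map_sum, hre]
  refine Finset.sum_congr rfl fun a _ => ?_
  rw [map_sum, hre]
  refine Finset.sum_congr rfl fun b _ => ?_
  rw [map_sum, hre]
  refine Finset.sum_congr rfl fun m _ => ?_
  have e : (-a - -b + -m = k) ↔ (a - b + m = -k) := by
    rw [show -a - -b + -m = -(a - b + m) by abel, neg_eq_iff_eq_neg]
  have e2 : kdot (-m) k = kdot m (-k) := by rw [← kdot_neg_neg, neg_neg]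
  simp only [e, neg_neg, kdot_neg_neg, e2]
  split_ifs
  · simp
  · simp

lemma sol_real (hν : 0 < ν) (hS : ∀ k ∈ S, -k ∈ S) {c : ℝ → KK d → ℂ} (hc : Sol S ν T c)
    (h0 : ∀ k, c 0 (-k) = cj (c 0 k)) {t : ℝ} (ht : t ∈ Set.Icc 0 T) (k : KK d) :
    c t (-k) = cj (c t k) := by
  have hz : Sol S ν T (fun t k => cj (c t (-k))) := by
    refine ⟨fun t k hk => ?_, fun t ht k hk => ?_⟩
    · rw [hc.supp t (-k) (fun h => hk (by simpa using hS _ h))]; simp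
    · have h1 := Complex.conjCLE.hasFDerivAt.comp_hasDerivAt t (hc.der t ht (-k) (hS k hk))
      have e : rhs S ν (fun k => cj (c t (-k))) k = cj (rhs S ν (c t) (-k)) := by
        unfold rhs
        rw [NL_refl hS, kn_neg, map_sub, map_mul, Complex.conj_ofReal]
      rw [e]; exact h1
  have h1 := contr hν hc hz ht
  have e0 : n2 S (fun k => c 0 k - cj (c 0 (-k))) = 0 := by
    unfold n2
    refine Finset.sum_eq_zero fun k _ => ?_
    simp [h0]
  rw [e0, mul_zero] at h1
  have h2 : ∀ k ∈ S, c t k = cj (c t (-k)) := by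
    intro k hk
    unfold n2 at h1
    have h3 := Finset.single_le_sum (f := fun k => ‖c t k - cj (c t (-k))‖ ^ 2) (fun k _ => by positivity) hk
    have h4 : ‖c t k - cj (c t (-k))‖ ^ 2 ≤ 0 := h3.trans h1
    have h5 : ‖c t k - cj (c t (-k))‖ = 0 := by nlinarith [norm_nonneg (c t k - cj (c t (-k)))]
    exact sub_eq_zero.mp (norm_eq_zero.mp h5)
  by_cases hk : k ∈ S
  · rw [h2 k hk]; simp
  · rw [hc.supp t k hk, hc.supp t (-k) (fun h => hk (by simpa using hS _ h))]; simp

end est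

section boot
variable {d : ℕ} {S : Finset (KK d)} {ν T : ℝ}

lemma scalar_ode {y g : ℝ → ℂ} {lam G s t : ℝ} (hl : 0 < lam) (hst : s ≤ t)
    (hy : ∀ τ ∈ Set.Icc s t, HasDerivAt y (-(lam : ℂ) * y τ + g τ) τ)
    (hg : ∀ τ ∈ Set.Icc s t, ‖g τ‖ ≤ G) :
    ‖y t‖ ≤ Real.exp (-lam * (t - s)) * ‖y s‖ + G / lam := by
  have hG : 0 ≤ G := (norm_nonneg _).trans (hg s ⟨le_rfl, hst⟩)
  have hexp : ∀ τ : ℝ, HasDerivAt (fun τ : ℝ => Real.exp (lam * τ)) (Real.exp (lam * τ) * lam) τ := by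
    intro τ
    have := ((hasDerivAt_id τ).const_mul lam).exp
    simpa using this
  have hu : ∀ τ ∈ Set.Icc s t, HasDerivAt (fun τ => ((Real.exp (lam * τ) : ℝ) : ℂ) * y τ)
      (((Real.exp (lam * τ) : ℝ) : ℂ) * g τ) τ := by
    intro τ hτ
    have := (hexp τ).ofReal_comp.mul (hy τ hτ)
    refine this.congr_deriv ?_
    push_cast; ring
  have hB : ∀ τ : ℝ, HasDerivAt (fun τ => Real.exp (lam * s) * ‖y s‖ + G / lam *
      (Real.exp (lam * τ) - Real.exp (lam * s))) (G * Real.exp (lam * τ)) τ := by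
    intro τ
    have := (((hexp τ).sub_const (Real.exp (lam * s))).const_mul (G / lam)).const_add
      (Real.exp (lam * s) * ‖y s‖)
    refine this.congr_deriv ?_
    field_simp
  have key := image_norm_le_of_norm_deriv_right_le_deriv_boundary (a := s) (b := t)
    (f := fun τ => ((Real.exp (lam * τ) : ℝ) : ℂ) * y τ)
    (f' := fun τ => ((Real.exp (lam * τ) : ℝ) : ℂ) * g τ)
    (fun τ hτ => (hu τ hτ).continuousAt.continuousWithinAt)
    (fun τ hτ => (hu τ ⟨hτ.1, hτ.2.le⟩).hasDerivWithinAt)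
    (B := fun τ => Real.exp (lam * s) * ‖y s‖ + G / lam * (Real.exp (lam * τ) - Real.exp (lam * s)))
    (B' := fun τ => G * Real.exp (lam * τ))
    (by rw [norm_mul, Complex.norm_real, Real.norm_of_nonneg (Real.exp_pos _).le]; simp) hB
    (by
      intro τ hτ
      rw [norm_mul, Complex.norm_real, Real.norm_of_nonneg (Real.exp_pos _).le, mul_comm]
      exact mul_le_mul_of_nonneg_right (hg τ ⟨hτ.1, hτ.2.le⟩) (Real.exp_pos _).le)
    (show t ∈ Set.Icc s t from ⟨hst, le_rfl⟩)
  simp only [norm_mul, Complex.norm_real, Real.norm_of_nonneg (Real.exp_pos _).le] at key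
  have h1 : Real.exp (-lam * (t - s)) * Real.exp (lam * t) = Real.exp (lam * s) := by
    rw [← Real.exp_add]; ring_nf
  have hp := Real.exp_pos (lam * t)
  have h2 : Real.exp (lam * t) * ‖y t‖ ≤ Real.exp (lam * t) * (Real.exp (-lam * (t - s)) * ‖y s‖ + G / lam) := by
    refine key.trans ?_
    rw [mul_add, ← mul_assoc, mul_comm (Real.exp (lam * t)) (Real.exp (-lam * (t - s))), h1]
    have : 0 ≤ G / lam * Real.exp (lam * s) := by positivity
    linarith
  exact le_of_mul_le_mul_left h2 hp

lemma pow_exp_le (n : ℕ) {x δ : ℝ} (hx : 1 ≤ x) (hδ : 0 < δ) :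
    x ^ n * Real.exp (-(δ * x ^ 16)) ≤ (n.factorial : ℝ) / δ ^ n := by
  have h1 := Real.pow_div_factorial_le_exp (δ * x ^ 16) (by positivity) n
  have h2 : x ^ n ≤ (x ^ 16) ^ n := pow_le_pow_left₀ (by linarith) (le_self_pow₀ hx (by norm_num)) n
  rw [Real.exp_neg, ← div_eq_mul_inv, div_le_div_iff₀ (Real.exp_pos _) (by positivity)]
  rw [div_le_iff₀ (by positivity), mul_pow] at h1
  calc x ^ n * δ ^ n ≤ (x ^ 16) ^ n * δ ^ n := by gcongr
    _ ≤ _ := by linarith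

lemma norm_le_of_n2 {c : KK d → ℂ} {R : ℝ} (h : n2 S c ≤ R) {k : KK d} (hk : k ∈ S) : ‖c k‖ ≤ Real.sqrt R := by
  apply Real.le_sqrt_of_sq_le
  exact (Finset.single_le_sum (f := fun k => ‖c k‖ ^ 2) (fun k _ => by positivity) hk).trans h

/-- gain of regularity by the linear semigroup -/
lemma gain (hν : 0 < ν) {c : ℝ → KK d → ℂ} (hc : Sol S ν T c) (n : ℕ) {t0 R G : ℝ}
    (ht0 : 0 < t0) (hR : ∀ t ∈ Set.Icc 0 T, n2 S (c t) ≤ R) {k : KK d} (hk : k ∈ S) (hk0 : k ≠ 0)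
    (hg : ∀ t ∈ Set.Icc (t0 / 2) T, rr k ^ n * ‖(((kn k ^ 2 : ℝ) : ℂ) * c t k - NL S (c t) k)‖ ≤ G * rr k ^ 16)
    {t : ℝ} (ht : t ∈ Set.Icc t0 T) :
    rr k ^ n * ‖c t k‖ ≤ (n.factorial : ℝ) / (ν * (t0 / 2)) ^ n * Real.sqrt R + G / ν := by
  have hr := one_le_rr hk0
  have hr0 : 0 < rr k := by linarith
  have h16 : kn k ^ 4 = rr k ^ 16 := by rw [← rr_pow4]; ring
  have hsub : ∀ τ ∈ Set.Icc (t - t0 / 2) t, τ ∈ Set.Icc (t0 / 2) T := fun τ hτ =>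
    ⟨by linarith [hτ.1, ht.1], hτ.2.trans ht.2⟩
  have h := scalar_ode (y := fun s => c s k) (g := fun t => ((kn k ^ 2 : ℝ) : ℂ) * c t k - NL S (c t) k)
    (lam := ν * rr k ^ 16) (G := G * rr k ^ 16 / rr k ^ n) (s := t - t0 / 2) (t := t)
    (by positivity) (by linarith)
    (fun τ hτ => by
      have := hc.der τ ⟨by linarith [(hsub τ hτ).1], (hsub τ hτ).2⟩ k hk
      refine this.congr_deriv ?_
      rw [rhs, h16]; push_cast; ring)
    (fun τ hτ => by
      rw [le_div_iff₀ (by positivity), mul_comm]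
      exact hg τ (hsub τ hτ))
  have hs : ‖c (t - t0 / 2) k‖ ≤ Real.sqrt R :=
    norm_le_of_n2 (hR _ ⟨by linarith [ht.1], by linarith [ht.2]⟩) hk
  have h2 := mul_le_mul_of_nonneg_left h (pow_pos hr0 n).le
  refine h2.trans ?_
  rw [mul_add]
  apply add_le_add
  · rw [← mul_assoc]
    apply mul_le_mul _ hs (norm_nonneg _) (by positivity)
    have := pow_exp_le n hr (show 0 < ν * (t0 / 2) by positivity)
    refine le_trans (le_of_eq ?_) this
    congr 2; ring
  · apply le_of_eq
    field_simp

lemma tri_term {c : KK d → ℂ} {B : ℝ} (q : ℕ) (h0 : (0 : KK d) ∉ S)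
    (hB : ∀ k ∈ S, rr k ^ (q + 10) * ‖c k‖ ≤ B) {a b m k : KK d} (ha : a ∈ S) (hb : b ∈ S) (hm : m ∈ S)
    (h : a - b + m = k) :
    rr k ^ q * ((kn a * ‖c a‖) * (kn b * ‖c b‖) * (kn m * ‖c m‖)) ≤
      3 ^ q * B * ((rr b * ‖c b‖) * (rr m * ‖c m‖) + (rr a * ‖c a‖) * (rr m * ‖c m‖)
        + (rr a * ‖c a‖) * (rr b * ‖c b‖)) := by
  have hne : ∀ k ∈ S, k ≠ 0 := fun k hk hk' => h0 (hk' ▸ hk)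
  have hra := one_le_rr (hne a ha)
  have hrb := one_le_rr (hne b hb)
  have hrm := one_le_rr (hne m hm)
  have hB0 : 0 ≤ B := le_trans (by positivity) (hB a ha)
  have hkn : kn k ≤ kn a + kn b + kn m := by
    rw [← h]; exact (kn_add_le _ _).trans (by linarith [kn_sub_le a b])
  -- general max case
  have main : ∀ x y z : KK d, x ∈ S → y ∈ S → z ∈ S → rr y ≤ rr x → rr z ≤ rr x → kn k ≤ kn x + kn y + kn z →
      rr k ^ q * ((kn x * ‖c x‖) * (kn y * ‖c y‖) * (kn z * ‖c z‖)) ≤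
        3 ^ q * B * ((rr y * ‖c y‖) * (rr z * ‖c z‖)) := by
    intro x y z hx hy hz hyx hzx hkk
    have rx := one_le_rr (hne x hx)
    have ry := one_le_rr (hne y hy)
    have rz := one_le_rr (hne z hz)
    have hk3 : rr k ≤ 3 * rr x := by
      apply rr_le_of_kn (by positivity)
      have e1 : kn y ≤ kn x := by
        rw [← rr_pow4, ← rr_pow4]; exact pow_le_pow_left₀ (rr_nonneg y) hyx 4
      have e2 : kn z ≤ kn x := by
        rw [← rr_pow4, ← rr_pow4]; exact pow_le_pow_left₀ (rr_nonneg z) hzx 4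
      rw [mul_pow, rr_pow4]
      have := kn_nonneg x
      linarith
    have hkq : rr k ^ q ≤ 3 ^ q * rr x ^ q := by
      rw [← mul_pow]; exact pow_le_pow_left₀ (rr_nonneg k) hk3 q
    have hy3 : rr y ^ 3 ≤ rr x ^ 3 := pow_le_pow_left₀ (by linarith) hyx 3
    have hz3 : rr z ^ 3 ≤ rr x ^ 3 := pow_le_pow_left₀ (by linarith) hzx 3
    simp only [← rr_pow4]
    calc rr k ^ q * (rr x ^ 4 * ‖c x‖ * (rr y ^ 4 * ‖c y‖) * (rr z ^ 4 * ‖c z‖))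
        = rr k ^ q * rr y ^ 3 * rr z ^ 3 * (rr x ^ 4 * ‖c x‖ * ((rr y * ‖c y‖) * (rr z * ‖c z‖))) := by ring
      _ ≤ (3 ^ q * rr x ^ q) * rr x ^ 3 * rr x ^ 3 * (rr x ^ 4 * ‖c x‖ * ((rr y * ‖c y‖) * (rr z * ‖c z‖))) := by
          gcongr
      _ = 3 ^ q * (rr x ^ (q + 10) * ‖c x‖) * ((rr y * ‖c y‖) * (rr z * ‖c z‖)) := by ring
      _ ≤ _ := by
          have := hB x hx
          gcongr
  have p1 : 0 ≤ 3 ^ q * B * ((rr b * ‖c b‖) * (rr m * ‖c m‖)) := by positivity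
  have p2 : 0 ≤ 3 ^ q * B * ((rr a * ‖c a‖) * (rr m * ‖c m‖)) := by positivity
  have p3 : 0 ≤ 3 ^ q * B * ((rr a * ‖c a‖) * (rr b * ‖c b‖)) := by positivity
  rw [mul_add, mul_add]
  by_cases h1 : rr b ≤ rr a ∧ rr m ≤ rr a
  · have := main a b m ha hb hm h1.1 h1.2 hkn
    linarith
  · by_cases h2 : rr a ≤ rr b ∧ rr m ≤ rr b
    · have := main b a m hb ha hm h2.1 h2.2 (by linarith)
      have e : (kn b * ‖c b‖) * (kn a * ‖c a‖) * (kn m * ‖c m‖) = (kn a * ‖c a‖) * (kn b * ‖c b‖) * (kn m * ‖c m‖) := by ring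
      rw [e] at this
      linarith
    · have h3 : rr a ≤ rr m ∧ rr b ≤ rr m := by
        rw [not_and_or, not_le, not_le] at h1 h2
        rcases h1 with h1 | h1 <;> rcases h2 with h2 | h2 <;> constructor <;> linarith
      have := main m a b hm ha hb h3.1 h3.2 (by linarith)
      have e : (kn m * ‖c m‖) * (kn a * ‖c a‖) * (kn b * ‖c b‖) = (kn a * ‖c a‖) * (kn b * ‖c b‖) * (kn m * ‖c m‖) := by ring
      rw [e] at this
      linarith

lemma conv3 (v : KK d → ℝ) (hv : ∀ k, 0 ≤ v k) (k : KK d) :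
    ∑ a ∈ S, ∑ b ∈ S, ∑ m ∈ S, (if a - b + m = k then v b * v m + v a * v m + v a * v b else 0)
      ≤ 3 * (∑ l ∈ S, v l) ^ 2 := by
  have e : ∀ a b m : KK d, (if a - b + m = k then v b * v m + v a * v m + v a * v b else 0)
      = (if k + b - m = a then v b * v m else 0) + (if a + m - k = b then v a * v m else 0)
        + (if k - a + b = m then v a * v b else 0) := by
    intro a b m
    have e1 : (k + b - m = a) ↔ (a - b + m = k) := by
      constructor <;> intro h
      · rw [← h]; abel
      · rw [← h]; abel
    have e2 : (a + m - k = b) ↔ (a - b + m = k) := by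
      constructor <;> intro h
      · rw [← h]; abel
      · rw [← h]; abel
    have e3 : (k - a + b = m) ↔ (a - b + m = k) := by
      constructor <;> intro h
      · rw [← h]; abel
      · rw [← h]; abel
    simp only [e1, e2, e3]
    split_ifs <;> simp
  simp_rw [e, Finset.sum_add_distrib]
  have hsq : (∑ l ∈ S, v l) ^ 2 = ∑ a ∈ S, ∑ m ∈ S, v a * v m := by rw [sq, Finset.sum_mul_sum]
  have t1 : ∑ a ∈ S, ∑ b ∈ S, ∑ m ∈ S, (if k + b - m = a then v b * v m else 0) ≤ (∑ l ∈ S, v l) ^ 2 := by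
    rw [hsq, Finset.sum_comm]
    refine Finset.sum_le_sum fun b _ => ?_
    rw [Finset.sum_comm]
    refine Finset.sum_le_sum fun m _ => ?_
    exact single_sum_le S (fun _ => v b * v m) (fun _ => mul_nonneg (hv b) (hv m)) _
  have t2 : ∑ a ∈ S, ∑ b ∈ S, ∑ m ∈ S, (if a + m - k = b then v a * v m else 0) ≤ (∑ l ∈ S, v l) ^ 2 := by
    rw [hsq]
    refine Finset.sum_le_sum fun a _ => ?_
    rw [Finset.sum_comm]
    refine Finset.sum_le_sum fun m _ => ?_
    exact single_sum_le S (fun _ => v a * v m) (fun _ => mul_nonneg (hv a) (hv m)) _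
  have t3 : ∑ a ∈ S, ∑ b ∈ S, ∑ m ∈ S, (if k - a + b = m then v a * v b else 0) ≤ (∑ l ∈ S, v l) ^ 2 := by
    rw [hsq]
    refine Finset.sum_le_sum fun a _ => ?_
    refine Finset.sum_le_sum fun b _ => ?_
    exact single_sum_le S (fun _ => v a * v b) (fun _ => mul_nonneg (hv a) (hv b)) _
  linarith

lemma tri_sum {c : KK d → ℂ} {B : ℝ} (hB0 : 0 ≤ B) (q : ℕ) (h0 : (0 : KK d) ∉ S)
    (hB : ∀ k ∈ S, rr k ^ (q + 10) * ‖c k‖ ≤ B) (k : KK d) :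
    rr k ^ q * ‖NL S c k‖ ≤ rr k ^ 4 * (3 ^ q * B * (3 * (∑ l ∈ S, rr l * ‖c l‖) ^ 2)) := by
  have h1 := mul_le_mul_of_nonneg_left (NL_tri S c k) (pow_nonneg (rr_nonneg k) q)
  refine h1.trans ?_
  have h2 := conv3 (S := S) (fun l => rr l * ‖c l‖) (fun l => mul_nonneg (rr_nonneg l) (norm_nonneg _)) k
  have h3 := mul_le_mul_of_nonneg_left h2 (show 0 ≤ rr k ^ 4 * (3 ^ q * B) from
    mul_nonneg (pow_nonneg (rr_nonneg k) 4) (by positivity))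
  rw [← mul_assoc (rr k ^ 4)]
  refine le_trans ?_ h3
  simp_rw [Finset.mul_sum]
  refine Finset.sum_le_sum fun a ha => Finset.sum_le_sum fun b hb => Finset.sum_le_sum fun m hm => ?_
  split_ifs with h
  · have h4 := mul_le_mul_of_nonneg_left (tri_term q h0 hB ha hb hm h) (pow_nonneg (rr_nonneg k) 4)
    refine le_trans (le_of_eq ?_) (h4.trans (le_of_eq ?_))
    · rw [← rr_pow4 k]; ring
    · ring
  · simp

lemma n2w4_le (hν : 0 < ν) (c : KK d → ℂ) : n2w S 4 c ≤ 2 / ν * Phi S ν c := by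
  unfold Phi
  have := Jf_nonneg S c
  have e : 2 / ν * (ν / 2 * n2w S 4 c + Jf S c) = n2w S 4 c + 2 / ν * Jf S c := by
    field_simp
  rw [e]
  have : 0 ≤ 2 / ν * Jf S c := by positivity
  linarith

lemma vsum_le (hd : d ≤ 3) (hν : 0 < ν) (h0 : (0 : KK d) ∉ S) (c : KK d → ℂ) :
    (∑ l ∈ S, rr l * ‖c l‖) ^ 2 ≤ (2 / ν * Phi S ν c) * (2 * 48 ^ 3) := by
  have h1 : ∀ l ∈ S, rr l * ‖c l‖ = (rr l ^ 8 * ‖c l‖) * (rr l ^ 7)⁻¹ := by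
    intro l hl
    have := one_le_rr (show l ≠ 0 from fun h => h0 (h ▸ hl))
    field_simp
  rw [Finset.sum_congr rfl h1]
  refine (Finset.sum_mul_sq_le_sq_mul_sq S _ _).trans ?_
  apply mul_le_mul
  · refine le_trans (le_of_eq ?_) (n2w4_le hν c)
    unfold n2w
    refine Finset.sum_congr rfl fun k _ => ?_
    rw [← rr_pow4]; ring
  · refine le_trans (le_of_eq ?_) (sum_rr14 hd S h0)
    refine Finset.sum_congr rfl fun k _ => ?_
    rw [inv_pow, ← pow_mul]
  · positivity
  · have := Phi_nonneg (S := S) hν c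
    positivity

lemma Phi_unif (hν : 0 < ν) (T R : ℝ) {t0 : ℝ} (ht0 : 0 < t0) : ∃ P, 0 ≤ P ∧ ∀ (S : Finset (KK d)) (c : ℝ → KK d → ℂ),
    Sol S ν T c → n2 S (c 0) ≤ R → ∀ t ∈ Set.Icc t0 T, Phi S ν (c t) ≤ P :=
  ⟨max 0 _, le_max_left _ _, fun S c hc hR t ht => (Phi_bound hν hc hR ht0 ht).trans (le_max_right 0 _)⟩

lemma boot (hd : d ≤ 3) (hν : 0 < ν) (T R : ℝ) (q : ℕ) : ∀ t0 : ℝ, 0 < t0 → ∃ B, 0 ≤ B ∧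
    ∀ (S : Finset (KK d)) (c : ℝ → KK d → ℂ), (0 : KK d) ∉ S → Sol S ν T c → n2 S (c 0) ≤ R →
    ∀ t ∈ Set.Icc t0 T, ∀ k ∈ S, rr k ^ (2 * q + 12) * ‖c t k‖ ≤ B := by
  induction q with
  | zero =>
    intro t0 ht0
    obtain ⟨P, hP0, hP⟩ := Phi_unif (d := d) hν T R (half_pos ht0)
    refine ⟨max 0 (((12 : ℕ).factorial : ℝ) / (ν * (t0 / 2)) ^ 12 * Real.sqrt (Real.exp (kap ν * T) * R)
      + (Real.sqrt (2 / ν * P) + (1 + 4 * P)) / ν), le_max_left _ _, ?_⟩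
    intro S c h0 hc hR t ht k hk
    have hk0 : k ≠ 0 := fun h => h0 (h ▸ hk)
    have hr := one_le_rr hk0
    refine (gain hν hc 12 ht0 (fun t ht => n2_leT hν hc hR ht) hk hk0 ?_ ht).trans (le_max_right _ _)
    intro s hs
    have hPh := hP S c hc hR s hs
    have h1 : ‖NL S (c s) k‖ ≤ rr k ^ 4 * (1 + 4 * P) := by
      refine (NL_le S (c s) hk).trans ?_
      rw [rr_pow4]
      apply mul_le_mul_of_nonneg_left _ (kn_nonneg k)
      have : Jf S (c s) ≤ Phi S ν (c s) := by
        unfold Phi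
        have := n2w_nonneg S 4 (c s)
        have : 0 ≤ ν / 2 * n2w S 4 (c s) := by positivity
        linarith
      linarith
    have h2 : kn k ^ 2 * ‖c s k‖ ≤ Real.sqrt (2 / ν * P) := by
      apply Real.le_sqrt_of_sq_le
      have h3 : n2w S 4 (c s) ≤ 2 / ν * P :=
        (n2w4_le hν (c s)).trans (mul_le_mul_of_nonneg_left hPh (by positivity))
      refine le_trans ?_ h3
      have := Finset.single_le_sum (f := fun k => kn k ^ 4 * ‖c s k‖ ^ 2) (fun k _ => by positivity) hk
      refine le_trans (le_of_eq ?_) this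
      ring
    have h3 : ‖(((kn k ^ 2 : ℝ) : ℂ) * c s k - NL S (c s) k)‖ ≤ (Real.sqrt (2 / ν * P) + (1 + 4 * P)) * rr k ^ 4 := by
      refine (norm_sub_le _ _).trans ?_
      rw [norm_mul, Complex.norm_real, Real.norm_of_nonneg (by positivity)]
      have h4 : 1 ≤ rr k ^ 4 := one_le_pow₀ hr
      have := Real.sqrt_nonneg (2 / ν * P)
      nlinarith
    calc rr k ^ 12 * _ ≤ rr k ^ 12 * ((Real.sqrt (2 / ν * P) + (1 + 4 * P)) * rr k ^ 4) := by gcongr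
      _ = _ := by ring
  | succ q ih =>
    intro t0 ht0
    obtain ⟨B, hB0, hB⟩ := ih (t0 / 2) (half_pos ht0)
    obtain ⟨P, hP0, hP⟩ := Phi_unif (d := d) hν T R (half_pos ht0)
    set Q := 3 ^ (2 * q + 2) * B * (3 * ((2 / ν * P) * (2 * 48 ^ 3))) with hQ
    have hQ0 : 0 ≤ Q := by positivity
    refine ⟨max 0 (((2 * (q+1) + 12 : ℕ).factorial : ℝ) / (ν * (t0 / 2)) ^ (2 * (q+1) + 12) *
      Real.sqrt (Real.exp (kap ν * T) * R) + (B + Q) / ν), le_max_left _ _, ?_⟩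
    intro S c h0 hc hR t ht k hk
    have hk0 : k ≠ 0 := fun h => h0 (h ▸ hk)
    have hr := one_le_rr hk0
    refine (gain hν hc _ ht0 (fun t ht => n2_leT hν hc hR ht) hk hk0 ?_ ht).trans (le_max_right _ _)
    intro s hs
    have h1 := tri_sum (S := S) (c := c s) hB0 (2 * q + 2) h0 (fun k hk => hB S c h0 hc hR s hs k hk) k
    have h2 := vsum_le hd hν h0 (c s)
    have h3 : (2 / ν * Phi S ν (c s)) * (2 * 48 ^ 3) ≤ (2 / ν * P) * (2 * 48 ^ 3) := by
      have := hP S c hc hR s hs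
      gcongr
    have h4 : rr k ^ (2 * q + 2) * ‖NL S (c s) k‖ ≤ rr k ^ 4 * Q := by
      refine h1.trans ?_
      rw [hQ]
      have := h2.trans h3
      gcongr
    have h5 := hB S c h0 hc hR s hs k hk
    have h6 : ‖(((kn k ^ 2 : ℝ) : ℂ) * c s k - NL S (c s) k)‖ ≤ rr k ^ 8 * ‖c s k‖ + ‖NL S (c s) k‖ := by
      refine (norm_sub_le _ _).trans ?_
      rw [norm_mul, Complex.norm_real, Real.norm_of_nonneg (by positivity), ← rr_pow4]
      apply le_of_eq; ring
    calc rr k ^ (2 * (q+1) + 12) * _ ≤ rr k ^ (2 * (q+1) + 12) * (rr k ^ 8 * ‖c s k‖ + ‖NL S (c s) k‖) := by gcongr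
      _ = rr k ^ 10 * (rr k ^ (2 * q + 12) * ‖c s k‖) + rr k ^ 12 * (rr k ^ (2 * q + 2) * ‖NL S (c s) k‖) := by ring
      _ ≤ rr k ^ 16 * B + rr k ^ 12 * (rr k ^ 4 * Q) := by
          gcongr
          · norm_num
      _ = _ := by ring

lemma boot' (hd : d ≤ 3) (hν : 0 < ν) (T R : ℝ) (n : ℕ) (t0 : ℝ) (ht0 : 0 < t0) : ∃ B, 0 ≤ B ∧
    ∀ (S : Finset (KK d)) (c : ℝ → KK d → ℂ), (0 : KK d) ∉ S → Sol S ν T c → n2 S (c 0) ≤ R →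
    ∀ t ∈ Set.Icc t0 T, ∀ k ∈ S, rr k ^ n * ‖c t k‖ ≤ B ∧ rr k ^ n * ‖rhs S ν (c t) k‖ ≤ B := by
  obtain ⟨B, hB0, hB⟩ := boot hd hν T R (n + 8) t0 ht0
  obtain ⟨P, hP0, hP⟩ := Phi_unif (d := d) hν T R ht0
  set Q := 3 ^ (n + 4) * B * (3 * ((2 / ν * P) * (2 * 48 ^ 3))) with hQ
  have hQ0 : 0 ≤ Q := by positivity
  refine ⟨B + ((ν + 1) * B + Q), by positivity, ?_⟩
  intro S c h0 hc hR t ht k hk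
  have hb : ∀ m ≤ n + 28, ∀ k ∈ S, rr k ^ m * ‖c t k‖ ≤ B := by
    intro m hm k hk
    have hk0 : k ≠ 0 := fun h => h0 (h ▸ hk)
    refine le_trans ?_ (hB S c h0 hc hR t ht k hk)
    have := pow_le_pow_right₀ (one_le_rr hk0) (show m ≤ 2 * (n + 8) + 12 by omega)
    gcongr
  have hk0 : k ≠ 0 := fun h => h0 (h ▸ hk)
  have hr := one_le_rr hk0
  constructor
  · have := hb n (by omega) k hk
    have : 0 ≤ (ν + 1) * B := by positivity
    linarith
  · have h1 := tri_sum (S := S) (c := c t) hB0 (n + 4) h0 (fun k hk => hb _ (by omega) k hk) k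
    have h2 := vsum_le hd hν h0 (c t)
    have h3 : (2 / ν * Phi S ν (c t)) * (2 * 48 ^ 3) ≤ (2 / ν * P) * (2 * 48 ^ 3) := by
      have := hP S c hc hR t ht
      gcongr
    have h4 : rr k ^ (n + 4) * ‖NL S (c t) k‖ ≤ rr k ^ 4 * Q := by
      refine h1.trans ?_
      rw [hQ]
      have := h2.trans h3
      gcongr
    have h5 : rr k ^ n * ‖NL S (c t) k‖ ≤ Q := by
      have : rr k ^ 4 * (rr k ^ n * ‖NL S (c t) k‖) ≤ rr k ^ 4 * Q := by
        refine le_trans (le_of_eq ?_) h4; ring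
      exact le_of_mul_le_mul_left this (by positivity)
    have h6 : ‖rhs S ν (c t) k‖ ≤ (ν * rr k ^ 16 + rr k ^ 8) * ‖c t k‖ + ‖NL S (c t) k‖ := by
      unfold rhs
      refine (norm_sub_le _ _).trans ?_
      rw [norm_mul, Complex.norm_real, ← rr_pow4]
      gcongr
      rw [Real.norm_eq_abs]
      refine (abs_add_le _ _).trans ?_
      rw [abs_neg, abs_of_nonneg (by positivity), abs_of_nonneg (by positivity)]
      apply le_of_eq; ring
    have h7 := hb (n + 16) (by omega) k hk
    have h8 := hb (n + 8) (by omega) k hk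
    calc rr k ^ n * ‖rhs S ν (c t) k‖ ≤ rr k ^ n * ((ν * rr k ^ 16 + rr k ^ 8) * ‖c t k‖ + ‖NL S (c t) k‖) := by gcongr
      _ = ν * (rr k ^ (n + 16) * ‖c t k‖) + rr k ^ (n + 8) * ‖c t k‖ + rr k ^ n * ‖NL S (c t) k‖ := by ring
      _ ≤ ν * B + B + Q := by gcongr
      _ ≤ _ := by linarith
end boot

section tails
variable {d : ℕ} {S : Finset (KK d)} {ν : ℝ}

def mj {d : ℕ} (j : ℕ) (k : KK d) : ℝ := min 1 ((rr k / 2 ^ j) ^ (4 * d + 1))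

lemma mj_nonneg (j : ℕ) (k : KK d) : 0 ≤ mj j k := by
  have := rr_nonneg k
  unfold mj; positivity

lemma mj_one {j : ℕ} {k : KK d} (h : 2 ^ j ≤ rr k) : mj j k = 1 := by
  unfold mj
  apply min_eq_left
  apply one_le_pow₀
  rw [le_div_iff₀ (by positivity)]; linarith

lemma mj_low {j : ℕ} {k : KK d} (h : rr k ≤ 2 ^ j) : mj j k = (rr k / 2 ^ j) ^ (4 * d + 1) := by
  unfold mj
  apply min_eq_right
  apply pow_le_one₀
  · have := rr_nonneg k; positivity
  · rw [div_le_one (by positivity)]; exact h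

lemma mj_ge {j : ℕ} {k : KK d} (q : ℕ) (hq : 4 * d + 1 ≤ q) (h : rr k ≤ 2 ^ (j+1)) :
    (rr k / 2 ^ j) ^ q ≤ 2 ^ q * mj j k := by
  have h0 := rr_nonneg k
  rcases le_total (rr k) (2 ^ j) with h1 | h1
  · rw [mj_low h1]
    have h2 : rr k / 2 ^ j ≤ 1 := by rw [div_le_one (by positivity)]; exact h1
    have h3 : (rr k / 2 ^ j) ^ q ≤ (rr k / 2 ^ j) ^ (4 * d + 1) :=
      pow_le_pow_of_le_one (by positivity) h2 hq
    have h4 : (1:ℝ) ≤ 2 ^ q := one_le_pow₀ (by norm_num)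
    have h5 : 0 ≤ (rr k / 2 ^ j) ^ (4 * d + 1) := by positivity
    nlinarith
  · rw [mj_one h1, mul_one]
    apply pow_le_pow_left₀ (by positivity)
    rw [div_le_iff₀ (by positivity)]
    rw [pow_succ] at h; linarith

def Ct (d : ℕ) (ν A : ℝ) : ℝ := 2 * Real.exp (1 / (2 * ν)) + (4 / ν) * (ν * 2 ^ 16 +
  (1/2) * (2 * 48 ^ 3 * (2 ^ 14 + 1)) * 2 ^ (4 * d + 2) * A + 1 / (2 * ν) * Real.exp (kap ν) * 2 ^ 16)

lemma Jf_trunc (hd : d ≤ 3) (h0 : (0 : KK d) ∉ S) (a : KK d → ℂ) {A : ℝ}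
    (hA : ∑ k ∈ S, rr k ^ (4 * d) * ‖a k‖ ^ 2 ≤ A) (j : ℕ) :
    Jf S (fun k => if rr k < 2 ^ (j+1) then a k else 0) ≤
      (2 ^ j) ^ 16 * ((1/4) * (2 * 48 ^ 3 * (2 ^ 14 + 1)) * 2 ^ (4 * d + 2) * A * ∑ k ∈ S, mj j k * ‖a k‖ ^ 2) := by
  classical
  have hr : ∀ k ∈ S, 1 ≤ rr k := fun k hk => one_le_rr (fun h => h0 (h ▸ hk))
  set w : KK d → ℝ := fun k => if rr k < 2 ^ (j+1) then rr k ^ (4 * d) / rr k ^ 7 else rr k ^ 7 with hw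
  have h1 := Jf_le S (fun k => if rr k < 2 ^ (j+1) then a k else 0) w (by
    intro k hk
    have := hr k hk
    simp only [hw]
    split_ifs <;> positivity)
  have h2 : ∑ k ∈ S, (w k)⁻¹ ^ 2 ≤ (2 * 48 ^ 3 * (2 ^ 14 + 1)) * 2 ^ (j * (14 - 4 * d)) := by
    have e1 := sum_rr14 hd (S.filter fun k => ¬ rr k < 2 ^ (j+1)) (by simp [h0])
    have e2 := sum_rrJ hd (S.filter fun k => rr k < 2 ^ (j+1)) (by simp [h0]) j (by simp)
    rw [← Finset.sum_filter_add_sum_filter_not S (fun k => rr k < 2 ^ (j+1))]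
    have e3 : ∑ k ∈ S.filter (fun k => rr k < 2 ^ (j+1)), (w k)⁻¹ ^ 2 =
        ∑ k ∈ S.filter (fun k => rr k < 2 ^ (j+1)), rr k ^ 14 / rr k ^ (8 * d) := by
      refine Finset.sum_congr rfl fun k hk => ?_
      rw [Finset.mem_filter] at hk
      have := hr k hk.1
      simp only [hw, hk.2, if_true]
      rw [inv_div, div_pow, ← pow_mul, ← pow_mul]; congr 2; ring
    have e4 : ∑ k ∈ S.filter (fun k => ¬ rr k < 2 ^ (j+1)), (w k)⁻¹ ^ 2 =
        ∑ k ∈ S.filter (fun k => ¬ rr k < 2 ^ (j+1)), (rr k ^ 14)⁻¹ := by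
      refine Finset.sum_congr rfl fun k hk => ?_
      rw [Finset.mem_filter] at hk
      simp only [hw, hk.2, if_false]
      rw [inv_pow, ← pow_mul]
    rw [e3, e4]
    have e5 : (1:ℝ) ≤ 2 ^ (j * (14 - 4 * d)) := one_le_pow₀ (by norm_num)
    calc _ ≤ 2*48^3*2^14*2^(j*(14-4*d)) + 2*48^3 * (1:ℝ) := by rw [mul_one]; exact add_le_add e2 e1
      _ ≤ 2*48^3*2^14*2^(j*(14-4*d)) + 2*48^3 * (2 ^ (j * (14 - 4 * d)) : ℝ) := by gcongr
      _ = _ := by ring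
  set X := ∑ k ∈ S, kn k ^ 2 * ‖(if rr k < 2 ^ (j+1) then a k else 0)‖ ^ 2 * w k with hX
  have hXe : X = ∑ k ∈ S, if rr k < 2 ^ (j+1) then rr k ^ (4 * d + 1) * ‖a k‖ ^ 2 else 0 := by
    rw [hX]
    refine Finset.sum_congr rfl fun k hk => ?_
    have := hr k hk
    simp only [hw]
    split_ifs
    · rw [← rr_pow4]; field_simp; ring
    · simp
  have hX0 : 0 ≤ X := by
    rw [hXe]; refine Finset.sum_nonneg fun k hk => ?_
    have := hr k hk
    split_ifs <;> positivity
  have hX1 : X ≤ 2 ^ (j+1) * A := by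
    rw [hXe]
    refine le_trans ?_ (mul_le_mul_of_nonneg_left hA (by positivity))
    rw [Finset.mul_sum]
    refine Finset.sum_le_sum fun k hk => ?_
    have := hr k hk
    split_ifs with h
    · rw [pow_succ]
      have : 0 ≤ rr k ^ (4 * d) * ‖a k‖ ^ 2 := by positivity
      nlinarith
    · positivity
  have hX2 : X ≤ (2 ^ j) ^ (4 * d + 1) * (2 ^ (4 * d + 1) * ∑ k ∈ S, mj j k * ‖a k‖ ^ 2) := by
    rw [hXe, Finset.mul_sum, Finset.mul_sum]
    refine Finset.sum_le_sum fun k hk => ?_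
    have := hr k hk
    have h0 := mj_nonneg j k
    split_ifs with h
    · have := mj_ge (4 * d + 1) le_rfl h.le
      rw [div_pow, div_le_iff₀ (by positivity)] at this
      have h6 : 0 ≤ ‖a k‖ ^ 2 := by positivity
      nlinarith
    · positivity
  have hA0 : 0 ≤ A := le_trans (Finset.sum_nonneg fun k hk => by have := hr k hk; positivity) hA
  have hM0 : 0 ≤ ∑ k ∈ S, mj j k * ‖a k‖ ^ 2 :=
    Finset.sum_nonneg fun k hk => by have := mj_nonneg j k; positivity
  set M := ∑ k ∈ S, mj j k * ‖a k‖ ^ 2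
  have hX3 : X ^ 2 ≤ (2 ^ (j+1) * A) * ((2 ^ j) ^ (4 * d + 1) * (2 ^ (4 * d + 1) * M)) := by
    rw [sq]; exact mul_le_mul hX1 hX2 hX0 (by positivity)
  calc _ ≤ _ := h1
    _ ≤ (1/4) * (((2 * 48 ^ 3 * (2 ^ 14 + 1)) * 2 ^ (j * (14 - 4 * d))) * ((2 ^ (j+1) * A) * ((2 ^ j) ^ (4 * d + 1) * (2 ^ (4 * d + 1) * M)))) := by
      gcongr
    _ = _ := by
      rw [pow_mul]
      set y : ℝ := 2 ^ j
      have e : y ^ 16 = y ^ (14 - 4 * d) * y * y ^ (4 * d + 1) := by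
        rw [← pow_succ, ← pow_add]; congr 1; omega
      rw [e, pow_succ 2 j]
      ring

lemma tail_j (hd : d ≤ 3) (hν : 0 < ν) {A : ℝ} (h0 : (0 : KK d) ∉ S) {c : ℝ → KK d → ℂ}
    (hc : Sol S ν 1 c) (hA : ∑ k ∈ S, rr k ^ (4 * d) * ‖c 0 k‖ ^ 2 ≤ A) (j : ℕ) {t : ℝ} (ht : t ∈ Set.Icc (0:ℝ) 1) :
    ∑ k ∈ S, (if 2 ^ j ≤ rr k then ‖c t k‖ ^ 2 else 0) ≤ Ct d ν A * ∑ k ∈ S, mj j k * ‖c 0 k‖ ^ 2 := by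
  have hr : ∀ k ∈ S, 1 ≤ rr k := fun k hk => one_le_rr (fun h => h0 (h ▸ hk))
  set b : KK d → ℂ := fun k => if rr k < 2 ^ (j+1) then c 0 k else 0 with hb
  obtain ⟨z, hz, hz0⟩ := exists_sol S hν 1 zero_le_one b (by
    intro k hk; simp only [hb]; rw [hc.supp 0 k hk]; simp)
  have hM0 : 0 ≤ ∑ k ∈ S, mj j k * ‖c 0 k‖ ^ 2 :=
    Finset.sum_nonneg fun k hk => by have := mj_nonneg j k; positivity
  have hJ := Jf_trunc hd h0 (c 0) hA j
  set M := ∑ k ∈ S, mj j k * ‖c 0 k‖ ^ 2 with hM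
  have h1 := contr hν hc hz ht
  have h2 : n2 S (fun k => c 0 k - z 0 k) ≤ M := by
    rw [hM, hz0]; unfold n2
    refine Finset.sum_le_sum fun k hk => ?_
    simp only [hb]
    split_ifs with h
    · have := mj_nonneg j k; simp; positivity
    · rw [mj_one (le_trans (pow_le_pow_right₀ (by norm_num) (Nat.le_succ j)) (not_lt.mp h))]; simp
  have h3 : n2w S 4 b ≤ (2 ^ j) ^ 16 * (2 ^ 16 * M) := by
    rw [hM]; unfold n2w
    rw [Finset.mul_sum, Finset.mul_sum]
    refine Finset.sum_le_sum fun k hk => ?_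
    have h0 := mj_nonneg j k
    simp only [hb]
    split_ifs with h
    · have := mj_ge 16 (by omega) h.le
      rw [div_pow, div_le_iff₀ (by positivity)] at this
      have h6 : 0 ≤ ‖c 0 k‖ ^ 2 := by positivity
      rw [← rr_pow4]
      nlinarith
    · simp; positivity
  have h4 : n2 S b ≤ n2w S 4 b := by
    unfold n2 n2w
    refine Finset.sum_le_sum fun k hk => ?_
    have : 1 ≤ kn k ^ 4 := one_le_pow₀ (one_le_kn (fun h => h0 (h ▸ hk)))
    have h6 : 0 ≤ ‖b k‖ ^ 2 := by positivity
    nlinarith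
  have h5 := Phi_le0 hν hz ht
  rw [hz0] at h5
  have h6 := n2w4_le (S := S) hν (z t)
  have h7 : ∑ k ∈ S, (if 2 ^ j ≤ rr k then ‖c t k‖ ^ 2 else 0) ≤
      2 * n2 S (fun k => c t k - z t k) + 2 * (n2w S 4 (z t) / (2 ^ j) ^ 16) := by
    unfold n2 n2w
    rw [Finset.sum_div, Finset.mul_sum, Finset.mul_sum, ← Finset.sum_add_distrib]
    refine Finset.sum_le_sum fun k hk => ?_
    have := hr k hk
    have := kn_nonneg k
    split_ifs with h
    · have e1 : ‖z t k‖ ^ 2 ≤ kn k ^ 4 * ‖z t k‖ ^ 2 / (2 ^ j) ^ 16 := by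
        rw [le_div_iff₀ (by positivity), ← rr_pow4, ← pow_mul (rr k), mul_comm]
        gcongr
      have e2 : ‖c t k‖ ≤ ‖c t k - z t k‖ + ‖z t k‖ := by
        have := norm_add_le (c t k - z t k) (z t k); simpa using this
      have e3 := norm_nonneg (c t k)
      nlinarith [sq_nonneg (‖c t k - z t k‖ - ‖z t k‖)]
    · positivity
  have h8 : n2w S 4 (z t) ≤ (2 ^ j) ^ 16 * (2 / ν * (2 * (ν / 2 * (2 ^ 16 * M) + (1/4) * (2 * 48 ^ 3 * (2 ^ 14 + 1)) * 2 ^ (4 * d + 2) * A * M)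
      + 1 / (2 * ν) * (Real.exp (kap ν * 1) * (2 ^ 16 * M)))) := by
    refine h6.trans ?_
    have e1 : Phi S ν b ≤ (2 ^ j) ^ 16 * (ν / 2 * (2 ^ 16 * M) + (1/4) * (2 * 48 ^ 3 * (2 ^ 14 + 1)) * 2 ^ (4 * d + 2) * A * M) := by
      unfold Phi
      have : ν / 2 * n2w S 4 b ≤ ν / 2 * ((2 ^ j) ^ 16 * (2 ^ 16 * M)) := by gcongr
      linarith
    have e2 : 1 / (2 * ν) * (Real.exp (kap ν * 1) * n2 S b) ≤ 1 / (2 * ν) * (Real.exp (kap ν * 1) * ((2 ^ j) ^ 16 * (2 ^ 16 * M))) := by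
      have := h4.trans h3
      gcongr
    have e3 : Phi S ν (z t) ≤ (2 ^ j) ^ 16 * (2 * (ν / 2 * (2 ^ 16 * M) + (1/4) * (2 * 48 ^ 3 * (2 ^ 14 + 1)) * 2 ^ (4 * d + 2) * A * M)
      + 1 / (2 * ν) * (Real.exp (kap ν * 1) * (2 ^ 16 * M))) := by linarith
    calc _ ≤ 2 / ν * ((2 ^ j) ^ 16 * (2 * (ν / 2 * (2 ^ 16 * M) + (1/4) * (2 * 48 ^ 3 * (2 ^ 14 + 1)) * 2 ^ (4 * d + 2) * A * M)
      + 1 / (2 * ν) * (Real.exp (kap ν * 1) * (2 ^ 16 * M)))) := by gcongr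
      _ = _ := by ring
  have h9 : n2w S 4 (z t) / (2 ^ j) ^ 16 ≤ (2 / ν * (2 * (ν / 2 * (2 ^ 16 * M) + (1/4) * (2 * 48 ^ 3 * (2 ^ 14 + 1)) * 2 ^ (4 * d + 2) * A * M)
      + 1 / (2 * ν) * (Real.exp (kap ν * 1) * (2 ^ 16 * M)))) := by
    rw [div_le_iff₀ (by positivity)]; linarith
  have h10 : n2 S (fun k => c t k - z t k) ≤ Real.exp (1 / (2 * ν)) * M := by
    refine h1.trans ?_
    have : Real.exp (1 / (2 * ν) * t) ≤ Real.exp (1 / (2 * ν)) := by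
      apply Real.exp_le_exp.mpr
      have := ht.2
      have : 0 < 1 / (2 * ν) := by positivity
      nlinarith
    exact mul_le_mul this h2 (n2_nonneg _ _) (Real.exp_pos _).le
  refine h7.trans ?_
  unfold Ct
  rw [mul_one] at h9
  calc _ ≤ 2 * (Real.exp (1 / (2 * ν)) * M) + 2 * (2 / ν * (2 * (ν / 2 * (2 ^ 16 * M) + (1/4) * (2 * 48 ^ 3 * (2 ^ 14 + 1)) * 2 ^ (4 * d + 2) * A * M)
      + 1 / (2 * ν) * (Real.exp (kap ν) * (2 ^ 16 * M)))) := by gcongr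
    _ = _ := by ring

def Wj {d : ℕ} (J : ℕ) (k : KK d) : ℝ := min (4 * rr k ^ (4 * d)) (rr k ^ (4 * d + 1) * (2 / 2 ^ J))

lemma aux_sum4 (s N : ℕ) : ∑ j ∈ Finset.range N, (if j ≤ s then (2:ℝ) ^ j / 2 ^ s else 2 * 2 ^ s / 2 ^ j) ≤ 4 := by
  have key : ∀ N : ℕ, ∑ j ∈ Finset.range N, (if j ≤ s then (2:ℝ) ^ j / 2 ^ s else 2 * 2 ^ s / 2 ^ j) ≤
      if N ≤ s + 1 then 2 ^ N / 2 ^ s else 4 - 4 * 2 ^ s / 2 ^ N := by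
    intro N
    induction N with
    | zero => simp
    | succ N ih =>
      rw [Finset.sum_range_succ]
      have p1 : (0:ℝ) < 2 ^ s := by positivity
      have p2 : (0:ℝ) < 2 ^ N := by positivity
      rcases lt_trichotomy N (s+1) with h | h | h
      · rw [if_pos (by omega)] at ih
        rw [if_pos (by omega), if_pos (by omega)]
        refine (add_le_add_left ih _).trans (le_of_eq ?_)
        rw [pow_succ]; ring
      · rw [if_pos (by omega)] at ih
        rw [if_neg (by omega), if_neg (by omega)]
        refine (add_le_add_left ih _).trans (le_of_eq ?_)
        rw [h, pow_succ, pow_succ]; field_simp; rw [pow_succ]; ring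
      · rw [if_neg (by omega)] at ih
        rw [if_neg (by omega), if_neg (by omega)]
        refine (add_le_add_left ih _).trans (le_of_eq ?_)
        rw [pow_succ]; field_simp; ring
  refine (key N).trans ?_
  split_ifs with h
  · rw [div_le_iff₀ (by positivity)]
    have : (2:ℝ) ^ N ≤ 2 ^ (s+1) := pow_le_pow_right₀ (by norm_num) h
    rw [pow_succ] at this
    have : (0:ℝ) < 2 ^ s := by positivity
    linarith
  · have : (0:ℝ) ≤ 4 * 2 ^ s / 2 ^ N := by positivity
    linarith

lemma sum_mj_le (hd1 : 1 ≤ d) {k : KK d} (hk : k ≠ 0) (J N : ℕ) :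
    ∑ j ∈ Finset.Ico J N, (2 ^ j) ^ (4 * d) * mj j k ≤ Wj J k := by
  have hr := one_le_rr hk
  have hr0 : 0 < rr k := by linarith
  unfold Wj
  apply le_min
  · calc _ ≤ ∑ j ∈ Finset.range N, (2 ^ j) ^ (4 * d) * mj j k := by
          apply Finset.sum_le_sum_of_subset_of_nonneg
          · intro x; simp
          · intro i _ _; have := mj_nonneg i k; positivity
      _ ≤ ∑ j ∈ Finset.range N, rr k ^ (4 * d) * (if j ≤ sh k then (2:ℝ) ^ j / 2 ^ sh k else 2 * 2 ^ sh k / 2 ^ j) := by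
          refine Finset.sum_le_sum fun j _ => ?_
          have s1 := sh_le hk
          have s2 := lt_sh k
          split_ifs with h
          · have e1 : (2:ℝ) ^ j ≤ 2 ^ sh k := pow_le_pow_right₀ (by norm_num) h
            rw [mj_one (e1.trans s1), mul_one]
            calc ((2:ℝ) ^ j) ^ (4 * d) = (2 ^ sh k) ^ (4 * d) * (2 ^ j / 2 ^ sh k) ^ (4 * d) := by
                  rw [← mul_pow]; congr 1; field_simp
              _ ≤ rr k ^ (4 * d) * (2 ^ j / 2 ^ sh k) ^ 1 := by
                  apply mul_le_mul
                  · gcongr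
                  · apply pow_le_pow_of_le_one (by positivity)
                    · rw [div_le_one (by positivity)]; exact e1
                    · omega
                  · positivity
                  · positivity
              _ = _ := by rw [pow_one]
          · have e1 : (2:ℝ) ^ (sh k + 1) ≤ 2 ^ j := pow_le_pow_right₀ (by norm_num) (by omega)
            rw [mj_low (by linarith), div_pow, pow_succ (rr k), pow_succ ((2:ℝ)^j)]
            rw [pow_succ] at s2
            calc (2 ^ j) ^ (4 * d) * (rr k ^ (4 * d) * rr k / ((2 ^ j) ^ (4 * d) * 2 ^ j))
                = rr k ^ (4 * d) * (rr k / 2 ^ j) := by field_simp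
              _ ≤ _ := by gcongr; linarith
      _ ≤ _ := by
          rw [← Finset.mul_sum, mul_comm]
          gcongr
          exact aux_sum4 _ _
  · have key : ∀ N : ℕ, ∑ j ∈ Finset.Ico J N, (1:ℝ) / 2 ^ j ≤ 2 / 2 ^ J := by
      intro N
      rcases le_total N J with h | h
      · rw [Finset.Ico_eq_empty_of_le h, Finset.sum_empty]; positivity
      · have : ∑ j ∈ Finset.Ico J N, (1:ℝ) / 2 ^ j = 2 / 2 ^ J - 2 / 2 ^ N := by
          induction N, h using Nat.le_induction with
          | base => simp
          | succ n hn ih => rw [Finset.sum_Ico_succ_top hn, ih, pow_succ]; field_simp; ring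
        rw [this]
        have : (0:ℝ) ≤ 2 / 2 ^ N := by positivity
        linarith
    calc _ ≤ ∑ j ∈ Finset.Ico J N, rr k ^ (4 * d + 1) * (1 / 2 ^ j) := by
          refine Finset.sum_le_sum fun j _ => ?_
          calc _ ≤ (2 ^ j) ^ (4 * d) * ((rr k / 2 ^ j) ^ (4 * d + 1)) := by
                gcongr; exact min_le_right _ _
            _ = _ := by rw [div_pow, pow_succ ((2:ℝ)^j)]; field_simp
      _ ≤ _ := by
          rw [← Finset.mul_sum]
          gcongr
          exact key N

lemma Ct_nonneg (hν : 0 < ν) {A : ℝ} (hA : 0 ≤ A) : 0 ≤ Ct d ν A := by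
  unfold Ct; positivity

lemma tails (hd1 : 1 ≤ d) (hd : d ≤ 3) (hν : 0 < ν) {A : ℝ} (h0 : (0 : KK d) ∉ S) {c : ℝ → KK d → ℂ}
    (hc : Sol S ν 1 c) (hA : ∑ k ∈ S, rr k ^ (4 * d) * ‖c 0 k‖ ^ 2 ≤ A) (J : ℕ) {t : ℝ} (ht : t ∈ Set.Icc (0:ℝ) 1) :
    ∑ k ∈ S, (if 2 ^ J ≤ rr k then rr k ^ (4 * d) * ‖c t k‖ ^ 2 else 0) ≤
      2 ^ (4 * d) * Ct d ν A * ∑ k ∈ S, Wj J k * ‖c 0 k‖ ^ 2 := by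
  have hA0 : 0 ≤ A := le_trans (Finset.sum_nonneg fun k hk => by have := rr_nonneg k; positivity) hA
  obtain ⟨N, hN⟩ : ∃ N, ∀ k ∈ S, sh k < N := by
    refine ⟨S.sup sh + 1, fun k hk => Nat.lt_succ_of_le (Finset.le_sup hk)⟩
  calc _ ≤ ∑ k ∈ S, ∑ j ∈ Finset.Ico J N, 2 ^ (4 * d) * (2 ^ j) ^ (4 * d) * (if 2 ^ j ≤ rr k then ‖c t k‖ ^ 2 else 0) := by
        refine Finset.sum_le_sum fun k hk => ?_
        have hk0 : k ≠ 0 := fun h => h0 (h ▸ hk)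
        have nn : ∀ j ∈ Finset.Ico J N, (0:ℝ) ≤ 2 ^ (4 * d) * (2 ^ j) ^ (4 * d) * (if 2 ^ j ≤ rr k then ‖c t k‖ ^ 2 else 0) := by
          intro j _; split_ifs <;> positivity
        split_ifs with h
        · have s1 := sh_le hk0
          have s2 := lt_sh k
          have hJ : J ≤ sh k := by
            by_contra hh
            have : (2:ℝ) ^ (sh k + 1) ≤ 2 ^ J := pow_le_pow_right₀ (by norm_num) (by omega)
            linarith
          refine le_trans ?_ (Finset.single_le_sum nn (Finset.mem_Ico.mpr ⟨hJ, hN k hk⟩))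
          rw [if_pos s1, ← mul_pow]
          have := rr_nonneg k
          gcongr
          rw [pow_succ] at s2; linarith
        · exact Finset.sum_nonneg nn
    _ = ∑ j ∈ Finset.Ico J N, 2 ^ (4 * d) * (2 ^ j) ^ (4 * d) * ∑ k ∈ S, (if 2 ^ j ≤ rr k then ‖c t k‖ ^ 2 else 0) := by
        rw [Finset.sum_comm]; simp_rw [Finset.mul_sum]
    _ ≤ ∑ j ∈ Finset.Ico J N, 2 ^ (4 * d) * (2 ^ j) ^ (4 * d) * (Ct d ν A * ∑ k ∈ S, mj j k * ‖c 0 k‖ ^ 2) := by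
        refine Finset.sum_le_sum fun j _ => ?_
        exact mul_le_mul_of_nonneg_left (tail_j hd hν h0 hc hA j ht) (by positivity)
    _ = 2 ^ (4 * d) * Ct d ν A * ∑ k ∈ S, (∑ j ∈ Finset.Ico J N, (2 ^ j) ^ (4 * d) * mj j k) * ‖c 0 k‖ ^ 2 := by
        simp_rw [Finset.mul_sum, Finset.sum_mul]
        rw [Finset.sum_comm]
        simp_rw [Finset.mul_sum]
        refine Finset.sum_congr rfl fun k _ => Finset.sum_congr rfl fun j _ => ?_
        ring
    _ ≤ _ := by
        have := Ct_nonneg (d := d) hν hA0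
        gcongr with k hk
        exact sum_mj_le hd1 (fun h => h0 (h ▸ hk)) J N
end tails

section unif
variable {d : ℕ} {ν : ℝ}

lemma Wj_nonneg (J : ℕ) (k : KK d) : 0 ≤ Wj J k := by
  have := rr_nonneg k
  unfold Wj; positivity

lemma Wj_summable {a : KK d → ℂ} (ha : Summable fun k => rr k ^ (4 * d) * ‖a k‖ ^ 2) (J : ℕ) :
    Summable fun k => Wj J k * ‖a k‖ ^ 2 := by
  refine Summable.of_nonneg_of_le (fun k => ?_) (fun k => ?_) (ha.mul_left 4)
  · have := Wj_nonneg J k; positivity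
  · have : Wj J k ≤ 4 * rr k ^ (4 * d) := min_le_left _ _
    rw [← mul_assoc]; gcongr

lemma Wj_tendsto {a : KK d → ℂ} (ha : Summable fun k => rr k ^ (4 * d) * ‖a k‖ ^ 2) :
    Tendsto (fun J => ∑' k, Wj J k * ‖a k‖ ^ 2) atTop (nhds 0) := by
  have := tendsto_tsum_of_dominated_convergence (𝓕 := atTop) (f := fun J k => Wj J k * ‖a k‖ ^ 2)
    (g := fun _ => (0:ℝ)) (ha.mul_left 4) (by
      intro k
      have h : Tendsto (fun J : ℕ => rr k ^ (4 * d + 1) * (2 / 2 ^ J) * ‖a k‖ ^ 2) atTop (nhds 0) := by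
        have h1 : Tendsto (fun J : ℕ => ((1:ℝ)/2) ^ J) atTop (nhds 0) :=
          tendsto_pow_atTop_nhds_zero_of_lt_one (by norm_num) (by norm_num)
        have h2 := h1.const_mul (rr k ^ (4 * d + 1) * 2 * ‖a k‖ ^ 2)
        rw [mul_zero] at h2
        refine h2.congr fun J => ?_
        rw [div_pow, one_pow]; ring
      refine squeeze_zero (fun J => ?_) (fun J => ?_) h
      · have := Wj_nonneg J k; positivity
      · have : Wj J k ≤ _ := min_le_right _ _
        gcongr) (by
      refine Eventually.of_forall fun J k => ?_
      have h0 := Wj_nonneg J k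
      rw [Real.norm_of_nonneg (by positivity)]
      have : Wj J k ≤ 4 * rr k ^ (4 * d) := min_le_left _ _
      rw [← mul_assoc]; gcongr)
  simpa using this

lemma Wj_ge {J : ℕ} {k : KK d} (h : 2 ^ J ≤ rr k) : rr k ^ (4 * d) ≤ Wj J k := by
  have := rr_nonneg k
  unfold Wj
  have h0 : 0 ≤ rr k ^ (4 * d) := by positivity
  apply le_min
  · linarith
  · rw [pow_succ, mul_assoc]
    apply le_mul_of_one_le_right h0
    have : (0:ℝ) < 2 ^ J := by positivity
    rw [mul_div_assoc', le_div_iff₀ this]; nlinarith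

lemma cont_unif (hd : d ≤ 3) (hν : 0 < ν) {a : KK d → ℂ} (ha : Summable fun k => rr k ^ (4 * d) * ‖a k‖ ^ 2)
    (L : ℕ) : ∃ K, 0 ≤ K ∧ ∀ (S : Finset (KK d)) (c : ℝ → KK d → ℂ), (0 : KK d) ∉ S → Sol S ν 1 c →
    (∀ k ∈ S, c 0 k = a k) → ∀ t ∈ Set.Icc (0:ℝ) 1,
    n2 S (fun k => c t k - a k) ≤ 4 * (∑' k, Wj L k * ‖a k‖ ^ 2) + K * t := by
  set A := ∑' k, rr k ^ (4 * d) * ‖a k‖ ^ 2 with hA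
  have hA0 : 0 ≤ A := tsum_nonneg fun k => by have := rr_nonneg k; positivity
  refine ⟨2 * (2 * (ν / 2 * ((2 ^ (L+1)) ^ 16 * A) + (2 ^ L) ^ 16 * ((1/4) * (2 * 48 ^ 3 * (2 ^ 14 + 1)) * 2 ^ (4 * d + 2) * A * A)) + (2 ^ (L+1)) ^ 8 * A
    + kap ν * (Real.exp (kap ν * 1) * A)), by have := kap_pos hν; positivity, ?_⟩
  intro S c h0 hc hca t ht
  have hr : ∀ k ∈ S, 1 ≤ rr k := fun k hk => one_le_rr (fun h => h0 (h ▸ hk))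
  have hAS : ∑ k ∈ S, rr k ^ (4 * d) * ‖a k‖ ^ 2 ≤ A :=
    ha.sum_le_tsum S fun k _ => by have := rr_nonneg k; positivity
  have hr4 : ∀ k ∈ S, 1 ≤ rr k ^ (4 * d) := fun k hk => one_le_pow₀ (hr k hk)
  have hn2 : n2 S a ≤ A := by
    refine le_trans ?_ hAS
    unfold n2
    refine Finset.sum_le_sum fun k hk => ?_
    have := hr4 k hk
    have h6 : 0 ≤ ‖a k‖ ^ 2 := by positivity
    nlinarith
  have hR : n2 S (c 0) ≤ A := by
    refine le_trans (le_of_eq ?_) hn2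
    unfold n2
    exact Finset.sum_congr rfl fun k hk => by rw [hca k hk]
  set b : KK d → ℂ := fun k => if rr k < 2 ^ (L+1) then a k else 0 with hb
  have h1 := cont0 hν hc hR b ht
  have hab : n2 S (fun k => a k - b k) ≤ ∑' k, Wj L k * ‖a k‖ ^ 2 := by
    refine le_trans ?_ ((Wj_summable ha L).sum_le_tsum S fun k _ => by have := Wj_nonneg L k; positivity)
    unfold n2
    refine Finset.sum_le_sum fun k hk => ?_
    simp only [hb]
    split_ifs with h
    · have := Wj_nonneg L k; simp; positivity
    · have e : (2:ℝ) ^ L ≤ rr k := le_trans (pow_le_pow_right₀ (by norm_num) (Nat.le_succ L)) (not_lt.mp h)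
      have := (hr4 k hk).trans (Wj_ge e)
      rw [sub_zero]
      have h6 : 0 ≤ ‖a k‖ ^ 2 := by positivity
      nlinarith
  have hab' : n2 S (fun k => c 0 k - b k) ≤ ∑' k, Wj L k * ‖a k‖ ^ 2 := by
    refine le_trans (le_of_eq ?_) hab
    unfold n2
    exact Finset.sum_congr rfl fun k hk => by simp only [hca k hk]
  have hbw : ∀ p, n2w S p b ≤ (2 ^ (L+1)) ^ (4 * p) * A := by
    intro p
    refine le_trans ?_ (mul_le_mul_of_nonneg_left hAS (by positivity))
    unfold n2w
    rw [Finset.mul_sum]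
    refine Finset.sum_le_sum fun k hk => ?_
    have := hr k hk
    have h4 := hr4 k hk
    simp only [hb]
    split_ifs with h
    · rw [← rr_pow4, ← pow_mul]
      have : ‖a k‖ ^ 2 ≤ rr k ^ (4 * d) * ‖a k‖ ^ 2 := by
        have h6 : 0 ≤ ‖a k‖ ^ 2 := by positivity
        nlinarith
      gcongr
    · simp; positivity
  have hmj : ∑ k ∈ S, mj L k * ‖a k‖ ^ 2 ≤ A := by
    refine le_trans ?_ hn2
    unfold n2
    refine Finset.sum_le_sum fun k hk => ?_
    have : mj L k ≤ 1 := min_le_left _ _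
    have h6 : 0 ≤ ‖a k‖ ^ 2 := by positivity
    nlinarith
  have hJ : Jf S b ≤ (2 ^ L) ^ 16 * ((1/4) * (2 * 48 ^ 3 * (2 ^ 14 + 1)) * 2 ^ (4 * d + 2) * A * A) := by
    refine (Jf_trunc hd h0 a hAS L).trans ?_
    gcongr
  have hPhi : Phi S ν b ≤ ν / 2 * ((2 ^ (L+1)) ^ 16 * A) + (2 ^ L) ^ 16 * ((1/4) * (2 * 48 ^ 3 * (2 ^ 14 + 1)) * 2 ^ (4 * d + 2) * A * A) := by
    unfold Phi
    have := hbw 4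
    gcongr
  have h2 := hbw 2
  have h3 : n2 S (fun k => c t k - a k) ≤ 2 * n2 S (fun k => c t k - b k) + 2 * n2 S (fun k => a k - b k) := by
    unfold n2
    rw [Finset.mul_sum, Finset.mul_sum, ← Finset.sum_add_distrib]
    refine Finset.sum_le_sum fun k hk => ?_
    have e2 : ‖c t k - a k‖ ≤ ‖c t k - b k‖ + ‖a k - b k‖ := by
      have := norm_sub_le (c t k - b k) (a k - b k); simpa using this
    have e3 := norm_nonneg (c t k - a k)
    nlinarith [sq_nonneg (‖c t k - b k‖ - ‖a k - b k‖)]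
  have ht0 := ht.1
  have h4 : (2 * Phi S ν b + n2w S 2 b + kap ν * (Real.exp (kap ν * 1) * A)) * t ≤
     ((2 * (ν / 2 * ((2 ^ (L+1)) ^ 16 * A) + (2 ^ L) ^ 16 * ((1/4) * (2 * 48 ^ 3 * (2 ^ 14 + 1)) * 2 ^ (4 * d + 2) * A * A)) + (2 ^ (L+1)) ^ 8 * A
    + kap ν * (Real.exp (kap ν * 1) * A))) * t := by
    gcongr
  linarith

lemma unif0 (hd1 : 1 ≤ d) (hd : d ≤ 3) (hν : 0 < ν) {a : KK d → ℂ} (ha : Summable fun k => rr k ^ (4 * d) * ‖a k‖ ^ 2)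
    {ε : ℝ} (hε : 0 < ε) : ∃ δ, 0 < δ ∧ δ ≤ 1 ∧ ∀ (S : Finset (KK d)) (c : ℝ → KK d → ℂ), (0 : KK d) ∉ S → Sol S ν 1 c →
    (∀ k ∈ S, c 0 k = a k) → ∀ t ∈ Set.Icc (0:ℝ) δ,
    ∑ k ∈ S, (1 + rr k ^ (4 * d)) * ‖c t k - a k‖ ^ 2 ≤ ε := by
  set A := ∑' k, rr k ^ (4 * d) * ‖a k‖ ^ 2 with hA
  have hA0 : 0 ≤ A := tsum_nonneg fun k => by have := rr_nonneg k; positivity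
  have hC := Ct_nonneg (d := d) hν hA0
  set C := 2 ^ (4 * d) * Ct d ν A with hCd
  have hC0 : 0 ≤ C := by positivity
  have hW := Wj_tendsto ha
  have hWn : ∀ J, 0 ≤ ∑' k, Wj J k * ‖a k‖ ^ 2 := fun J => tsum_nonneg fun k => by have := Wj_nonneg J k; positivity
  obtain ⟨J, hJ⟩ := ((hW.eventually_lt_const (show (0:ℝ) < ε / (2 * (4 * (C + 1))) by positivity))).exists
  set D : ℝ := 1 + (2 ^ J) ^ (4 * d) with hD
  have hD0 : 0 < D := by positivity
  obtain ⟨L, hL⟩ := ((hW.eventually_lt_const (show (0:ℝ) < ε / (4 * (4 * D)) by positivity))).exists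
  obtain ⟨K, hK0, hK⟩ := cont_unif hd hν ha L
  refine ⟨min 1 (ε / (4 * D * (K + 1))), by positivity, min_le_left _ _, ?_⟩
  intro S c h0 hc hca t ht
  have ht1 : t ∈ Set.Icc (0:ℝ) 1 := ⟨ht.1, ht.2.trans (min_le_left _ _)⟩
  have hr : ∀ k ∈ S, 1 ≤ rr k := fun k hk => one_le_rr (fun h => h0 (h ▸ hk))
  have hAS : ∑ k ∈ S, rr k ^ (4 * d) * ‖c 0 k‖ ^ 2 ≤ A := by
    refine le_trans (le_of_eq ?_) (ha.sum_le_tsum S fun k _ => by have := rr_nonneg k; positivity)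
    exact Finset.sum_congr rfl fun k hk => by rw [hca k hk]
  have h1 := tails hd1 hd hν h0 hc hAS J ht1
  have hWS : ∑ k ∈ S, Wj J k * ‖a k‖ ^ 2 ≤ ∑' k, Wj J k * ‖a k‖ ^ 2 :=
    (Wj_summable ha J).sum_le_tsum S fun k _ => by have := Wj_nonneg J k; positivity
  have h1' : ∑ k ∈ S, (if 2 ^ J ≤ rr k then rr k ^ (4 * d) * ‖c t k‖ ^ 2 else 0) ≤ C * ∑' k, Wj J k * ‖a k‖ ^ 2 := by
    refine h1.trans ?_
    rw [← hCd]
    refine mul_le_mul_of_nonneg_left ?_ hC0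
    refine le_trans (le_of_eq ?_) hWS
    exact Finset.sum_congr rfl fun k hk => by rw [hca k hk]
  have h2 := hK S c h0 hc hca t ht1
  have h3 : ∑ k ∈ S, (1 + rr k ^ (4 * d)) * ‖c t k - a k‖ ^ 2 ≤ D * n2 S (fun k => c t k - a k) +
      4 * (∑ k ∈ S, (if 2 ^ J ≤ rr k then rr k ^ (4 * d) * ‖c t k‖ ^ 2 else 0) + ∑ k ∈ S, Wj J k * ‖a k‖ ^ 2) := by
    unfold n2
    rw [Finset.mul_sum, ← Finset.sum_add_distrib, Finset.mul_sum, ← Finset.sum_add_distrib]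
    refine Finset.sum_le_sum fun k hk => ?_
    have hrk := hr k hk
    have hr4 : 1 ≤ rr k ^ (4 * d) := one_le_pow₀ hrk
    split_ifs with h
    · have e2 : ‖c t k - a k‖ ≤ ‖c t k‖ + ‖a k‖ := norm_sub_le _ _
      have e3 := norm_nonneg (c t k - a k)
      have e4 : ‖c t k - a k‖ ^ 2 ≤ 2 * ‖c t k‖ ^ 2 + 2 * ‖a k‖ ^ 2 := by
        nlinarith [sq_nonneg (‖c t k‖ - ‖a k‖)]
      have e5 : rr k ^ (4 * d) * ‖a k‖ ^ 2 ≤ Wj J k * ‖a k‖ ^ 2 := by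
        have := Wj_ge h; gcongr
      have e6 : (1 + rr k ^ (4 * d)) * ‖c t k - a k‖ ^ 2 ≤ (2 * rr k ^ (4 * d)) * (2 * ‖c t k‖ ^ 2 + 2 * ‖a k‖ ^ 2) := by
        gcongr; linarith
      have e7 : 0 ≤ D * ‖c t k - a k‖ ^ 2 := by positivity
      linarith
    · have e1 : rr k ^ (4 * d) ≤ (2 ^ J) ^ (4 * d) := by
        have := not_le.mp h; gcongr
      have e2 : 0 ≤ Wj J k * ‖a k‖ ^ 2 := by have := Wj_nonneg J k; positivity
      have e3 : (1 + rr k ^ (4 * d)) * ‖c t k - a k‖ ^ 2 ≤ D * ‖c t k - a k‖ ^ 2 := by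
        rw [hD]; gcongr
      linarith
  have hKt : K * t ≤ ε / (4 * D) := by
    have e1 := ht.2.trans (min_le_right _ _)
    have : (K + 1) * t ≤ ε / (4 * D) := by
      rw [le_div_iff₀ (by positivity)] at e1 ⊢; linarith
    linarith [ht.1]
  have f1 : D * n2 S (fun k => c t k - a k) ≤ ε / 2 := by
    calc _ ≤ D * (4 * (ε / (4 * (4 * D))) + ε / (4 * D)) := by gcongr; linarith
      _ = _ := by field_simp; norm_num
  have f2 : 4 * (∑ k ∈ S, (if 2 ^ J ≤ rr k then rr k ^ (4 * d) * ‖c t k‖ ^ 2 else 0) + ∑ k ∈ S, Wj J k * ‖a k‖ ^ 2) ≤ ε / 2 := by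
    calc _ ≤ 4 * (C * ∑' k, Wj J k * ‖a k‖ ^ 2 + ∑' k, Wj J k * ‖a k‖ ^ 2) := by gcongr
      _ = 4 * (C + 1) * ∑' k, Wj J k * ‖a k‖ ^ 2 := by ring
      _ ≤ 4 * (C + 1) * (ε / (2 * (4 * (C + 1)))) := by gcongr
      _ = _ := by field_simp
  linarith
end unif

section lip
variable {d : ℕ} {S : Finset (KK d)} {ν : ℝ}

lemma rr_pow_le {k : KK d} (hk : k ≠ 0) {B y : ℝ} (p : ℕ) (h : rr k ^ (p + 14) * y ≤ B) :
    rr k ^ p * y ≤ B * (rr k ^ 14)⁻¹ := by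
  have := one_le_rr hk
  rw [← div_eq_mul_inv, le_div_iff₀ (by positivity)]
  refine le_trans (le_of_eq ?_) h
  rw [pow_add]; ring

lemma tri_diff (a b m a' b' m' : ℂ) {A B M A' B' M' : ℝ} (ha : ‖a‖ ≤ A) (hb : ‖b‖ ≤ B)
    (hm : ‖m'‖ ≤ M) (hb2 : ‖b'‖ ≤ B) (ha2 : ‖a'‖ ≤ A)
    (h1 : ‖a - a'‖ ≤ A') (h2 : ‖b - b'‖ ≤ B') (h3 : ‖m - m'‖ ≤ M') :
    ‖a * cj b * m - a' * cj b' * m'‖ ≤ A * B * M' + A * B' * M + A' * B * M := by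
  have e : a * cj b * m - a' * cj b' * m' = a * cj b * (m - m') + a * cj (b - b') * m' + (a - a') * cj b' * m' := by
    rw [map_sub]; ring
  rw [e]
  have A0 := (norm_nonneg _).trans ha
  have B0 := (norm_nonneg _).trans hb
  have M0 := (norm_nonneg _).trans hm
  refine (norm_add₃_le).trans ?_
  simp only [norm_mul, RCLike.norm_conj]
  have A1 := (norm_nonneg _).trans h1
  have B1 := (norm_nonneg _).trans h2
  have M1 := (norm_nonneg _).trans h3
  gcongr

lemma rhs_lip (hd : d ≤ 3) (h0 : (0 : KK d) ∉ S) {c z : KK d → ℂ} {B δ : ℝ} (hB : 0 ≤ B) (hδ : 0 ≤ δ)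
    (hc : ∀ k ∈ S, rr k ^ 18 * ‖c k‖ ≤ B) (hz : ∀ k ∈ S, rr k ^ 18 * ‖z k‖ ≤ B)
    (hcz : ∀ k ∈ S, rr k ^ 18 * ‖c k - z k‖ ≤ B * δ) {k : KK d} (hk : k ∈ S) :
    ‖rhs S ν c k - rhs S ν z k‖ ≤ ((|ν| * kn k ^ 4 + kn k ^ 2) * B + 3 * B ^ 3 * kn k * (2 * 48 ^ 3) ^ 3) * δ := by
  have hne : ∀ k ∈ S, k ≠ 0 := fun k hk h => h0 (h ▸ hk)
  set u : KK d → ℝ := fun k => (rr k ^ 14)⁻¹ with hu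
  have hu0 : ∀ k, 0 ≤ u k := fun k => by have := rr_nonneg k; simp only [hu]; positivity
  have hsum : ∑ a ∈ S, u a ≤ 2 * 48 ^ 3 := sum_rr14 hd S h0
  have hsum0 : 0 ≤ ∑ a ∈ S, u a := Finset.sum_nonneg fun a _ => hu0 a
  have hkn := kn_nonneg k
  have hNL : ‖NL S c k - NL S z k‖ ≤ 3 * B ^ 3 * kn k * (2 * 48 ^ 3) ^ 3 * δ := by
    unfold NL
    simp only [← Finset.sum_sub_distrib]
    calc _ ≤ ∑ a ∈ S, ∑ b ∈ S, ∑ m ∈ S, 3 * B ^ 3 * kn k * δ * (u a * u b * u m) := by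
          refine (norm_sum_le _ _).trans (Finset.sum_le_sum fun a ha => ?_)
          refine (norm_sum_le _ _).trans (Finset.sum_le_sum fun b hb => ?_)
          refine (norm_sum_le _ _).trans (Finset.sum_le_sum fun m hm => ?_)
          have ua := hu0 a
          have ub := hu0 b
          have um := hu0 m
          split_ifs with h
          · have key : ∀ k ∈ S, kn k * ‖c k‖ ≤ B * u k ∧ kn k * ‖z k‖ ≤ B * u k ∧ kn k * ‖c k - z k‖ ≤ B * δ * u k := by
              intro k hk
              rw [← rr_pow4]
              exact ⟨rr_pow_le (hne k hk) 4 (hc k hk), rr_pow_le (hne k hk) 4 (hz k hk), rr_pow_le (hne k hk) 4 (hcz k hk)⟩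
            have e : ((kdot a b * kdot m k : ℝ) : ℂ) * c a * cj (c b) * c m - ((kdot a b * kdot m k : ℝ) : ℂ) * z a * cj (z b) * z m
               = ((kdot a b * kdot m k : ℝ) : ℂ) * (c a * cj (c b) * c m - z a * cj (z b) * z m) := by ring
            rw [e, norm_mul, Complex.norm_real, Real.norm_eq_abs, abs_mul]
            have ka := one_le_kn (hne a ha)
            have kb := one_le_kn (hne b hb)
            have km := one_le_kn (hne m hm)
            have fl : ∀ {q x y : ℝ}, 1 ≤ q → q * x ≤ y → x ≤ y / q := by
              intro q x y hq h; rw [le_div_iff₀ (by linarith)]; linarith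
            have := tri_diff (c a) (c b) (c m) (z a) (z b) (z m) (fl ka (key a ha).1) (fl kb (key b hb).1) (fl km (key m hm).2.1)
              (fl kb (key b hb).2.1) (fl ka (key a ha).2.1) (fl ka (key a ha).2.2) (fl kb (key b hb).2.2) (fl km (key m hm).2.2)
            calc _ ≤ ((kn a * kn b) * (kn m * kn k)) * _ := mul_le_mul (mul_le_mul (kdot_abs_le _ _) (kdot_abs_le _ _) (abs_nonneg _) (by positivity)) this (norm_nonneg _) (by positivity)
              _ = _ := by field_simp; ring
          · simp; positivity
      _ = 3 * B ^ 3 * kn k * δ * (∑ a ∈ S, u a) ^ 3 := by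
          simp_rw [← Finset.mul_sum]
          rw [show (∑ a ∈ S, u a) ^ 3 = (∑ a ∈ S, u a) * (∑ a ∈ S, u a) * (∑ a ∈ S, u a) by ring, Finset.sum_mul_sum, Finset.sum_mul]
          congr 1
          refine Finset.sum_congr rfl fun a _ => ?_
          rw [Finset.sum_mul]
      _ ≤ 3 * B ^ 3 * kn k * δ * (2 * 48 ^ 3) ^ 3 := by gcongr
      _ = _ := by ring
  have hlin : ‖((-(ν * kn k ^ 4) + kn k ^ 2 : ℝ) : ℂ) * (c k - z k)‖ ≤ (|ν| * kn k ^ 4 + kn k ^ 2) * (B * δ) := by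
    rw [norm_mul, Complex.norm_real]
    apply mul_le_mul _ _ (norm_nonneg _) (by positivity)
    · refine (abs_add_le _ _).trans ?_
      rw [abs_neg, abs_mul, abs_of_nonneg (show 0 ≤ kn k ^ 4 by positivity), abs_of_nonneg (show 0 ≤ kn k ^ 2 by positivity)]
    · refine le_trans ?_ (hcz k hk)
      exact le_mul_of_one_le_left (norm_nonneg _) (one_le_pow₀ (one_le_rr (hne k hk)))
  have e : rhs S ν c k - rhs S ν z k = ((-(ν * kn k ^ 4) + kn k ^ 2 : ℝ) : ℂ) * (c k - z k) - (NL S c k - NL S z k) := by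
    unfold rhs; ring
  rw [e]
  refine (norm_sub_le _ _).trans ?_
  linarith

lemma ode_taylor (hd : d ≤ 3) (h0 : (0 : KK d) ∉ S) {T t0 B : ℝ} (ht0 : 0 < t0) {c : ℝ → KK d → ℂ} (hB : 0 ≤ B)
    (hc : Sol S ν T c) (hb : ∀ t ∈ Set.Icc t0 T, ∀ k ∈ S, rr k ^ 18 * ‖c t k‖ ≤ B ∧ rr k ^ 18 * ‖rhs S ν (c t) k‖ ≤ B)
    {k : KK d} (hk : k ∈ S) {s t : ℝ} (hs : s ∈ Set.Icc t0 T) (ht : t ∈ Set.Icc t0 T) :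
    ‖c s k - c t k - (s - t) • rhs S ν (c t) k‖ ≤
      ((|ν| * kn k ^ 4 + kn k ^ 2) * B + 3 * B ^ 3 * kn k * (2 * 48 ^ 3) ^ 3) * |s - t| ^ 2 := by
  have hne : ∀ k ∈ S, k ≠ 0 := fun k hk h => h0 (h ▸ hk)
  have hsub : ∀ x ∈ Set.uIcc t s, x ∈ Set.Icc t0 T := fun x hx => by
    have := Set.uIcc_subset_Icc ht hs hx; exact this
  have hder : ∀ x ∈ Set.uIcc t s, ∀ k ∈ S, HasDerivAt (fun s => c s k) (rhs S ν (c x) k) x := fun x hx k hk =>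
    hc.der x ⟨ht0.le.trans (hsub x hx).1, (hsub x hx).2⟩ k hk
  have hL : ∀ x ∈ Set.uIcc t s, ∀ k ∈ S, rr k ^ 18 * ‖c x k - c t k‖ ≤ B * |x - t| := by
    intro x hx k hk
    have hr := one_le_rr (hne k hk)
    have := Convex.norm_image_sub_le_of_norm_hasDerivWithin_le (C := B / rr k ^ 18) (s := Set.uIcc t s)
      (fun x hx => (hder x hx k hk).hasDerivWithinAt) (fun x hx => by
        rw [le_div_iff₀ (by positivity)]
        linarith [(hb x (hsub x hx) k hk).2]) (convex_uIcc t s) Set.left_mem_uIcc hx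
    rw [div_mul_eq_mul_div, le_div_iff₀ (by positivity)] at this
    rw [Real.norm_eq_abs] at this
    linarith
  set C := ((|ν| * kn k ^ 4 + kn k ^ 2) * B + 3 * B ^ 3 * kn k * (2 * 48 ^ 3) ^ 3) with hC
  have hkn := kn_nonneg k
  have hC0 : 0 ≤ C := by positivity
  have := Convex.norm_image_sub_le_of_norm_hasDerivWithin_le (C := C * |s - t|) (s := Set.uIcc t s)
      (f := fun x => c x k - x • rhs S ν (c t) k) (f' := fun x => rhs S ν (c x) k - (1:ℝ) • rhs S ν (c t) k)
      (fun x hx => ((hder x hx k hk).sub ((hasDerivAt_id x).smul_const _)).hasDerivWithinAt) (fun x hx => by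
        rw [one_smul]
        have h1 := rhs_lip (ν := ν) (S := S) hd h0 hB (abs_nonneg (x - t)) (fun k hk => (hb x (hsub x hx) k hk).1) (fun k hk => (hb t ht k hk).1)
          (fun k hk => hL x hx k hk) hk
        refine h1.trans ?_
        rw [← hC]
        exact mul_le_mul_of_nonneg_left (Set.abs_sub_left_of_mem_uIcc hx) hC0) (convex_uIcc t s) Set.left_mem_uIcc Set.right_mem_uIcc
  rw [Real.norm_eq_abs] at this
  calc _ = ‖c s k - s • rhs S ν (c t) k - (c t k - t • rhs S ν (c t) k)‖ := by
        congr 1; rw [sub_smul]; ring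
    _ ≤ _ := this
    _ = _ := by ring
end lip

def RD {d : ℕ} (c : KK d → ℂ) : Prop := c 0 = 0 ∧ ∀ n : ℕ, ∃ B, ∀ k, rr k ^ n * ‖c k‖ ≤ B
def Dj {d : ℕ} (j : Fin d) (c : KK d → ℂ) (k : KK d) : ℂ := Complex.I * (k j : ℂ) * c k
def FS {d : ℕ} (c : KK d → ℂ) (x : Ed d) : ℂ := ∑' k, c k * ee k x
def rF {d : ℕ} (c : KK d → ℂ) (x : Ed d) : ℝ := (FS c x).re
def Rl {d : ℕ} (c : KK d → ℂ) : Prop := ∀ k, c (-k) = cj (c k)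

section fs
variable {d : ℕ}

lemma rr_zero : rr (0 : KK d) = 0 := by unfold rr; rw [kn_zero]; simp

lemma summ_u (hd : d ≤ 3) : Summable fun k : KK d => (rr k ^ 14)⁻¹ := by
  classical
  refine summable_of_sum_le (c := 2 * 48 ^ 3) (fun k => by have := rr_nonneg k; positivity) fun F => ?_
  refine le_trans (le_of_eq ?_) (sum_rr14 hd (F.erase 0) (by simp))
  symm
  apply Finset.sum_erase
  rw [rr_zero]; simp

lemma rr_pow_le' {c : KK d → ℂ} (h0 : c 0 = 0) {B : ℝ} (p : ℕ) (h : ∀ k, rr k ^ (p + 14) * ‖c k‖ ≤ B) (k : KK d) :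
    rr k ^ p * ‖c k‖ ≤ B * (rr k ^ 14)⁻¹ := by
  by_cases hk : k = 0
  · subst hk; rw [h0, rr_zero]; simp
  · exact rr_pow_le hk p (h k)

lemma RD.summable (hd : d ≤ 3) {c : KK d → ℂ} (h : RD c) (p : ℕ) : Summable fun k => rr k ^ p * ‖c k‖ := by
  obtain ⟨B, hB⟩ := h.2 (p + 14)
  exact Summable.of_nonneg_of_le (fun k => by have := rr_nonneg k; positivity) (rr_pow_le' h.1 p hB) ((summ_u hd).mul_left B)

lemma RD.D {c : KK d → ℂ} (h : RD c) (j : Fin d) : RD (Dj j c) := by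
  refine ⟨by simp [Dj], fun n => ?_⟩
  obtain ⟨B, hB⟩ := h.2 (n + 4)
  refine ⟨B, fun k => le_trans ?_ (hB k)⟩
  unfold Dj
  rw [norm_mul, norm_mul, Complex.norm_I, one_mul, Complex.norm_intCast, pow_add, rr_pow4, mul_assoc]
  have := abs_le_kn k j
  have := rr_nonneg k
  gcongr

lemma RD.mulkn {c : KK d → ℂ} (h : RD c) (p : ℕ) (s : ℝ) : RD (fun k => ((s * kn k ^ p : ℝ) : ℂ) * c k) := by
  refine ⟨by simp [h.1], fun n => ?_⟩
  obtain ⟨B, hB⟩ := h.2 (n + 4 * p)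
  refine ⟨|s| * B, fun k => le_trans (le_of_eq ?_) (mul_le_mul_of_nonneg_left (hB k) (abs_nonneg s))⟩
  have := kn_nonneg k
  rw [norm_mul, Complex.norm_real, Real.norm_eq_abs, abs_mul, abs_of_nonneg (show 0 ≤ kn k ^ p by positivity), pow_add, pow_mul, rr_pow4]
  ring

lemma RD.summ (hd : d ≤ 3) {c : KK d → ℂ} (h : RD c) (x : Ed d) : Summable fun k => ‖c k * ee k x‖ := by
  have := h.summable hd 0
  refine this.congr fun k => ?_
  rw [norm_mul, ee_norm]; simp

lemma RD.hasSum (hd : d ≤ 3) {c : KK d → ℂ} (h : RD c) (x : Ed d) : HasSum (fun k => c k * ee k x) (FS c x) :=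
  (h.summ hd x).of_norm.hasSum

def LL {d : ℕ} (j : Fin d) : ℂ →L[ℝ] (Ed d →L[ℝ] ℂ) :=
  ContinuousLinearMap.smulRightL ℝ (Ed d) ℂ (EuclideanSpace.proj j)

lemma LL_apply (j : Fin d) (z : ℂ) (y : Ed d) : LL j z y = (y j : ℂ) * z := by
  simp [LL]

lemma ee_hasFDeriv (k : KK d) (x : Ed d) (z : ℂ) :
    HasFDerivAt (fun y => z * ee k y) (∑ j, LL j (Dj j (fun _ => z) k * ee k x)) x := by
  have h1 : HasFDerivAt (fun y : Ed d => Complex.I * ∑ i, (k i : ℂ) * (y i : ℂ))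
      (∑ j, LL j (Complex.I * (k j : ℂ))) x := by
    have : (fun y : Ed d => Complex.I * ∑ i, (k i : ℂ) * (y i : ℂ)) = fun y => (∑ j, LL j (Complex.I * (k j : ℂ))) y := by
      funext y
      rw [_root_.sum_apply, Finset.mul_sum]
      refine Finset.sum_congr rfl fun j _ => ?_
      rw [LL_apply]; ring
    rw [this]
    exact (∑ j, LL j (Complex.I * (k j : ℂ))).hasFDerivAt
  have h2 := (h1.cexp).const_mul z
  change HasFDerivAt _ (z • ee k x • _) x at h2
  refine h2.congr_fderiv ?_
  ext y
  simp only [_root_.smul_apply, _root_.sum_apply, LL_apply, smul_eq_mul, Finset.mul_sum]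
  refine Finset.sum_congr rfl fun j _ => ?_
  unfold Dj
  ring

lemma RD.hasFDeriv (hd : d ≤ 3) {c : KK d → ℂ} (h : RD c) (x : Ed d) :
    HasFDerivAt (FS c) (∑ j, LL j (FS (Dj j c) x)) x := by
  have hu : Summable fun k => ∑ j : Fin d, ‖LL j‖ * (rr k ^ 0 * ‖Dj j c k‖) :=
    summable_sum fun j _ => ((h.D j).summable hd 0).mul_left _
  have h1 := hasFDerivAt_tsum (𝕜 := ℝ) (f := fun k y => c k * ee k y) (f' := fun k x => ∑ j, LL j (Dj j c k * ee k x)) hu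
    (fun k y => ee_hasFDeriv k y (c k)) (fun k y => by
      refine (norm_sum_le _ _).trans (Finset.sum_le_sum fun j _ => ?_)
      refine (ContinuousLinearMap.le_opNorm _ _).trans ?_
      rw [norm_mul, ee_norm]; simp) (x₀ := x) (h.summ hd x).of_norm x
  refine h1.congr_fderiv ?_
  refine HasSum.tsum_eq ?_
  exact hasSum_sum fun j _ => (LL j).hasSum ((h.D j).hasSum hd x)

lemma RD.contDiff_nat (hd : d ≤ 3) (n : ℕ) : ∀ {c : KK d → ℂ}, RD c → ContDiff ℝ n (FS c) := by
  induction n with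
  | zero =>
    intro c h
    rw [Nat.cast_zero, contDiff_zero]
    exact continuous_iff_continuousAt.mpr fun x => (h.hasFDeriv hd x).continuousAt
  | succ n ih =>
    intro c h
    push_cast
    rw [contDiff_succ_iff_hasFDerivAt]
    refine ⟨fun x => ∑ j, LL j (FS (Dj j c) x), ?_, h.hasFDeriv hd⟩
    exact ContDiff.sum fun j _ => (LL j).contDiff.comp (ih (h.D j))

lemma RD.contDiff (hd : d ≤ 3) {c : KK d → ℂ} (h : RD c) : ContDiff ℝ (⊤ : ℕ∞) (rF c) := by
  have : ContDiff ℝ (⊤ : ℕ∞) (FS c) := contDiff_infty.mpr fun n => h.contDiff_nat hd n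
  exact Complex.reCLM.contDiff.comp this

lemma RD.rF_hasFDeriv (hd : d ≤ 3) {c : KK d → ℂ} (h : RD c) (x : Ed d) :
    HasFDerivAt (rF c) (Complex.reCLM.comp (∑ j, LL j (FS (Dj j c) x))) x :=
  Complex.reCLM.hasFDerivAt.comp x (h.hasFDeriv hd x)

lemma RD.pd (hd : d ≤ 3) {c : KK d → ℂ} (h : RD c) (j : Fin d) : pd (rF c) j = rF (Dj j c) := by
  funext x
  unfold _root_.pd
  rw [(h.rF_hasFDeriv hd x).fderiv]
  simp only [ContinuousLinearMap.comp_apply, _root_.sum_apply, LL_apply]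
  rw [Finset.sum_eq_single j]
  · simp [rF]
  · intro b _ hb; simp [hb]
  · simp

lemma RD.lapl (hd : d ≤ 3) {c : KK d → ℂ} (h : RD c) : lapl (rF c) = rF (fun k => ((-1 * kn k ^ 2 : ℝ) : ℂ) * c k) := by
  funext x
  unfold _root_.lapl
  simp_rw [h.pd hd, (h.D _).pd hd]
  unfold rF
  rw [← Complex.re_sum]
  congr 1
  symm
  refine ((h.mulkn 2 (-1)).hasSum hd x).unique ?_
  have := hasSum_sum (s := Finset.univ) fun j _ => ((h.D j).D j).hasSum hd x
  refine this.congr_fun ?_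
  intro k
  rw [← Finset.sum_mul]
  congr 1
  rw [kn_sq]
  unfold Dj
  push_cast
  rw [Finset.mul_sum, Finset.sum_mul]
  refine Finset.sum_congr rfl fun j _ => ?_
  linear_combination (-(k j : ℂ) ^ 2 * c k) * Complex.I_sq

lemma Rl.D {c : KK d → ℂ} (h : Rl c) (j : Fin d) : Rl (Dj j c) := by
  intro k
  unfold Dj
  rw [h k]; simp

lemma Rl.conjFS (hd : d ≤ 3) {c : KK d → ℂ} (h : Rl c) (hr : RD c) (x : Ed d) : cj (FS c x) = FS c x := by
  have h1 := (hr.hasSum hd x).map (starRingEnd ℂ) Complex.continuous_conj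
  have h2 := (Equiv.neg (KK d)).hasSum_iff.mpr (hr.hasSum hd x)
  refine h1.unique ?_
  refine h2.congr_fun ?_
  intro k
  simp only [Function.comp, Equiv.neg_apply, map_mul]
  rw [h k, ee_neg]

lemma Rl.rF_eq (hd : d ≤ 3) {c : KK d → ℂ} (h : Rl c) (hr : RD c) (x : Ed d) : (rF c x : ℂ) = FS c x :=
  Complex.conj_eq_iff_re.mp (h.conjFS hd hr x)

end fs

section fs2
variable {d : ℕ}

lemma RD.fcoef (hd : d ≤ 3) {c : KK d → ℂ} (h : RD c) (hr : Rl c) (k : KK d) :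
    fcoefR (rF c) k = (((2 * π) ^ d : ℝ) : ℂ) * c k := by
  unfold fcoefR
  have e : ∀ x : Ed d, (rF c x : ℂ) * Complex.exp (-(Complex.I * ∑ i, (k i : ℂ) * (x i : ℂ))) =
      ∑' l, c l * ee (l - k) x := by
    intro x
    rw [hr.rF_eq hd h x]
    have : Complex.exp (-(Complex.I * ∑ i, (k i : ℂ) * (x i : ℂ))) = cj (ee k x) := by
      rw [← ee_neg]; unfold ee; congr 1; simp
    rw [this, FS, ← tsum_mul_right]
    refine tsum_congr fun l => ?_
    rw [ee_sub]; ring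
  simp_rw [e]
  have hi : ∀ l, IntegrableOn (fun x => c l * ee (l - k) x) (Qd d) volume := fun l =>
    cont_int (continuous_const.mul (ee_continuous _))
  have hs : Summable fun l => ∫ x in Qd d, ‖c l * ee (l - k) x‖ := by
    simp_rw [norm_mul, ee_norm, mul_one]
    simp only [integral_const, smul_eq_mul]
    refine Summable.mul_left _ ?_
    refine (h.summable hd 0).congr fun l => ?_
    simp
  rw [← integral_tsum_of_summable_integral_norm hi hs]
  simp_rw [integral_const_mul, int_ee]
  rw [tsum_eq_single k]
  · simp; ring
  · intro l hl
    rw [if_neg (sub_ne_zero.mpr hl), mul_zero]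

lemma ee_per (k : KK d) (j : Fin d) (x : Ed d) : ee k (x + (2 * π) • EuclideanSpace.single j 1) = ee k x := by
  unfold ee
  have : Complex.I * ∑ i, (k i : ℂ) * (((x + (2 * π) • EuclideanSpace.single j (1:ℝ)) i : ℝ) : ℂ) =
      Complex.I * ∑ i, (k i : ℂ) * (x i : ℂ) + (k j : ℂ) * (2 * π * Complex.I) := by
    have e : ∀ i, (k i : ℂ) * (((x + (2 * π) • EuclideanSpace.single j (1:ℝ)) i : ℝ) : ℂ) =
        (k i : ℂ) * (x i : ℂ) + if i = j then (k j : ℂ) * (2 * π) else 0 := by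
      intro i
      simp only [PiLp.add_apply, PiLp.smul_apply, PiLp.single_apply, smul_eq_mul]
      split_ifs with hij
      · subst hij; push_cast; ring
      · simp
    simp_rw [e]
    rw [Finset.sum_add_distrib]; simp; ring
  rw [this, Complex.exp_add, Complex.exp_int_mul_two_pi_mul_I, mul_one]

lemma rF_per (c : KK d → ℂ) : PeriodicSpace (rF c) := by
  intro j x
  unfold rF FS
  simp_rw [ee_per]

def GG {d : ℕ} (c : KK d → ℂ) (x : Ed d) (p : KK d × KK d × KK d) : ℂ :=
  ((kdot p.1 p.2.1 * kdot p.2.2 (p.1 - p.2.1 + p.2.2) : ℝ) : ℂ) * c p.1 * cj (c p.2.1) * c p.2.2 * ee (p.1 - p.2.1 + p.2.2) x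

lemma hasSum3 {α : Type*} {f g h : α → ℂ} {F G H : ℂ} (hf : HasSum f F) (hg : HasSum g G) (hh : HasSum h H)
    (sf : Summable fun k => ‖f k‖) (sg : Summable fun k => ‖g k‖) (sh : Summable fun k => ‖h k‖) :
    HasSum (fun p : α × α × α => f p.1 * (g p.2.1 * h p.2.2)) (F * (G * H)) := by
  have s1 : Summable fun p : α × α => ‖g p.1 * h p.2‖ := Summable.mul_norm sg sh
  have h1 : HasSum (fun p : α × α => g p.1 * h p.2) (G * H) := hg.mul hh s1.of_norm
  have s2 : Summable fun p : α × (α × α) => ‖f p.1 * (g p.2.1 * h p.2.2)‖ :=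
    Summable.mul_norm (f := f) (g := fun p : α × α => g p.1 * h p.2) sf s1
  exact HasSum.mul (g := fun p : α × α => g p.1 * h p.2) hf h1 s2.of_norm

lemma GG_hasSum (hd : d ≤ 3) {c : KK d → ℂ} (h : RD c) (hr : Rl c) (x : Ed d) :
    HasSum (GG c x) (-∑ i, ∑ j, ((FS (Dj i (Dj j c)) x) * (FS (Dj i c) x * FS (Dj j c) x) +
      (FS (Dj i c) x) * (FS (Dj i (Dj j c)) x * FS (Dj j c) x) + (FS (Dj i c) x) * (FS (Dj i c) x * FS (Dj j (Dj j c)) x))) := by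
  have hc : ∀ {z : KK d → ℂ}, RD z → Rl z → HasSum (fun k => cj (z k * ee k x)) (FS z x) := by
    intro z hz hzr
    have := (hz.hasSum hd x).map (starRingEnd ℂ) Complex.continuous_conj
    rw [hzr.conjFS hd hz x] at this
    exact this
  have hn : ∀ {z : KK d → ℂ}, RD z → Summable (fun k => ‖cj (z k * ee k x)‖) := by
    intro z hz
    simp_rw [RCLike.norm_conj]; exact hz.summ hd x
  have hI : ∀ i, RD (Dj i c) := fun i => h.D i
  have hIJ : ∀ i j, RD (Dj i (Dj j c)) := fun i j => (h.D j).D i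
  have rI : ∀ i, Rl (Dj i c) := fun i => hr.D i
  have rIJ : ∀ i j, Rl (Dj i (Dj j c)) := fun i j => (hr.D j).D i
  have h1 := fun i j => hasSum3 ((hIJ i j).hasSum hd x) (hc (hI i) (rI i)) ((hI j).hasSum hd x) ((hIJ i j).summ hd x) (hn (hI i)) ((hI j).summ hd x)
  have h2 := fun i j => hasSum3 ((hI i).hasSum hd x) (hc (hIJ i j) (rIJ i j)) ((hI j).hasSum hd x) ((hI i).summ hd x) (hn (hIJ i j)) ((hI j).summ hd x)
  have h3 := fun i j => hasSum3 ((hI i).hasSum hd x) (hc (hI i) (rI i)) ((hIJ j j).hasSum hd x) ((hI i).summ hd x) (hn (hI i)) ((hIJ j j).summ hd x)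
  have h4 := (hasSum_sum (s := Finset.univ) fun i _ => hasSum_sum (s := Finset.univ) fun j _ => ((h1 i j).add (h2 i j)).add (h3 i j)).neg
  refine h4.congr_fun ?_
  rintro ⟨a, b, m⟩
  unfold GG
  simp only
  rw [ee_add, ee_sub, Complex.ofReal_mul, kdot_ofReal, kdot_ofReal, Finset.sum_mul_sum]
  simp only [Finset.sum_mul]
  rw [← Finset.sum_neg_distrib]
  refine Finset.sum_congr rfl fun i _ => ?_
  rw [← Finset.sum_neg_distrib]
  refine Finset.sum_congr rfl fun j _ => ?_
  unfold Dj
  simp only [map_mul, Complex.conj_I, map_intCast, Pi.add_apply, Pi.sub_apply]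
  push_cast
  have hI2 := Complex.I_sq
  have hI4 : Complex.I ^ 4 = 1 := Complex.I_pow_four
  ring_nf
  simp only [hI2, hI4]
  ring

lemma RD.diffAt (hd : d ≤ 3) {c : KK d → ℂ} (h : RD c) (x : Ed d) : DifferentiableAt ℝ (rF c) x :=
  (h.rF_hasFDeriv hd x).differentiableAt

lemma slope_eq (hd : d ≤ 3) {c : KK d → ℂ} (h : RD c) (x : Ed d) :
    slopeDiv (rF c) x = (∑ i, ∑ j, (rF (Dj i (Dj j c)) x * (rF (Dj i c) x * rF (Dj j c) x) +
      (rF (Dj i c) x) * (rF (Dj i (Dj j c)) x * rF (Dj j c) x) + (rF (Dj i c) x) * (rF (Dj i c) x * rF (Dj j (Dj j c)) x))) -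
      lapl (rF c) x := by
  unfold slopeDiv gradSq lapl
  rw [Finset.sum_comm, ← Finset.sum_sub_distrib]
  refine Finset.sum_congr rfl fun j _ => ?_
  simp_rw [h.pd hd, (h.D _).pd hd]
  have hD := fun i => ((h.D i).diffAt hd x).hasFDerivAt
  have h1 : HasFDerivAt (fun y => ∑ i, rF (Dj i c) y ^ 2 - 1) (∑ i, (2 * rF (Dj i c) x) • fderiv ℝ (rF (Dj i c)) x) x := by
    refine HasFDerivAt.sub_const _ ?_
    refine HasFDerivAt.fun_sum fun i _ => ?_
    refine ((hD i).pow 2).congr_fderiv ?_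
    simp
  have h2 := h1.fun_mul (hD j)
  have h3 : ∀ i, fderiv ℝ (rF (Dj i c)) x (EuclideanSpace.single j 1) = rF (Dj j (Dj i c)) x := fun i =>
    congrFun ((h.D i).pd hd j) x
  have comm : ∀ i, Dj j (Dj i c) = Dj i (Dj j c) := fun i => by
    funext k; unfold Dj; ring
  unfold pd
  rw [h2.fderiv]
  simp only [_root_.add_apply, _root_.smul_apply, _root_.sum_apply, h3, smul_eq_mul, comm]
  rw [Finset.mul_sum, sub_mul, Finset.sum_mul]
  simp only [Finset.sum_add_distrib]
  have : ∑ i, rF (Dj j c) x * (2 * rF (Dj i c) x * rF (Dj i (Dj j c)) x) =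
    ∑ i, rF (Dj i (Dj j c)) x * (rF (Dj i c) x * rF (Dj j c) x) + ∑ i, (rF (Dj i c) x) * (rF (Dj i (Dj j c)) x * rF (Dj j c) x) := by
    rw [← Finset.sum_add_distrib]
    refine Finset.sum_congr rfl fun i _ => ?_
    ring
  rw [this]
  have : ∑ i, rF (Dj i c) x ^ 2 * rF (Dj j (Dj j c)) x = ∑ i, rF (Dj i c) x * (rF (Dj i c) x * rF (Dj j (Dj j c)) x) := by
    refine Finset.sum_congr rfl fun i _ => ?_
    ring
  rw [this]
  ring

lemma pde_rhs (hd : d ≤ 3) {c : KK d → ℂ} (h : RD c) (hr : Rl c) (ν : ℝ) (x : Ed d) :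
    ((∑' k, ((-(ν * kn k ^ 4) + kn k ^ 2 : ℝ) : ℂ) * c k * ee k x) - ∑' p, GG c x p).re =
      slopeDiv (rF c) x - ν * lapl (lapl (rF c)) x := by
  rw [slope_eq hd h, (GG_hasSum hd h hr x).tsum_eq, sub_neg_eq_add]
  have hreal : ∀ {z : KK d → ℂ}, RD z → Rl z → FS z x = (rF z x : ℂ) := fun hz hzr => (hzr.rF_eq hd hz x).symm
  simp_rw [hreal (h.D _) (hr.D _), hreal ((h.D _).D _) ((hr.D _).D _)]
  have h2 := h.lapl hd
  have h4 := (h.mulkn 2 (-1)).lapl hd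
  rw [h2, h4]
  have e : (∑' k, ((-(ν * kn k ^ 4) + kn k ^ 2 : ℝ) : ℂ) * c k * ee k x) =
     - FS (fun k => ((-1 * kn k ^ 2 : ℝ) : ℂ) * c k) x - ν * FS (fun k => ((-1 * kn k ^ 2 : ℝ) : ℂ) * (((-1 * kn k ^ 2 : ℝ) : ℂ) * c k)) x := by
    refine HasSum.tsum_eq ?_
    have := ((h.mulkn 2 (-1)).hasSum hd x).neg.sub ((((h.mulkn 2 (-1)).mulkn 2 (-1)).hasSum hd x).mul_left (ν : ℂ))
    refine this.congr_fun fun k => ?_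
    push_cast; ring
  rw [e]
  simp only [Complex.add_re, Complex.sub_re, Complex.neg_re, Complex.re_ofReal_mul]
  have : (∑ i, ∑ j, ((rF (Dj i (Dj j c)) x : ℂ) * ((rF (Dj i c) x : ℂ) * (rF (Dj j c) x : ℂ)) +
      (rF (Dj i c) x : ℂ) * ((rF (Dj i (Dj j c)) x : ℂ) * (rF (Dj j c) x : ℂ)) + (rF (Dj i c) x : ℂ) * ((rF (Dj i c) x : ℂ) * (rF (Dj j (Dj j c)) x : ℂ)))) =
    ((∑ i, ∑ j, (rF (Dj i (Dj j c)) x * (rF (Dj i c) x * rF (Dj j c) x) +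
      (rF (Dj i c) x) * (rF (Dj i (Dj j c)) x * rF (Dj j c) x) + (rF (Dj i c) x) * (rF (Dj i c) x * rF (Dj j (Dj j c)) x)) : ℝ) : ℂ) := by
    push_cast; rfl
  rw [this, Complex.ofReal_re]
  unfold rF
  ring
end fs2

section lim
variable {d : ℕ}

lemma ulim (U : Ultrafilter ℕ) {f : ℕ → ℂ} {B : ℝ} (h : ∀ᶠ N in (U : Filter ℕ), ‖f N‖ ≤ B) :
    ∃ z, Tendsto f U (nhds z) := by
  have hc := isCompact_closedBall (0 : ℂ) B
  obtain ⟨z, _, hz⟩ := hc.ultrafilter_le_nhds (U.map f) (by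
    rw [le_principal_iff]
    rw [Ultrafilter.coe_map, Filter.mem_map]
    filter_upwards [h] with N hN
    simpa using hN)
  exact ⟨z, hz⟩

lemma pow_dn {c : KK d → ℂ} (h0 : c 0 = 0) {B : ℝ} (h : ∀ k, rr k ^ 30 * ‖c k‖ ≤ B) {p : ℕ} (hp : p ≤ 16) (k : KK d) :
    rr k ^ p * ‖c k‖ ≤ B * (rr k ^ 14)⁻¹ := by
  refine rr_pow_le' h0 p (fun k => ?_) k
  by_cases hk : k = 0
  · subst hk
    have := h 0
    rw [h0] at this ⊢; simpa using this
  · refine le_trans ?_ (h k)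
    have := one_le_rr hk
    gcongr
    omega

lemma kn_le_sq (k : KK d) : kn k ≤ kn k ^ 2 := by
  by_cases hk : k = 0
  · subst hk; rw [kn_zero]; simp
  · have := one_le_kn hk
    nlinarith

lemma GG_norm (c : KK d → ℂ) (x : Ed d) (p : KK d × KK d × KK d) :
    ‖GG c x p‖ ≤ 3 * ((rr p.1 ^ 8 * ‖c p.1‖) * ((rr p.2.1 ^ 8 * ‖c p.2.1‖) * (rr p.2.2 ^ 8 * ‖c p.2.2‖))) := by
  obtain ⟨a, b, m⟩ := p
  simp only [GG]
  rw [norm_mul, norm_mul, norm_mul, norm_mul, ee_norm, Complex.norm_real, Complex.norm_conj, Real.norm_eq_abs, abs_mul]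
  have h8 : ∀ k : KK d, rr k ^ 8 = kn k ^ 2 := fun k => by rw [← rr_pow4]; ring
  rw [h8, h8, h8]
  have h1 := kdot_abs_le a b
  have h2 := kdot_abs_le m (a - b + m)
  have h3 : kn (a - b + m) ≤ kn a + kn b + kn m := (kn_add_le _ _).trans (by linarith [kn_sub_le a b])
  have ha := kn_nonneg a
  have hb := kn_nonneg b
  have hm := kn_nonneg m
  have qa := kn_le_sq a
  have qb := kn_le_sq b
  have qm := kn_le_sq m
  have h4 : |kdot a b| * |kdot m (a - b + m)| ≤ 3 * (kn a ^ 2 * kn b ^ 2 * kn m ^ 2) := by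
    calc |kdot a b| * |kdot m (a - b + m)| ≤ (kn a * kn b) * (kn m * (kn a + kn b + kn m)) := by
          gcongr
          exact h2.trans (by gcongr)
      _ = kn a ^ 2 * kn b * kn m + kn a * kn b ^ 2 * kn m + kn a * kn b * kn m ^ 2 := by ring
      _ ≤ kn a ^ 2 * kn b ^ 2 * kn m ^ 2 + kn a ^ 2 * kn b ^ 2 * kn m ^ 2 + kn a ^ 2 * kn b ^ 2 * kn m ^ 2 := by
          gcongr
      _ = _ := by ring
  calc _ ≤ 3 * (kn a ^ 2 * kn b ^ 2 * kn m ^ 2) * ‖c a‖ * ‖c b‖ * ‖c m‖ * 1 := by gcongr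
    _ = _ := by ring

lemma fin_id (S : Finset (KK d)) (ν : ℝ) (c : KK d → ℂ) (hs : ∀ k, k ∉ S → c k = 0) (x : Ed d) :
    ∑' k, (if k ∈ S then rhs S ν c k else 0) * ee k x
      = (∑' k, ((-(ν * kn k ^ 4) + kn k ^ 2 : ℝ) : ℂ) * c k * ee k x)
        - ∑' p : KK d × KK d × KK d, if p.1 - p.2.1 + p.2.2 ∈ S then GG c x p else 0 := by
  classical
  rw [tsum_eq_sum (s := S) (fun k hk => by simp [hk]), tsum_eq_sum (s := S) (fun k hk => by simp [hs k hk]),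
    tsum_eq_sum (s := S ×ˢ S ×ˢ S) (fun p hp => ?_)]
  · rw [Finset.sum_product]
    simp_rw [Finset.sum_product]
    have e1 : ∀ k ∈ S, (if k ∈ S then rhs S ν c k else 0) * ee k x
       = ((-(ν * kn k ^ 4) + kn k ^ 2 : ℝ) : ℂ) * c k * ee k x - NL S c k * ee k x := by
      intro k hk
      rw [if_pos hk, rhs, sub_mul]
    rw [Finset.sum_congr rfl e1, Finset.sum_sub_distrib]
    congr 1
    unfold NL
    simp_rw [Finset.sum_mul]
    rw [Finset.sum_comm]
    refine Finset.sum_congr rfl fun a _ => ?_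
    rw [Finset.sum_comm]
    refine Finset.sum_congr rfl fun b _ => ?_
    rw [Finset.sum_comm]
    refine Finset.sum_congr rfl fun m _ => ?_
    simp_rw [ite_mul, zero_mul]
    rw [Finset.sum_ite_eq]
    simp only [GG]
  · simp only [Finset.mem_product, not_and_or] at hp
    simp only [GG]
    rcases hp with h | h | h <;> simp [hs _ h]

set_option maxHeartbeats 800000 in
lemma lim_id (hd : d ≤ 3) (U : Ultrafilter ℕ) (S : ℕ → Finset (KK d))
    (hS : ∀ k : KK d, k ≠ 0 → ∀ᶠ N in (U : Filter ℕ), k ∈ S N) (h0 : ∀ N, (0 : KK d) ∉ S N) (ν : ℝ)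
    (c : ℕ → KK d → ℂ) (hs : ∀ N, ∀ k, k ∉ S N → c N k = 0) (C C' : KK d → ℂ)
    (hC : ∀ k, Tendsto (fun N => c N k) U (nhds (C k)))
    (hC' : ∀ k, Tendsto (fun N => if k ∈ S N then rhs (S N) ν (c N) k else 0) U (nhds (C' k)))
    (B : ℝ) (hB : ∀ᶠ N in (U : Filter ℕ), ∀ k, rr k ^ 30 * ‖c N k‖ ≤ B ∧
      rr k ^ 30 * ‖(if k ∈ S N then rhs (S N) ν (c N) k else 0 : ℂ)‖ ≤ B) (x : Ed d) :
    ∑' k, C' k * ee k x = (∑' k, ((-(ν * kn k ^ 4) + kn k ^ 2 : ℝ) : ℂ) * C k * ee k x) - ∑' p, GG C x p := by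
  classical
  have hu := summ_u hd
  have hB0 : 0 ≤ B := by
    obtain ⟨N, hN⟩ := hB.exists
    exact le_trans (by have := rr_nonneg (0 : KK d); positivity) (hN 0).1
  have t1 : Tendsto (fun N => ∑' k, (if k ∈ S N then rhs (S N) ν (c N) k else 0) * ee k x) U (nhds (∑' k, C' k * ee k x)) := by
    refine tendsto_tsum_of_dominated_convergence (hu.mul_left B) (fun k => (hC' k).mul_const _) ?_
    filter_upwards [hB] with N hN k
    rw [norm_mul, ee_norm, mul_one]
    have := pow_dn (c := fun k => if k ∈ S N then rhs (S N) ν (c N) k else 0) (by simp [h0 N]) (fun k => (hN k).2) (p := 0) (by norm_num) k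
    simpa using this
  have t2 : Tendsto (fun N => ∑' k, ((-(ν * kn k ^ 4) + kn k ^ 2 : ℝ) : ℂ) * c N k * ee k x) U
      (nhds (∑' k, ((-(ν * kn k ^ 4) + kn k ^ 2 : ℝ) : ℂ) * C k * ee k x)) := by
    refine tendsto_tsum_of_dominated_convergence (hu.mul_left ((|ν| + 1) * B)) (fun k => ((hC k).const_mul _).mul_const _) ?_
    filter_upwards [hB] with N hN k
    rw [norm_mul, ee_norm, mul_one, norm_mul, Complex.norm_real, Real.norm_eq_abs]
    have q1 := pow_dn (hs N 0 (h0 N)) (fun k => (hN k).1) (p := 16) (by norm_num) k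
    have q2 := pow_dn (hs N 0 (h0 N)) (fun k => (hN k).1) (p := 8) (by norm_num) k
    have h8 : rr k ^ 8 = kn k ^ 2 := by rw [← rr_pow4]; ring
    have h16 : rr k ^ 16 = kn k ^ 4 := by rw [← rr_pow4]; ring
    rw [h8] at q2
    rw [h16] at q1
    have e : |-(ν * kn k ^ 4) + kn k ^ 2| ≤ |ν| * kn k ^ 4 + kn k ^ 2 := by
      refine (abs_add_le _ _).trans ?_
      have := kn_nonneg k
      rw [abs_neg, abs_mul, abs_of_nonneg (show 0 ≤ kn k ^ 4 by positivity), abs_of_nonneg (show 0 ≤ kn k ^ 2 by positivity)]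
    calc _ ≤ (|ν| * kn k ^ 4 + kn k ^ 2) * ‖c N k‖ := by gcongr
      _ = |ν| * (kn k ^ 4 * ‖c N k‖) + kn k ^ 2 * ‖c N k‖ := by ring
      _ ≤ |ν| * (B * (rr k ^ 14)⁻¹) + B * (rr k ^ 14)⁻¹ := by gcongr
      _ = _ := by ring
  have t3 : Tendsto (fun N => ∑' p : KK d × KK d × KK d, if p.1 - p.2.1 + p.2.2 ∈ S N then GG (c N) x p else 0) U
      (nhds (∑' p, GG C x p)) := by
    have hu3 : Summable fun p : KK d × KK d × KK d => (rr p.1 ^ 14)⁻¹ * ((rr p.2.1 ^ 14)⁻¹ * (rr p.2.2 ^ 14)⁻¹) := by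
      have n0 : ∀ k : KK d, 0 ≤ (rr k ^ 14)⁻¹ := fun k => by have := rr_nonneg k; positivity
      exact hu.mul_of_nonneg (hu.mul_of_nonneg hu n0 n0) n0 (fun p => mul_nonneg (n0 _) (n0 _))
    refine tendsto_tsum_of_dominated_convergence (hu3.mul_left (3 * B ^ 3)) (fun p => ?_) ?_
    · have tg : Tendsto (fun N => GG (c N) x p) U (nhds (GG C x p)) := by
        unfold GG
        exact ((((hC p.1).const_mul _).mul ((Complex.continuous_conj.tendsto _).comp (hC p.2.1))).mul (hC p.2.2)).mul_const _
      by_cases hp : p.1 - p.2.1 + p.2.2 = 0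
      · have z : ∀ c : KK d → ℂ, GG c x p = 0 := by
          intro c
          unfold GG
          rw [hp]
          have : kdot p.2.2 (0 : KK d) = 0 := by simp [kdot]
          rw [this]; simp
        rw [z]
        simp [z]
      · refine tg.congr' ?_
        filter_upwards [hS _ hp] with N hN
        rw [if_pos hN]
    · filter_upwards [hB] with N hN p
      have q : ‖(if p.1 - p.2.1 + p.2.2 ∈ S N then GG (c N) x p else 0 : ℂ)‖ ≤ ‖GG (c N) x p‖ := by
        split_ifs <;> simp
      refine (q.trans (GG_norm _ _ _)).trans ?_
      have hq := pow_dn (hs N 0 (h0 N)) (fun k => (hN k).1) (p := 8) (by norm_num)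
      have hn := fun k : KK d => rr_nonneg k
      have nn : ∀ k : KK d, 0 ≤ rr k ^ 8 * ‖c N k‖ := fun k => mul_nonneg (pow_nonneg (hn k) 8) (norm_nonneg _)
      calc _ ≤ 3 * ((B * (rr p.1 ^ 14)⁻¹) * ((B * (rr p.2.1 ^ 14)⁻¹) * (B * (rr p.2.2 ^ 14)⁻¹))) := by
            exact mul_le_mul_of_nonneg_left (mul_le_mul (hq _) (mul_le_mul (hq _) (hq _) (nn _) ((nn _).trans (hq _)))
              (mul_nonneg (nn _) (nn _)) ((nn _).trans (hq _))) (by norm_num)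
        _ = _ := by ring
  refine tendsto_nhds_unique t1 ((t2.sub t3).congr fun N => ?_)
  rw [fin_id (S N) ν (c N) (hs N) x]

lemma FS_deriv (hd : d ≤ 3) {C C' : ℝ → KK d → ℂ} {t t0 T B : ℝ} (ht : t ∈ Ioo t0 T)
    (hz : ∀ s ∈ Ioo t0 T, C s 0 = 0 ∧ C' s 0 = 0)
    (hder : ∀ s ∈ Ioo t0 T, ∀ k, HasDerivAt (fun s => C s k) (C' s k) s)
    (hB : ∀ s ∈ Ioo t0 T, ∀ k, rr k ^ 30 * ‖C s k‖ ≤ B ∧ rr k ^ 30 * ‖C' s k‖ ≤ B) (x : Ed d) :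
    HasDerivAt (fun s => FS (C s) x) (∑' k, C' t k * ee k x) t := by
  unfold FS
  refine hasDerivAt_tsum_of_isPreconnected (g := fun k s => C s k * ee k x) (g' := fun k s => C' s k * ee k x)
    ((summ_u hd).mul_left B) isOpen_Ioo isPreconnected_Ioo (fun k s hs => (hder s hs k).mul_const _) (fun k s hs => ?_) ht ?_ ht
  · rw [norm_mul, ee_norm, mul_one]
    simpa using pow_dn (hz s hs).2 (fun k => (hB s hs k).2) (p := 0) (by norm_num) k
  · refine Summable.of_norm_bounded ((summ_u hd).mul_left B) fun k => ?_
    rw [norm_mul, ee_norm, mul_one]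
    simpa using pow_dn (hz t ht).1 (fun k => (hB t ht k).1) (p := 0) (by norm_num) k

lemma taylor_deriv {f : ℝ → ℂ} {t K : ℝ} {f' : ℂ} (h : ∀ᶠ s in nhds t, ‖f s - f t - (s - t) • f'‖ ≤ K * |s - t| ^ 2) :
    HasDerivAt f f' t := by
  rw [hasDerivAt_iff_isLittleO]
  refine Asymptotics.IsBigO.trans_isLittleO (g := fun s => ‖s - t‖ ^ 2) ?_ (Asymptotics.isLittleO_pow_sub_sub t one_lt_two)
  refine Asymptotics.IsBigO.of_bound K ?_
  filter_upwards [h] with s hs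
  simpa using hs

end lim

section lim2
variable {d : ℕ}

lemma Sol.mono {S : Finset (KK d)} {ν T T' : ℝ} {c : ℝ → KK d → ℂ} (h : Sol S ν T c) (hT : T' ≤ T) : Sol S ν T' c :=
  ⟨h.supp, fun t ht k hk => h.der t ⟨ht.1, ht.2.trans hT⟩ k hk⟩

theorem limit_thm (hd : d ≤ 3) {ν : ℝ} (hν : 0 < ν) (U : Ultrafilter ℕ) (hU : (U : Filter ℕ) ≤ atTop) (S : ℕ → Finset (KK d))
    (h0 : ∀ N, (0 : KK d) ∉ S N) (hneg : ∀ N, ∀ k ∈ S N, -k ∈ S N)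
    (hS : ∀ k : KK d, k ≠ 0 → ∀ᶠ N in atTop, k ∈ S N)
    (c : ℕ → ℝ → KK d → ℂ) (hc : ∀ N : ℕ, Sol (S N) ν (N + 1) (c N))
    (hr : ∀ N k, c N 0 (-k) = cj (c N 0 k)) (R : ℝ) (hR : ∀ N, n2 (S N) (c N 0) ≤ R) :
    ∃ C : ℝ → KK d → ℂ, ∀ t, 0 < t → RD (C t) ∧ Rl (C t) ∧ (∀ k, Tendsto (fun N => c N t k) U (nhds (C t k))) ∧
      ∀ x, HasDerivAt (fun s => rF (C s) x) (slopeDiv (rF (C t)) x - ν * lapl (lapl (rF (C t))) x) t := by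
  classical
  have hT : ∀ T : ℝ, ∀ᶠ N : ℕ in (U : Filter ℕ), T ≤ (N : ℝ) + 1 := fun T => by
    have : ∀ᶠ N : ℕ in atTop, T ≤ (N : ℝ) := tendsto_natCast_atTop_atTop.eventually_ge_atTop T
    filter_upwards [hU this] with N hN
    linarith
  have bnd : ∀ (n : ℕ) (t0 T : ℝ), 0 < t0 → ∃ B, 0 ≤ B ∧ ∀ N : ℕ, T ≤ (N : ℝ) + 1 → ∀ t ∈ Icc t0 T, ∀ k,
      rr k ^ n * ‖c N t k‖ ≤ B ∧ rr k ^ n * ‖(if k ∈ S N then rhs (S N) ν (c N t) k else 0 : ℂ)‖ ≤ B := by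
    intro n t0 T ht0
    obtain ⟨B, hB0, hB⟩ := boot' hd hν T R n t0 ht0
    refine ⟨B, hB0, fun N hN t ht k => ?_⟩
    by_cases hk : k ∈ S N
    · rw [if_pos hk]
      exact hB (S N) (c N) (h0 N) ((hc N).mono hN) (hR N) t ht k hk
    · rw [if_neg hk, (hc N).supp t k hk]
      simpa using hB0
  have ex : ∀ (t : ℝ) (k : KK d), ∃ z : ℂ × ℂ, 0 < t → Tendsto (fun N => c N t k) U (nhds z.1) ∧
      Tendsto (fun N => if k ∈ S N then rhs (S N) ν (c N t) k else 0) U (nhds z.2) := by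
    intro t k
    by_cases ht : 0 < t
    · obtain ⟨B, hB0, hB⟩ := bnd 0 t t ht
      obtain ⟨z1, hz1⟩ := ulim U (f := fun N => c N t k) (B := B) (by
        filter_upwards [hT t] with N hN
        simpa using (hB N hN t ⟨le_rfl, le_rfl⟩ k).1)
      obtain ⟨z2, hz2⟩ := ulim U (f := fun N => if k ∈ S N then rhs (S N) ν (c N t) k else 0) (B := B) (by
        filter_upwards [hT t] with N hN
        simpa using (hB N hN t ⟨le_rfl, le_rfl⟩ k).2)
      exact ⟨(z1, z2), fun _ => ⟨hz1, hz2⟩⟩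
    · exact ⟨0, fun h => absurd h ht⟩
  choose Z hZ using ex
  set C : ℝ → KK d → ℂ := fun t k => (Z t k).1 with hCdef
  set C' : ℝ → KK d → ℂ := fun t k => (Z t k).2 with hC'def
  have hC : ∀ t, 0 < t → ∀ k, Tendsto (fun N => c N t k) U (nhds (C t k)) := fun t ht k => (hZ t k ht).1
  have hC' : ∀ t, 0 < t → ∀ k, Tendsto (fun N => if k ∈ S N then rhs (S N) ν (c N t) k else 0) U (nhds (C' t k)) :=
    fun t ht k => (hZ t k ht).2
  have bndC : ∀ (n : ℕ) (t0 T : ℝ), 0 < t0 → ∃ B, 0 ≤ B ∧ ∀ t ∈ Icc t0 T, ∀ k,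
      rr k ^ n * ‖C t k‖ ≤ B ∧ rr k ^ n * ‖C' t k‖ ≤ B := by
    intro n t0 T ht0
    obtain ⟨B, hB0, hB⟩ := bnd n t0 T ht0
    refine ⟨B, hB0, fun t ht k => ⟨?_, ?_⟩⟩
    · refine le_of_tendsto ((hC t (ht0.trans_le ht.1) k).norm.const_mul _) ?_
      filter_upwards [hT T] with N hN
      exact (hB N hN t ht k).1
    · refine le_of_tendsto ((hC' t (ht0.trans_le ht.1) k).norm.const_mul _) ?_
      filter_upwards [hT T] with N hN
      exact (hB N hN t ht k).2
  have z1 : ∀ t, 0 < t → C t 0 = 0 := fun t ht => by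
    refine tendsto_nhds_unique (hC t ht 0) ?_
    refine tendsto_const_nhds.congr fun N => ?_
    rw [(hc N).supp t 0 (h0 N)]
  have z2 : ∀ t, 0 < t → C' t 0 = 0 := fun t ht => by
    refine tendsto_nhds_unique (hC' t ht 0) ?_
    refine tendsto_const_nhds.congr fun N => ?_
    rw [if_neg (h0 N)]
  have hder : ∀ t, 0 < t → ∀ k, HasDerivAt (fun s => C s k) (C' t k) t := by
    intro t ht k
    obtain ⟨B, hB0, hB⟩ := bnd 18 (t / 2) (2 * t) (by linarith)
    refine taylor_deriv (K := (|ν| * kn k ^ 4 + kn k ^ 2) * B + 3 * B ^ 3 * kn k * (2 * 48 ^ 3) ^ 3) ?_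
    have hI : ∀ᶠ s in nhds t, s ∈ Icc (t / 2) (2 * t) := Icc_mem_nhds (by linarith) (by linarith)
    filter_upwards [hI] with s hs
    have hs0 : 0 < s := by linarith [hs.1]
    refine le_of_tendsto ((((hC s hs0 k).sub (hC t ht k)).sub ((hC' t ht k).const_smul (s - t))).norm) ?_
    filter_upwards [hT (2 * t)] with N hN
    by_cases hk : k ∈ S N
    · rw [if_pos hk]
      refine ode_taylor hd (h0 N) (by linarith : 0 < t / 2) hB0 ((hc N).mono hN) (fun τ hτ k hk => ?_) hk hs ⟨by linarith, by linarith⟩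
      have := hB N hN τ hτ k
      rwa [if_pos hk] at this
    · rw [if_neg hk, (hc N).supp s k hk, (hc N).supp t k hk]
      have := kn_nonneg k
      simp only [sub_self, smul_zero, norm_zero]
      positivity
  refine ⟨C, fun t ht => ?_⟩
  have hRD : RD (C t) := ⟨z1 t ht, fun n => by
    obtain ⟨B, _, hB⟩ := bndC n t t ht
    exact ⟨B, fun k => (hB t ⟨le_rfl, le_rfl⟩ k).1⟩⟩
  have hRl : Rl (C t) := fun k => by
    refine tendsto_nhds_unique (hC t ht (-k)) ?_
    refine ((Complex.continuous_conj.tendsto _).comp (hC t ht k)).congr' ?_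
    filter_upwards [hT t] with N hN
    exact (sol_real hν (hneg N) (hc N) (hr N) ⟨ht.le, hN⟩ k).symm
  refine ⟨hRD, hRl, hC t ht, fun x => ?_⟩
  obtain ⟨B, hB0, hB⟩ := bndC 30 (t / 2) (2 * t) (by linarith)
  have D := FS_deriv hd (C := C) (C' := C') (t := t) (t0 := t / 2) (T := 2 * t) (B := B) ⟨by linarith, by linarith⟩
    (fun s hs => ⟨z1 s (by linarith [hs.1]), z2 s (by linarith [hs.1])⟩)
    (fun s hs k => hder s (by linarith [hs.1]) k) (fun s hs k => hB s ⟨hs.1.le, hs.2.le⟩ k) x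
  obtain ⟨B', hB0', hB'⟩ := bnd 30 t t ht
  have I := lim_id hd U S (fun k hk => hU (hS k hk)) h0 ν (fun N => c N t) (fun N k hk => (hc N).supp t k hk) (C t) (C' t)
    (hC t ht) (hC' t ht) B' (by
      filter_upwards [hT t] with N hN k
      exact hB' N hN t ⟨le_rfl, le_rfl⟩ k) x
  rw [I] at D
  rw [← pde_rhs hd hRD hRl ν x]
  exact Complex.reCLM.hasFDerivAt.comp_hasDerivAt t D

end lim2

section fin
variable {d : ℕ}

lemma fcoefR_eq (f : Ed d → ℝ) (k : KK d) : fcoefR f k = ∫ x in Qd d, (f x : ℂ) * ee (-k) x := by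
  unfold fcoefR
  congr 1
  ext x
  congr 1
  unfold ee
  congr 1
  simp

lemma int_mul_ee {f : Ed d → ℂ} (hf : IntegrableOn f (Qd d)) (k : KK d) : IntegrableOn (fun x => f x * ee k x) (Qd d) :=
  Integrable.mul_bdd (c := 1) hf (ee_continuous k).aestronglyMeasurable (Eventually.of_forall fun x => (ee_norm k x).le)

lemma fcoefR_not {f : Ed d → ℝ} (hf : ¬ IntegrableOn f (Qd d)) (k : KK d) : fcoefR f k = 0 := by
  rw [fcoefR_eq]
  refine integral_undef fun h => hf ?_
  have := int_mul_ee (f := fun x => (f x : ℂ) * ee (-k) x) h k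
  have e : (fun x => (f x : ℂ) * ee (-k) x * ee k x) = fun x => ((f x : ℝ) : ℂ) := by
    ext x
    rw [mul_assoc, ← ee_add]
    simp [ee_zero]
  rw [e] at this
  exact this.re

lemma fcoefR_sub {f g : Ed d → ℝ} (hf : IntegrableOn f (Qd d)) (hg : IntegrableOn g (Qd d)) (k : KK d) :
    fcoefR (fun x => f x - g x) k = fcoefR f k - fcoefR g k := by
  have h1 : IntegrableOn (fun x => ((f x : ℝ) : ℂ) * ee (-k) x) (Qd d) := int_mul_ee (f := fun x => ((f x : ℝ) : ℂ)) hf.ofReal _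
  have h2 : IntegrableOn (fun x => ((g x : ℝ) : ℂ) * ee (-k) x) (Qd d) := int_mul_ee (f := fun x => ((g x : ℝ) : ℂ)) hg.ofReal _
  rw [fcoefR_eq, fcoefR_eq, fcoefR_eq, ← integral_sub h1 h2]
  congr 1
  ext x
  push_cast; ring

lemma fcoefR_zero (f : Ed d → ℝ) : fcoefR f 0 = ((∫ x in Qd d, f x : ℝ) : ℂ) := by
  rw [fcoefR_eq, ← integral_complex_ofReal]
  simp [ee_zero]

lemma fcoefR_neg (f : Ed d → ℝ) (k : KK d) : fcoefR f (-k) = cj (fcoefR f k) := by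
  rw [fcoefR_eq, fcoefR_eq, ← integral_conj]
  congr 1
  ext x
  rw [map_mul, Complex.conj_ofReal, ← ee_neg]

def SN (d N : ℕ) : Finset (KK d) := (Fintype.piFinset fun _ => Finset.Icc (-(N:ℤ)) N).erase 0

lemma mem_SN {N : ℕ} {k : KK d} : k ∈ SN d N ↔ k ≠ 0 ∧ ∀ i, |k i| ≤ N := by
  simp [SN, Fintype.mem_piFinset, abs_le]

lemma zero_sol : slopeDiv (fun _ : Ed d => (0:ℝ)) = 0 ∧ lapl (fun _ : Ed d => (0:ℝ)) = fun _ => 0 := by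
  have h : ∀ j, pd (fun _ : Ed d => (0:ℝ)) j = fun _ => 0 := by
    intro j; ext x; simp [pd]
  constructor
  · ext x
    simp only [slopeDiv, h, mul_zero]
    simp
  · ext x
    simp only [lapl, h]
    simp

lemma hn_le {f : Ed d → ℝ} {ε : ℝ} (h : ∀ F : Finset (KK d), ∑ k ∈ F, sobWeight k * ‖fcoefR f k‖ ^ 2 ≤ ε) :
    hnormR f ≤ Real.sqrt ε := by
  unfold hnormR
  refine Real.sqrt_le_sqrt (Real.tsum_le_of_sum_le (fun k => ?_) h)
  unfold sobWeight
  positivity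

theorem case1 (hd1 : 1 ≤ d) (hd : d ≤ 3) (ν : ℝ) (hν : 0 < ν) (h₀ : Ed d → ℝ)
    (hmean : (∫ x in Qd d, h₀ x) = 0)
    (hsob : Summable fun k : Fin d → ℤ => sobWeight k * ‖fcoefR h₀ k‖ ^ 2) (hi : IntegrableOn h₀ (Qd d)) :
    ∃ h : ℝ → Ed d → ℝ,
      (∀ t : ℝ, 0 < t → PeriodicSpace (h t)) ∧
      (∀ t : ℝ, 0 < t → ContDiff ℝ (⊤ : ℕ∞) (h t)) ∧
      (∀ (t : ℝ) (x : Ed d), 0 < t →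
        HasDerivAt (fun s => h s x)
          (slopeDiv (h t) x - ν * lapl (lapl (h t)) x) t) ∧
      Tendsto (fun t : ℝ => hnormR fun x => h t x - h₀ x)
        (nhdsWithin 0 (Ioi 0)) (nhds 0) ∧
      (∀ t : ℝ, 0 < t → (∫ x in Qd d, h t x) = 0) := by
  classical
  set P : ℝ := (2 * π) ^ d with hP
  have hP0 : 0 < P := by positivity
  set a : KK d → ℂ := fun k => ((P⁻¹ : ℝ) : ℂ) * fcoefR h₀ k with ha
  have haP : ∀ k, fcoefR h₀ k = (P : ℂ) * a k := fun k => by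
    have : (P : ℂ) ≠ 0 := by exact_mod_cast hP0.ne'
    simp only [ha]; push_cast; field_simp
  have a0 : a 0 = 0 := by simp only [ha]; rw [fcoefR_zero, hmean]; simp
  have aneg : ∀ k, a (-k) = cj (a k) := fun k => by
    simp only [ha]; rw [fcoefR_neg, map_mul, Complex.conj_ofReal]
  have wk : ∀ k : KK d, sobWeight k = 1 + rr k ^ (4 * d) := fun k => by
    rw [sobWeight_eq, pow_mul, rr_pow4]
  have s1 : Summable fun k : KK d => (1 + rr k ^ (4 * d)) * ‖a k‖ ^ 2 := by
    refine (hsob.mul_left (P⁻¹ ^ 2)).congr fun k => ?_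
    simp only [ha]
    rw [wk, norm_mul, Complex.norm_real, Real.norm_eq_abs, abs_of_pos (inv_pos.mpr hP0)]
    ring
  have s2 : Summable fun k : KK d => rr k ^ (4 * d) * ‖a k‖ ^ 2 :=
    Summable.of_nonneg_of_le (fun k => by have := rr_nonneg k; positivity) (fun k => by
      have := rr_nonneg k
      gcongr
      linarith) s1
  have s3 : Summable fun k : KK d => ‖a k‖ ^ 2 :=
    Summable.of_nonneg_of_le (fun k => by positivity) (fun k => by
      have : 0 ≤ rr k ^ (4 * d) := pow_nonneg (rr_nonneg k) _
      nlinarith [sq_nonneg ‖a k‖]) s1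
  have S0 : ∀ N, (0 : KK d) ∉ SN d N := fun N h => (mem_SN.mp h).1 rfl
  have Sneg : ∀ N, ∀ k ∈ SN d N, -k ∈ SN d N := fun N k h => by
    rw [mem_SN] at h ⊢
    simpa using h
  have SS : ∀ k : KK d, k ≠ 0 → ∀ᶠ N in atTop, k ∈ SN d N := fun k hk => by
    have : ∀ i, ∀ᶠ N : ℕ in atTop, |k i| ≤ (N : ℤ) := fun i =>
      tendsto_natCast_atTop_atTop.eventually_ge_atTop |k i|
    filter_upwards [eventually_all.mpr this] with N hN
    exact mem_SN.mpr ⟨hk, hN⟩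
  have ex : ∀ N : ℕ, ∃ c, Sol (SN d N) ν (N + 1) c ∧ c 0 = fun k => if k ∈ SN d N then a k else 0 := fun N =>
    exists_sol (SN d N) hν (N + 1) (by positivity) _ (fun k hk => by rw [if_neg hk])
  choose c hc hc0 using ex
  obtain ⟨C, hC⟩ := limit_thm hd hν (hyperfilter ℕ) Nat.hyperfilter_le_atTop (SN d) S0 Sneg SS c hc
    (fun N k => by
      rw [hc0]
      by_cases hk : k ∈ SN d N
      · simp only [if_pos hk, if_pos (Sneg N k hk), aneg]
      · have : -k ∉ SN d N := fun h => hk (by simpa using Sneg N _ h)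
        simp only [if_neg hk, if_neg this, map_zero]) (∑' k, ‖a k‖ ^ 2)
    (fun N => by
      unfold n2
      rw [hc0]
      refine le_trans (le_of_eq ?_) (s3.sum_le_tsum (SN d N) fun k _ => by positivity)
      exact Finset.sum_congr rfl fun k hk => by simp only [if_pos hk])
  refine ⟨fun t => rF (C t), fun t ht => rF_per _, fun t ht => (hC t ht).1.contDiff hd, fun t x ht => (hC t ht).2.2.2 x, ?_, ?_⟩
  · have key : ∀ ε : ℝ, 0 < ε → ∃ δ, 0 < δ ∧ ∀ t, 0 < t → t ≤ δ → hnormR (fun x => rF (C t) x - h₀ x) ≤ Real.sqrt (P ^ 2 * ε) := by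
      intro ε hε
      obtain ⟨δ, hδ, hδ1, H⟩ := unif0 hd1 hd hν s2 hε
      refine ⟨δ, hδ, fun t ht htδ => hn_le fun F => ?_⟩
      have hCt := hC t ht
      have e1 : ∀ k, sobWeight k * ‖fcoefR (fun x => rF (C t) x - h₀ x) k‖ ^ 2
          = P ^ 2 * ((1 + rr k ^ (4 * d)) * ‖C t k - a k‖ ^ 2) := by
        intro k
        rw [fcoefR_sub (cont_intR (hCt.1.contDiff hd).continuous) hi, hCt.1.fcoef hd hCt.2.1, haP, wk, ← hP, ← mul_sub,
          norm_mul, Complex.norm_real, Real.norm_eq_abs, abs_of_pos hP0]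
        ring
      simp_rw [e1]
      rw [← Finset.mul_sum]
      refine mul_le_mul_of_nonneg_left ?_ (by positivity)
      have e2 : ∑ k ∈ F, (1 + rr k ^ (4 * d)) * ‖C t k - a k‖ ^ 2 = ∑ k ∈ F.erase 0, (1 + rr k ^ (4 * d)) * ‖C t k - a k‖ ^ 2 := by
        symm
        apply Finset.sum_erase
        rw [hCt.1.1, a0]; simp
      rw [e2]
      have tl : Tendsto (fun N => ∑ k ∈ F.erase 0, (1 + rr k ^ (4 * d)) * ‖c N t k - a k‖ ^ 2) (hyperfilter ℕ : Ultrafilter ℕ)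
          (nhds (∑ k ∈ F.erase 0, (1 + rr k ^ (4 * d)) * ‖C t k - a k‖ ^ 2)) :=
        tendsto_finsetSum _ fun k _ => ((((hCt.2.2.1 k).sub_const _).norm).pow 2).const_mul _
      refine le_of_tendsto tl ?_
      have ev : ∀ᶠ N in atTop, ∀ k ∈ F.erase 0, k ∈ SN d N :=
        (Finset.eventually_all _).mpr fun k hk => SS k (Finset.ne_of_mem_erase hk)
      filter_upwards [Nat.hyperfilter_le_atTop ev] with N hN
      refine le_trans (Finset.sum_le_sum_of_subset_of_nonneg hN fun k _ _ => ?_)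
        (H (SN d N) (c N) (S0 N) ((hc N).mono (by simp)) (fun k hk => by rw [hc0]; simp only [if_pos hk]) t ⟨ht.le, htδ⟩)
      have := rr_nonneg k
      positivity
    rw [Metric.tendsto_nhdsWithin_nhds]
    intro η hη
    obtain ⟨δ, hδ, H⟩ := key (η ^ 2 / (2 * P ^ 2)) (by positivity)
    refine ⟨δ, hδ, fun {t} ht htd => ?_⟩
    rw [Real.dist_eq, sub_zero] at htd ⊢
    have hn : 0 ≤ hnormR (fun x => rF (C t) x - h₀ x) := Real.sqrt_nonneg _
    rw [abs_of_nonneg hn]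
    refine (H t ht (by rw [abs_of_pos ht] at htd; exact htd.le)).trans_lt ?_
    rw [Real.sqrt_lt' hη]
    have : P ^ 2 * (η ^ 2 / (2 * P ^ 2)) = η ^ 2 / 2 := by field_simp
    rw [this]
    have : 0 < η ^ 2 := by positivity
    linarith
  · intro t ht
    have h1 := (hC t ht).1.fcoef hd (hC t ht).2.1 0
    rw [fcoefR_zero, (hC t ht).1.1, mul_zero] at h1
    exact_mod_cast h1

end fin

/-- Global wellposedness for `d ≤ 3`, Corollary 1.3: for mean-zero
initial data `h₀ ∈ H^{d/2}(𝕋^d)` with `d ∈ {1,2,3}`, there is a global-in-time solution of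
`∂_t h = ∇·((|∇h|²−1)∇h) − νΔ²h` which is `C^∞` for every `t > 0`, attains the data in
`H^{d/2}` as `t → 0⁺`, and has mean zero for every `t > 0`. -/
theorem stmt3 (d : ℕ) (hd : d = 1 ∨ d = 2 ∨ d = 3) (ν : ℝ) (hν : 0 < ν)
    (h₀ : Ed d → ℝ) (hper : PeriodicSpace h₀)
    (hmean : (∫ x in Qd d, h₀ x) = 0)
    (hsob : Summable fun k : Fin d → ℤ => sobWeight k * ‖fcoefR h₀ k‖ ^ 2) :
    ∃ h : ℝ → Ed d → ℝ,
      (∀ t : ℝ, 0 < t → PeriodicSpace (h t)) ∧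
      (∀ t : ℝ, 0 < t → ContDiff ℝ (⊤ : ℕ∞) (h t)) ∧
      (∀ (t : ℝ) (x : Ed d), 0 < t →
        HasDerivAt (fun s => h s x)
          (slopeDiv (h t) x - ν * lapl (lapl (h t)) x) t) ∧
      Tendsto (fun t : ℝ => hnormR fun x => h t x - h₀ x)
        (nhdsWithin 0 (Ioi 0)) (nhds 0) ∧
      (∀ t : ℝ, 0 < t → (∫ x in Qd d, h t x) = 0) := by
  by_cases hi : IntegrableOn h₀ (Qd d)
  · exact case1 (by omega) (by omega) ν hν h₀ hmean hsob hi
  · refine ⟨fun _ _ => 0, fun t ht j x => rfl, fun t ht => contDiff_const, fun t x ht => ?_, ?_, fun t ht => by simp⟩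
    · rw [zero_sol.1, zero_sol.2, zero_sol.2]
      simpa using hasDerivAt_const t (0:ℝ)
    · have hn : ¬ IntegrableOn (fun x => 0 - h₀ x) (Qd d) := fun h => hi (by simpa using h.neg)
      have : hnormR (fun x => 0 - h₀ x) = 0 := by
        unfold hnormR
        simp_rw [fcoefR_not hn]
        simp
      simp only [this]
      exact tendsto_const_nhds
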